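/- Let ω = (ω₁, ω₂, …) be a nondecreasing sequence of positive reals tending to +∞ with ω_k ≥ (log k)^α for some α > 0 and all k ≥ k₀, and let (n_k) be a sequence of distinct positive integers satisfying Condition A_ω. Then for any f satisfying the stated conditions, limsup_{N→∞} ( Σ_{k=1}^N f(n_k x) ) / √(2N log log N) = ‖f‖ for Lebesgue-almost every x ∈ (0,1). -/

import Mathlib

/-!
The sums `∑ f (n k * x)` are compared with sums of independent random variables, scale by scale.

For each scale `Q`, serving partial sums of length `2 ^ O(Q)`, `f` is replaced by a Fourier partial
sum `T` of degree `2 ^ (40 * Q)`, and the `2 ^ Q` smallest elements of the sequence are discarded.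
Bounded variation gives Fourier coefficients `O(1 / |a|)`, hence `|T| = O(Q)` and an `L²` error so
small that, by Borel–Cantelli, the replacement is almost surely harmless. Condition `A_ω` with
`N = 2 ^ Q` says that the remaining `n k` have only trivial linear relations of length `ω N`, with
coefficients up to `N ^ ω N`; expanding a power of `∑ c k * T (n k * x)` into characters, all its
moments of order `m ≤ ω N` are exactly those of `∑ c k * T (u k)` with `u k` independent and
uniform. Since `ω N ≥ (Q log 2) ^ α`, this covers every order `m ≤ D log Q`, that is, every multiple
of `log log` of the length of the sum.

*Upper bound.* For independent summands the moments of order `2p = O(log Q)` obey the sub-Gaussian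
bound with a constant arbitrarily close to `‖f‖²`, so Markov's inequality gives Gaussian tails at
the level of the iterated logarithm. With Borel–Cantelli over `Q`, this controls the partial sums at
finitely many points per scale with the sharp constant, and dyadic chaining fills the gaps.

*Lower bound.* Agreement of `O(log Q)` moments makes the joint characteristic functions of two
normalized blocks Gaussian up to `Q ^ (-3)`, for frequencies up to a multiple of `√(log Q)`. The
test function `cos (θ (y - t)) ^ (2 K)`, with `K ≈ β log Q` and `θ ≈ 1 / √(log Q)`, has its spectrum
in that range and is concentrated near `t = √2 s √(log Q)`; for `s < ‖f‖` its Gaussian mean is at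
least a constant times `Q ^ (-κ)` with `κ < 1`. The second moment method over `J` geometric blocks,
`Q = b J`, then yields a block of the required size outside a set of measure `O(Q ^ (κ - 1))`. Along
`J = 2 ^ s` these measures are summable, and the upper bound shows that the sum before such a block
is negligible.
-/

open MeasureTheory Filter Real Topology

noncomputable section

/-- `n k` is among the `N` smallest elements of the sequence `n`. -/
def AmongSmallest (n : ℕ → ℕ) (N : ℕ) (k : ℕ) : Prop :=
  {j : ℕ | n j ≤ n k}.ncard ≤ N

/-- Condition `A_ω` with explicit threshold `N₀`. -/
def CondAWith (ω : ℕ → ℝ) (n : ℕ → ℕ) (N₀ : ℕ) : Prop :=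
  ∀ N : ℕ, N₀ ≤ N →
    ∀ (r : ℕ) (k : Fin r → ℕ) (a : Fin r → ℤ),
      2 ≤ r → (r : ℝ) ≤ ω N →
      Function.Injective k →
      (∀ i, a i ≠ 0) →
      (∀ i, (|a i| : ℝ) ≤ (N : ℝ) ^ ω N) →
      (∑ i, a i * (n (k i) : ℤ)) = 0 →
      ∀ i, AmongSmallest n N (k i)

/-- Condition `A_ω`. -/
def CondA (ω : ℕ → ℝ) (n : ℕ → ℕ) : Prop := ∃ N₀, CondAWith ω n N₀

namespace LIL

open ProbabilityTheory
open scoped NNReal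

/-! ### Fourier partial sums -/

/-- The uniform distribution on `(0, 1]`, the probability measure under which the dilates
`x ↦ f (n k * x)` are regarded as random variables. -/
def uniform01 : Measure ℝ := volume.restrict (Set.Ioc 0 1)

instance : IsProbabilityMeasure uniform01 := ⟨by simp [uniform01]⟩

lemma integral_uniform01 {E : Type*} [NormedAddCommGroup E] [NormedSpace ℝ E] (g : ℝ → E) :
    ∫ x, g x ∂uniform01 = ∫ x in (0:ℝ)..1, g x := by
  rw [intervalIntegral.integral_of_le zero_le_one, uniform01]

lemma norm_fourier_apply {T : ℝ} (m : ℤ) (x : AddCircle T) : ‖fourier m x‖ = 1 :=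
  Circle.norm_coe _

lemma fourier_sum {T : ℝ} {ι : Type*} (s : Finset ι) (a : ι → ℤ) (x : AddCircle T) :
    fourier (∑ i ∈ s, a i) x = ∏ i ∈ s, fourier (a i) x := by
  induction s using Finset.cons_induction with
  | empty => simp
  | cons i s hi ih => rw [Finset.sum_cons, Finset.prod_cons, fourier_add, ih]

lemma fourier_coe_natCast_mul (a : ℤ) (m : ℕ) (x : ℝ) :
    fourier a ((m * x : ℝ) : UnitAddCircle) = fourier (a * m) (x : UnitAddCircle) := by
  simp only [fourier_coe_apply]
  push_cast
  ring_nf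

lemma continuous_fourier_coe (m : ℤ) : Continuous fun x : ℝ => fourier m (x : UnitAddCircle) :=
  (fourier m).continuous.comp (AddCircle.continuous_mk' 1)

lemma intervalIntegral_fourier_eq_zero {m : ℤ} (hm : m ≠ 0) {s t : ℝ}
    (hst : fourier m (s : UnitAddCircle) = fourier m (t : UnitAddCircle)) :
    ∫ x in s..t, fourier m (x : UnitAddCircle) = 0 := by
  have hderiv := has_antideriv_at_fourier_neg (T := 1) ⟨one_pos⟩ (neg_ne_zero.2 hm)
  simp only [neg_neg] at hderiv
  rw [intervalIntegral.integral_eq_sub_of_hasDerivAt (fun x _ => hderiv x)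
    ((continuous_fourier_coe m).intervalIntegrable _ _), hst, sub_self]

lemma fourier_coe_eq_fourier_coe {a j : ℤ} {s t : ℝ} (h : a * t = a * s + j) :
    fourier a (s : UnitAddCircle) = fourier a (t : UnitAddCircle) := by
  rw [fourier_coe_apply, fourier_coe_apply, Complex.exp_eq_exp_iff_exists_int]
  have h' : (a * t : ℂ) = a * s + j := by exact_mod_cast h
  refine ⟨-j, ?_⟩
  push_cast
  linear_combination (-2 * π * Complex.I) * h'

lemma integral_fourier (m : ℤ) :
    ∫ x : ℝ, fourier m (x : UnitAddCircle) ∂uniform01 = if m = 0 then 1 else 0 := by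
  split_ifs with hm
  · simp [hm]
  · rw [integral_uniform01]
    exact intervalIntegral_fourier_eq_zero hm (fourier_coe_eq_fourier_coe (j := m) (by simp))

lemma fourierCoeffOn_eq_integral_uniform01 (f : ℝ → ℂ) (a : ℤ) :
    fourierCoeffOn zero_lt_one f a =
      ∫ x : ℝ, fourier (-a) (x : UnitAddCircle) * f x ∂uniform01 := by
  rw [fourierCoeffOn_eq_integral, integral_uniform01]
  simp

lemma integrable_fourier_mul {f : ℝ → ℂ} {μ : Measure ℝ} (hf : Integrable f μ) (a : ℤ) :
    Integrable (fun x : ℝ => fourier a (x : UnitAddCircle) * f x) μ :=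
  hf.bdd_mul (c := 1) (continuous_fourier_coe a).aestronglyMeasurable
    (ae_of_all _ fun _ => (norm_fourier_apply a _).le)

lemma norm_intervalIntegral_fourier_mul_le {f : ℝ → ℂ} {s t : ℝ} (hst : s ≤ t)
    (hf : BoundedVariationOn f (Set.Icc s t)) (hfi : IntervalIntegrable f volume s t) {a : ℤ}
    (ha : a ≠ 0) (hper : fourier a (s : UnitAddCircle) = fourier a (t : UnitAddCircle)) :
    ‖∫ x in s..t, fourier a (x : UnitAddCircle) * f x‖ ≤
      (eVariationOn f (Set.Icc s t)).toReal * (t - s) := by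
  have hcentre : ∫ x in s..t, fourier a (x : UnitAddCircle) * f x =
      ∫ x in s..t, fourier a (x : UnitAddCircle) * (f x - f s) := by
    simp_rw [mul_sub]
    rw [intervalIntegral.integral_sub, intervalIntegral.integral_mul_const,
      intervalIntegral_fourier_eq_zero ha hper, zero_mul, sub_zero]
    · exact hfi.continuousOn_mul (continuous_fourier_coe a).continuousOn
    · exact ((continuous_fourier_coe a).mul_const _).intervalIntegrable _ _
  rw [hcentre, ← abs_of_nonneg (sub_nonneg.2 hst)]
  refine intervalIntegral.norm_integral_le_of_norm_le_const fun x hx => ?_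
  rw [Set.uIoc_of_le hst] at hx
  rw [norm_mul, norm_fourier_apply, one_mul, ← dist_eq_norm]
  exact hf.dist_le ⟨hx.1.le, hx.2⟩ ⟨le_rfl, hst⟩

/- `[0, 1]` splits into `|a|` periods of the character, on each of which it has mean zero. -/
lemma norm_fourierCoeffOn_le {f : ℝ → ℂ} (hf : BoundedVariationOn f (Set.Icc 0 1))
    (hfi : IntervalIntegrable f volume 0 1) {a : ℤ} (ha : a ≠ 0) :
    ‖fourierCoeffOn zero_lt_one f a‖ ≤ (eVariationOn f (Set.Icc 0 1)).toReal / |(a : ℝ)| := by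
  obtain ⟨m, hm⟩ : ∃ m, m = a.natAbs := ⟨_, rfl⟩
  have hm0 : (0:ℝ) < m := by rw [hm]; exact_mod_cast Int.natAbs_pos.2 ha
  have habs : |(a : ℝ)| = m := by rw [hm, Nat.cast_natAbs, Int.cast_abs]
  set I : ℕ → ℝ := fun i => i / m with hI
  have hmono : Monotone I := fun i j hij => by simp only [hI]; gcongr
  have hI0 : I 0 = 0 := by simp [hI]
  have hIm : I m = 1 := by simp [hI, hm0.ne']
  have hsub : ∀ i < m, Set.Icc (I i) (I (i + 1)) ⊆ Set.Icc 0 1 := fun i hi =>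
    Set.Icc_subset_Icc (hI0 ▸ hmono i.zero_le) (hIm ▸ hmono hi)
  have hper : ∀ i, fourier (-a) (I i : UnitAddCircle) =
      fourier (-a) (I (i + 1) : UnitAddCircle) := fun i => by
    have hsign : (a : ℝ) = a.sign * m := by
      rw [hm, ← Int.cast_natCast, ← Int.cast_mul, Int.sign_mul_natAbs]
    refine fourier_coe_eq_fourier_coe (j := -a.sign) ?_
    simp only [hI]
    push_cast
    rw [hsign]
    field_simp
    ring
  have hfiI : ∀ i < m, IntervalIntegrable f volume (I i) (I (i + 1)) := fun i hi =>
    hfi.mono_set (by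
      rw [Set.uIcc_of_le (hmono i.le_succ), Set.uIcc_of_le zero_le_one]; exact hsub i hi)
  calc ‖fourierCoeffOn zero_lt_one f a‖
      = ‖∑ i ∈ Finset.range m, ∫ x in I i..I (i + 1), fourier (-a) (x : UnitAddCircle) * f x‖ := by
        rw [intervalIntegral.sum_integral_adjacent_intervals fun i hi =>
          (hfiI i hi).continuousOn_mul (continuous_fourier_coe _).continuousOn, hI0, hIm,
          fourierCoeffOn_eq_integral_uniform01, integral_uniform01]
    _ ≤ ∑ i ∈ Finset.range m, (eVariationOn f (Set.Icc (I i) (I (i + 1)))).toReal * (1 / m) := by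
        refine norm_sum_le_of_le _ fun i hi => ?_
        have hi := Finset.mem_range.1 hi
        have hstep : I (i + 1) - I i = 1 / m := by simp only [hI]; push_cast; ring
        rw [← hstep]
        exact norm_intervalIntegral_fourier_mul_le (hmono i.le_succ) (hf.mono (hsub i hi))
          (hfiI i hi) (neg_ne_zero.2 ha) (hper i)
    _ = (eVariationOn f (Set.Icc 0 1)).toReal / |(a : ℝ)| := by
        rw [← Finset.sum_mul, ← ENNReal.toReal_sum fun i hi =>
          hf.mono (hsub i (Finset.mem_range.1 hi)), eVariationOn.sum' f hmono, hI0, hIm, habs,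
          mul_one_div]

/-- The Fourier coefficients of the restriction of a real function to a period. -/
def realFourierCoeff (f : ℝ → ℝ) (a : ℤ) : ℂ :=
  fourierCoeffOn zero_lt_one (fun x => (f x : ℂ)) a

lemma realFourierCoeff_zero (f : ℝ → ℝ) :
    realFourierCoeff f 0 = ((∫ x, f x ∂uniform01 : ℝ) : ℂ) := by
  simp [realFourierCoeff, fourierCoeffOn_eq_integral_uniform01, integral_complex_ofReal]

lemma realFourierCoeff_neg (f : ℝ → ℝ) (a : ℤ) :
    realFourierCoeff f (-a) = starRingEnd ℂ (realFourierCoeff f a) := by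
  simp [realFourierCoeff, fourierCoeffOn_eq_integral_uniform01, ← integral_conj]

lemma realFourierCoeff_sub {f g : ℝ → ℝ} (hf : Integrable f uniform01)
    (hg : Integrable g uniform01) (a : ℤ) :
    realFourierCoeff (f - g) a = realFourierCoeff f a - realFourierCoeff g a := by
  simp only [realFourierCoeff, fourierCoeffOn_eq_integral_uniform01, Pi.sub_apply,
    Complex.ofReal_sub, mul_sub]
  exact integral_sub (integrable_fourier_mul hf.ofReal _) (integrable_fourier_mul hg.ofReal _)

lemma hasSum_sq_norm_realFourierCoeff {f : ℝ → ℝ} (hf : MemLp f 2 uniform01) :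
    HasSum (fun a => ‖realFourierCoeff f a‖ ^ 2) (∫ x, f x ^ 2 ∂uniform01) := by
  simpa [integral_uniform01, realFourierCoeff] using
    hasSum_sq_fourierCoeffOn zero_lt_one (f := fun x => (f x : ℂ)) hf.ofReal

/-- `f` has mean zero and its Fourier coefficients decay like `V / |a|`, as those of functions of
variation at most `V` do. -/
structure FourierDecay (f : ℝ → ℝ) (V : ℝ) : Prop where
  coeff_zero : realFourierCoeff f 0 = 0
  norm_coeff_le : ∀ a ≠ 0, ‖realFourierCoeff f a‖ ≤ V / |(a : ℝ)|

lemma FourierDecay.norm_coeff_le_natAbs {f : ℝ → ℝ} {V : ℝ} (hf : FourierDecay f V) (a : ℤ) :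
    ‖realFourierCoeff f a‖ ≤ V / a.natAbs := by
  rcases eq_or_ne a 0 with rfl | ha
  · simp [hf.coeff_zero]
  · simpa [Nat.cast_natAbs] using hf.norm_coeff_le a ha

lemma FourierDecay.nonneg {f : ℝ → ℝ} {V : ℝ} (hf : FourierDecay f V) : 0 ≤ V := by
  simpa using (norm_nonneg _).trans (hf.norm_coeff_le 1 one_ne_zero)

lemma fourierDecay_of_boundedVariationOn {f : ℝ → ℝ} (hf : Integrable f uniform01)
    (hf_int : ∫ x in (0 : ℝ)..1, f x = 0) (hf_bv : BoundedVariationOn f (Set.Icc 0 1)) :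
    FourierDecay f (eVariationOn (fun x => (f x : ℂ)) (Set.Icc 0 1)).toReal where
  coeff_zero := by rw [realFourierCoeff_zero, integral_uniform01, hf_int, Complex.ofReal_zero]
  norm_coeff_le _ ha := norm_fourierCoeffOn_le
    (Complex.isometry_ofReal.lipschitz.comp_boundedVariationOn hf_bv)
    ((intervalIntegrable_iff_integrableOn_Ioc_of_le zero_le_one).2 hf.ofReal) ha

lemma memLp_uniform01_of_boundedVariationOn {f : ℝ → ℝ} (hf : AEStronglyMeasurable f uniform01)
    (hf_bv : BoundedVariationOn f (Set.Icc 0 1)) (p : ENNReal) : MemLp f p uniform01 := by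
  refine MemLp.of_bound hf ((eVariationOn f (Set.Icc 0 1)).toReal + ‖f 0‖) ?_
  refine (ae_restrict_iff' measurableSet_Ioc).2 (ae_of_all _ fun x hx => ?_)
  have hdist := hf_bv.dist_le (Set.Ioc_subset_Icc_self hx) (Set.left_mem_Icc.2 zero_le_one)
  rw [dist_eq_norm] at hdist
  linarith [norm_sub_norm_le (f x) (f 0)]

lemma sum_Icc_neg_natAbs (G : ℕ → ℝ) (M : ℕ) :
    ∑ a ∈ Finset.Icc (-(M : ℤ)) M, G a.natAbs = G 0 + 2 * ∑ m ∈ Finset.Ioc 0 M, G m := by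
  induction M with
  | zero => simp
  | succ M ih =>
    have hIcc : Finset.Icc (-((M + 1 : ℕ) : ℤ)) (M + 1 : ℕ) =
        insert (-((M + 1 : ℕ) : ℤ)) (insert ((M + 1 : ℕ) : ℤ) (Finset.Icc (-(M : ℤ)) M)) := by
      ext a
      simp only [Finset.mem_insert, Finset.mem_Icc]
      omega
    rw [hIcc, Finset.sum_insert (by simp only [Finset.mem_insert, Finset.mem_Icc]; omega),
      Finset.sum_insert (by simp only [Finset.mem_Icc]; omega), ih,
      Finset.sum_Ioc_succ_top M.zero_le, Int.natAbs_neg, Int.natAbs_natCast]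
    ring

/-- The symmetric partial sums of the Fourier series of a real function. -/
def fourierPartialSum (f : ℝ → ℝ) (R : ℕ) (x : ℝ) : ℝ :=
  (∑ a ∈ Finset.Icc (-(R : ℤ)) R, realFourierCoeff f a * fourier a (x : UnitAddCircle)).re

section fourierPartialSum

variable {f : ℝ → ℝ} {V : ℝ} {R : ℕ}

lemma ofReal_fourierPartialSum (f : ℝ → ℝ) (R : ℕ) (x : ℝ) : (fourierPartialSum f R x : ℂ) =
    ∑ a ∈ Finset.Icc (-(R : ℤ)) R, realFourierCoeff f a * fourier a (x : UnitAddCircle) := by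
  rw [fourierPartialSum, ← Complex.conj_eq_iff_re]
  simp only [map_sum, map_mul, ← realFourierCoeff_neg, ← fourier_neg]
  exact Finset.sum_equiv (Equiv.neg ℤ) (by simp [neg_le, and_comm]) (by simp)

lemma continuous_fourierPartialSum (f : ℝ → ℝ) (R : ℕ) : Continuous (fourierPartialSum f R) :=
  Complex.continuous_re.comp <| continuous_finsetSum _ fun a _ =>
    (continuous_fourier_coe a).const_mul _

lemma periodic_fourierPartialSum (f : ℝ → ℝ) (R : ℕ) :
    Function.Periodic (fourierPartialSum f R) 1 := fun x => by
  simp [fourierPartialSum]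

lemma FourierDecay.abs_fourierPartialSum_le (hf : FourierDecay f V) (R : ℕ) (x : ℝ) :
    |fourierPartialSum f R x| ≤ 2 * V * (1 + log R) :=
  calc |fourierPartialSum f R x|
      ≤ ∑ a ∈ Finset.Icc (-(R : ℤ)) R, V / (a.natAbs : ℝ) := by
        refine (Complex.abs_re_le_norm _).trans (norm_sum_le_of_le _ fun a _ => ?_)
        rw [norm_mul, norm_fourier_apply, mul_one]
        exact hf.norm_coeff_le_natAbs a
    _ = 2 * V * harmonic R := by
        rw [sum_Icc_neg_natAbs fun m => V / m, harmonic_eq_sum_Icc, Nat.cast_zero, div_zero,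
          zero_add]
        push_cast
        simp_rw [div_eq_mul_inv, ← Finset.mul_sum, mul_assoc]
        rfl
    _ ≤ 2 * V * (1 + log R) :=
        mul_le_mul_of_nonneg_left (harmonic_le_one_add_log R) (mul_nonneg two_pos.le hf.nonneg)

lemma FourierDecay.memLp_fourierPartialSum (hf : FourierDecay f V) (R : ℕ) :
    MemLp (fourierPartialSum f R) 2 uniform01 :=
  MemLp.of_bound (continuous_fourierPartialSum f R).aestronglyMeasurable _
    (ae_of_all _ (hf.abs_fourierPartialSum_le R))

lemma realFourierCoeff_fourierPartialSum (f : ℝ → ℝ) (R : ℕ) (b : ℤ) :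
    realFourierCoeff (fourierPartialSum f R) b =
      if b ∈ Finset.Icc (-(R : ℤ)) R then realFourierCoeff f b else 0 := by
  rw [realFourierCoeff, fourierCoeffOn_eq_integral_uniform01]
  have hterm : ∀ x : ℝ, fourier (-b) (x : UnitAddCircle) * (fourierPartialSum f R x : ℂ) =
      ∑ a ∈ Finset.Icc (-(R : ℤ)) R,
        realFourierCoeff f a * fourier (-b + a) (x : UnitAddCircle) := fun x => by
    simp_rw [ofReal_fourierPartialSum, Finset.mul_sum, fourier_add, mul_left_comm]
  simp_rw [hterm]
  rw [integral_finsetSum]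
  · simp_rw [integral_const_mul, integral_fourier, neg_add_eq_zero, mul_ite, mul_one, mul_zero,
      Finset.sum_ite_eq]
  · exact fun a _ => (Integrable.of_bound (continuous_fourier_coe _).aestronglyMeasurable 1
      (ae_of_all _ fun x => (norm_fourier_apply _ _).le)).const_mul _

lemma FourierDecay.integral_fourierPartialSum (hf : FourierDecay f V) (R : ℕ) :
    ∫ x, fourierPartialSum f R x ∂uniform01 = 0 := by
  have h := realFourierCoeff_fourierPartialSum f R 0
  rw [hf.coeff_zero, ite_self, realFourierCoeff_zero] at h
  exact_mod_cast h

lemma integral_sq_sub_fourierPartialSum (hf : FourierDecay f V) (hf2 : MemLp f 2 uniform01)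
    (R : ℕ) : ∫ x, (f x - fourierPartialSum f R x) ^ 2 ∂uniform01 =
      ∫ x, f x ^ 2 ∂uniform01 - ∫ x, fourierPartialSum f R x ^ 2 ∂uniform01 := by
  have hS := hf.memLp_fourierPartialSum R
  have hcoeff : ∀ a, ‖realFourierCoeff (f - fourierPartialSum f R) a‖ ^ 2 =
      ‖realFourierCoeff f a‖ ^ 2 - ‖realFourierCoeff (fourierPartialSum f R) a‖ ^ 2 := fun a => by
    rw [realFourierCoeff_sub (hf2.integrable one_le_two) (hS.integrable one_le_two),
      realFourierCoeff_fourierPartialSum]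
    split_ifs <;> simp
  have hsum := hasSum_sq_norm_realFourierCoeff (hf2.sub hS)
  simp_rw [hcoeff] at hsum
  exact hsum.unique
    ((hasSum_sq_norm_realFourierCoeff hf2).sub (hasSum_sq_norm_realFourierCoeff hS))

lemma integral_sq_fourierPartialSum_le (hf : FourierDecay f V) (hf2 : MemLp f 2 uniform01)
    (R : ℕ) : ∫ x, fourierPartialSum f R x ^ 2 ∂uniform01 ≤ ∫ x, f x ^ 2 ∂uniform01 := by
  rw [← sub_nonneg, ← integral_sq_sub_fourierPartialSum hf hf2]
  exact integral_nonneg fun x => sq_nonneg _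

lemma integral_sq_sub_fourierPartialSum_le (hf : FourierDecay f V) (hf2 : MemLp f 2 uniform01)
    (hR : R ≠ 0) :
    ∫ x, (f x - fourierPartialSum f R x) ^ 2 ∂uniform01 ≤ 2 * V ^ 2 / R := by
  have hS := hf.memLp_fourierPartialSum R
  refine hasSum_le_of_sum_le (hasSum_sq_norm_realFourierCoeff (hf2.sub hS)) fun s => ?_
  have hcoeff : ∀ a : ℤ, ‖realFourierCoeff (f - fourierPartialSum f R) a‖ ^ 2 ≤
      if R < a.natAbs then V ^ 2 * ((a.natAbs : ℝ) ^ 2)⁻¹ else 0 := fun a => by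
    rw [realFourierCoeff_sub (hf2.integrable one_le_two) (hS.integrable one_le_two),
      realFourierCoeff_fourierPartialSum]
    split_ifs with hmem hlt hlt
    · rw [Finset.mem_Icc] at hmem; omega
    · simp
    · rw [sub_zero, ← div_eq_mul_inv, ← div_pow]
      exact pow_le_pow_left₀ (norm_nonneg _) (hf.norm_coeff_le_natAbs a) 2
    · rw [Finset.mem_Icc] at hmem; omega
  obtain ⟨M, hRM, hsM⟩ : ∃ M, R ≤ M ∧ s ⊆ Finset.Icc (-(M : ℤ)) M := by
    refine ⟨max R (s.sup Int.natAbs), le_max_left _ _, fun a ha => ?_⟩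
    have := Finset.le_sup (f := Int.natAbs) ha
    rw [Finset.mem_Icc]; omega
  calc ∑ a ∈ s, ‖realFourierCoeff (f - fourierPartialSum f R) a‖ ^ 2
      ≤ ∑ a ∈ Finset.Icc (-(M : ℤ)) M,
          if R < a.natAbs then V ^ 2 * ((a.natAbs : ℝ) ^ 2)⁻¹ else 0 :=
        (Finset.sum_le_sum_of_subset_of_nonneg hsM fun _ _ _ => sq_nonneg _).trans
          (Finset.sum_le_sum fun a _ => hcoeff a)
    _ = 2 * (V ^ 2 * ∑ m ∈ Finset.Ioc R M, ((m : ℝ) ^ 2)⁻¹) := by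
        rw [sum_Icc_neg_natAbs fun m => if R < m then V ^ 2 * ((m : ℝ) ^ 2)⁻¹ else 0,
          if_neg R.not_lt_zero, zero_add, ← Finset.sum_filter, ← Finset.mul_sum]
        refine congrArg (2 * (V ^ 2 * ·)) (Finset.sum_congr (Finset.ext fun m => ?_) fun _ _ => rfl)
        simp only [Finset.mem_filter, Finset.mem_Ioc]
        omega
    _ ≤ 2 * (V ^ 2 * (R : ℝ)⁻¹) := by
        gcongr
        exact (sum_Ioc_inv_sq_le_sub hR hRM).trans (sub_le_self _ (by positivity))
    _ = 2 * V ^ 2 / R := by ring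

end fourierPartialSum

/-! ### Diophantine relations and moments -/

lemma sum_fiberwise_mul {ι κ R : Type*} [DecidableEq κ] [NonUnitalNonAssocSemiring R]
    {s : Finset ι} {t : Finset κ} {g : ι → κ} (hg : ∀ i ∈ s, g i ∈ t) (a : ι → R) (v : κ → R) :
    ∑ k ∈ t, (∑ i ∈ s with g i = k, a i) * v k = ∑ i ∈ s, a i * v (g i) := by
  rw [← Finset.sum_fiberwise_of_maps_to hg]
  refine Finset.sum_congr rfl fun k _ => ?_
  rw [Finset.sum_mul]
  exact Finset.sum_congr rfl fun i hi => by rw [(Finset.mem_filter.1 hi).2]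

/-- Every relation of length `m` among the frequencies `ν`, repetitions being allowed, with
coefficients in `A` is trivial: the coefficients attached to each frequency cancel. -/
def OnlyTrivialRelations {ι : Type*} [DecidableEq ι] (ν : ι → ℕ) (A : Finset ℤ) (m : ℕ) : Prop :=
  ∀ (κ : Fin m → ι) (a : Fin m → ℤ), (∀ i, a i ∈ A) →
    ∑ i, a i * (ν (κ i) : ℤ) = 0 → ∀ k, ∑ i with κ i = k, a i = 0

lemma integral_sum_pow {Ω β : Type*} [MeasurableSpace Ω] (μ : Measure Ω) [IsFiniteMeasure μ]
    (S : Finset β) (b : β → ℂ) (E : β → Ω → ℂ) (hE : ∀ p, Measurable (E p))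
    {C : ℝ} (hC : ∀ p x, ‖E p x‖ ≤ C) (m : ℕ) :
    ∫ x, (∑ p ∈ S, b p * E p x) ^ m ∂μ =
      ∑ τ ∈ Fintype.piFinset (fun _ : Fin m => S), (∏ i, b (τ i)) * ∫ x, ∏ i, E (τ i) x ∂μ := by
  classical
  have hexpand : ∀ x, (∑ p ∈ S, b p * E p x) ^ m =
      ∑ τ ∈ Fintype.piFinset (fun _ : Fin m => S), (∏ i, b (τ i)) * ∏ i, E (τ i) x := fun x => by
    simpa [Finset.prod_mul_distrib] using
      Finset.prod_univ_sum (fun _ : Fin m => S) (fun _ p => b p * E p x)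
  simp_rw [hexpand]
  rw [integral_finsetSum]
  · simp_rw [integral_const_mul]
  · intro τ _
    refine (Integrable.of_bound (Finset.measurable_prod _ fun i _ =>
      hE (τ i)).aestronglyMeasurable (C ^ m) (ae_of_all _ fun x => ?_)).const_mul _
    simpa [norm_prod] using
      Finset.prod_le_prod (fun _ _ => norm_nonneg _) (fun i (_ : i ∈ Finset.univ) => hC (τ i) x)

section moments

variable {ι : Type*} {m : ℕ} (ν : ι → ℕ) (κ : Fin m → ι) (a : Fin m → ℤ)

lemma integral_prod_fourier_dilates :
    ∫ x : ℝ, ∏ i, fourier (a i) ((ν (κ i) * x : ℝ) : UnitAddCircle) ∂uniform01 =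
      if ∑ i, a i * (ν (κ i) : ℤ) = 0 then 1 else 0 := by
  simp_rw [fourier_coe_natCast_mul, ← fourier_sum, integral_fourier]

variable [Fintype ι] [DecidableEq ι]

lemma integral_prod_fourier_pi :
    ∫ u : ι → ℝ, ∏ i, fourier (a i) (u (κ i) : UnitAddCircle) ∂Measure.pi (fun _ => uniform01) =
      ∏ k, if ∑ i with κ i = k, a i = 0 then 1 else 0 := by
  have hgroup : ∀ u : ι → ℝ, ∏ i, fourier (a i) (u (κ i) : UnitAddCircle) =
      ∏ k, fourier (∑ i with κ i = k, a i) (u k : UnitAddCircle) := fun u => by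
    rw [← Finset.prod_fiberwise Finset.univ κ]
    refine Finset.prod_congr rfl fun k _ => ?_
    rw [fourier_sum]
    exact Finset.prod_congr rfl fun i hi => by rw [(Finset.mem_filter.1 hi).2]
  simp_rw [hgroup]
  rw [integral_fintype_prod_eq_prod (𝕜 := ℂ)
    (f := fun k (x : ℝ) => fourier (∑ i with κ i = k, a i) (x : UnitAddCircle))]
  simp_rw [integral_fourier]

variable {ν} {A : Finset ℤ}

lemma OnlyTrivialRelations.integral_prod_fourier_eq (hν : OnlyTrivialRelations ν A m)
    (ha : ∀ i, a i ∈ A) :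
    ∫ x : ℝ, ∏ i, fourier (a i) ((ν (κ i) * x : ℝ) : UnitAddCircle) ∂uniform01 =
      ∫ u : ι → ℝ, ∏ i, fourier (a i) (u (κ i) : UnitAddCircle)
        ∂Measure.pi (fun _ => uniform01) := by
  rw [integral_prod_fourier_dilates, integral_prod_fourier_pi]
  have hiff : ∑ i, a i * (ν (κ i) : ℤ) = 0 ↔ ∀ k, ∑ i with κ i = k, a i = 0 := by
    refine ⟨hν κ a ha, fun h => ?_⟩
    rw [← sum_fiberwise_mul (fun i _ => Finset.mem_univ (κ i)) a fun k => (ν k : ℤ)]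
    simp [h]
  rw [Finset.prod_ite_zero]
  simp [hiff]

theorem OnlyTrivialRelations.integral_pow_dilates_eq (hν : OnlyTrivialRelations ν A m)
    {w : ℤ → ℂ} {T : ℝ → ℝ}
    (hT : ∀ x : ℝ, (T x : ℂ) = ∑ a ∈ A, w a * fourier a (x : UnitAddCircle)) (c : ι → ℝ) :
    ∫ x, (∑ k, c k * T (ν k * x)) ^ m ∂uniform01 =
      ∫ u : ι → ℝ, (∑ k, c k * T (u k)) ^ m ∂Measure.pi (fun _ => uniform01) := by
  have hexpand : ∀ y : ι → ℝ, (((∑ k, c k * T (y k)) ^ m : ℝ) : ℂ) =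
      (∑ p ∈ Finset.univ ×ˢ A, (c p.1 * w p.2) * fourier p.2 (y p.1 : UnitAddCircle)) ^ m := by
    intro y
    push_cast
    simp_rw [hT, Finset.mul_sum, Finset.sum_product, mul_assoc]
  rw [← Complex.ofReal_inj, ← integral_complex_ofReal, ← integral_complex_ofReal]
  simp_rw [hexpand]
  rw [integral_sum_pow uniform01 _ (fun p : ι × ℤ => (c p.1 : ℂ) * w p.2)
      (fun p x => fourier p.2 ((ν p.1 * x : ℝ) : UnitAddCircle))
      (fun p => ((continuous_fourier_coe _).comp (continuous_const_mul _)).measurable)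
      (fun p x => (norm_fourier_apply _ _).le),
    integral_sum_pow (Measure.pi fun _ : ι => uniform01) _ (fun p : ι × ℤ => (c p.1 : ℂ) * w p.2)
      (fun p u => fourier p.2 (u p.1 : UnitAddCircle))
      (fun p => (continuous_fourier_coe _).measurable.comp (measurable_pi_apply _))
      (fun p x => (norm_fourier_apply _ _).le)]
  refine Finset.sum_congr rfl fun τ hτ => congrArg _ ?_
  exact hν.integral_prod_fourier_eq (fun i => (τ i).1) (fun i => (τ i).2) fun i =>
    (Finset.mem_product.1 (Fintype.mem_piFinset.1 hτ i)).2

end moments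

section CondA

variable {ω : ℕ → ℝ} {n : ℕ → ℕ} {N₀ N : ℕ}

lemma eq_zero_of_sum_mul_eq_zero_of_condAWith (hA : CondAWith ω n N₀) (hn_pos : ∀ k, 0 < n k)
    (hN : N₀ ≤ N) {S : Finset ℕ} (hS : ∀ k ∈ S, ¬ AmongSmallest n N k) (hcard : (S.card : ℝ) ≤ ω N)
    {b : ℕ → ℤ} (hb : ∀ k ∈ S, (|b k| : ℝ) ≤ (N : ℝ) ^ ω N)
    (hsum : ∑ k ∈ S, b k * (n k : ℤ) = 0) : ∀ k ∈ S, b k = 0 := by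
  set S' := S.filter (b · ≠ 0)
  have hS' : ∀ {k}, k ∈ S' → k ∈ S ∧ b k ≠ 0 := Finset.mem_filter.1
  have hsum' : ∑ k ∈ S', b k * (n k : ℤ) = 0 := by
    rwa [Finset.sum_filter_of_ne fun k _ h => left_ne_zero_of_mul h]
  suffices hempty : S' = ∅ by
    intro k hk
    by_contra hbk
    exact Finset.notMem_empty k (hempty ▸ Finset.mem_filter.2 ⟨hk, hbk⟩)
  by_contra! hne
  obtain ⟨k, hk⟩ := hne
  rcases (Nat.succ_le_iff.2 (Finset.card_pos.2 ⟨k, hk⟩)).eq_or_lt' with hone | htwo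
  · rw [Finset.sum_eq_single_of_mem k hk fun j hj hjk =>
      absurd (Finset.card_le_one.1 hone.le j hj k hk) hjk] at hsum'
    exact mul_ne_zero (hS' hk).2 (Nat.cast_ne_zero.2 (hn_pos k).ne') hsum'
  · let e := S'.equivFin.symm
    have hle : (S'.card : ℝ) ≤ ω N :=
      (Nat.cast_le.2 (Finset.card_le_card (Finset.filter_subset _ _))).trans hcard
    have hsmall := hA N hN S'.card (fun i => e i) (fun i => b (e i)) htwo hle
      (Subtype.val_injective.comp e.injective) (fun i => (hS' (e i).2).2)
      (fun i => hb _ (hS' (e i).2).1)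
      (by rw [← hsum', ← Finset.sum_coe_sort S']
          exact Equiv.sum_comp e fun k : S' => b k * (n k : ℤ))
      (e.symm ⟨k, hk⟩)
    rw [Equiv.apply_symm_apply] at hsmall
    exact hS k (hS' hk).1 hsmall

lemma onlyTrivialRelations_of_condAWith (hA : CondAWith ω n N₀) (hn_pos : ∀ k, 0 < n k)
    (hN : N₀ ≤ N) {I : Finset ℕ} (hI : ∀ k ∈ I, ¬ AmongSmallest n N k) {m R : ℕ}
    (hm : (m : ℝ) ≤ ω N) (hR : (m * R : ℝ) ≤ (N : ℝ) ^ ω N) :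
    OnlyTrivialRelations (fun k : I => n k) (Finset.Icc (-(R : ℤ)) R) m := by
  intro κ a ha hrel k
  set S : Finset ℕ := Finset.univ.image fun i => (κ i : ℕ)
  set b : ℕ → ℤ := fun k => ∑ i with (κ i : ℕ) = k, a i
  have hS : ∀ k ∈ S, ¬ AmongSmallest n N k := fun k hk => by
    obtain ⟨i, -, rfl⟩ := Finset.mem_image.1 hk
    exact hI _ (κ i).2
  have hcard : (S.card : ℝ) ≤ ω N :=
    (Nat.cast_le.2 (Finset.card_image_le.trans (Finset.card_fin m).le)).trans hm
  have hb : ∀ k, (|b k| : ℝ) ≤ (N : ℝ) ^ ω N := fun k => by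
    have hle : |b k| ≤ (m * R : ℤ) :=
      calc |b k| ≤ ∑ i with (κ i : ℕ) = k, |a i| := Finset.abs_sum_le_sum_abs _ _
        _ ≤ ∑ i, |a i| := Finset.sum_le_univ_sum_of_nonneg fun _ => abs_nonneg _
        _ ≤ ∑ _i : Fin m, (R : ℤ) :=
          Finset.sum_le_sum fun i _ => abs_le.2 (Finset.mem_Icc.1 (ha i))
        _ = m * R := by simp
    exact le_trans (by exact_mod_cast hle) hR
  have hsum : ∑ k ∈ S, b k * (n k : ℤ) = 0 := by
    rw [← hrel]
    exact sum_fiberwise_mul (fun i hi => Finset.mem_image_of_mem (fun i => (κ i : ℕ)) hi) a _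
  have hbk : ∑ i with κ i = k, a i = b k := by simp only [b, Subtype.ext_iff]
  rw [hbk]
  by_cases hk : (k : ℕ) ∈ S
  · exact eq_zero_of_sum_mul_eq_zero_of_condAWith hA hn_pos hN hS hcard (fun k _ => hb k) hsum k hk
  · exact Finset.sum_eq_zero fun i hi =>
      absurd ((Finset.mem_filter.1 hi).2 ▸ Finset.mem_image_of_mem _ (Finset.mem_univ i)) hk

lemma card_le_of_amongSmallest (hn_inj : Function.Injective n) {s : Finset ℕ}
    (hs : ∀ k ∈ s, AmongSmallest n N k) : s.card ≤ N := by
  rcases s.eq_empty_or_nonempty with rfl | hne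
  · simp
  obtain ⟨k, hk, hmax⟩ := s.exists_max_image n hne
  calc s.card = (s : Set ℕ).ncard := (Set.ncard_coe_finset s).symm
    _ ≤ {j : ℕ | n j ≤ n k}.ncard :=
      Set.ncard_le_ncard (fun j hj => hmax j hj) ((Set.finite_Iic (n k)).preimage hn_inj.injOn)
    _ ≤ N := hs k hk

end CondA

/-! ### Moments and characteristic functions of independent sums -/

section BoundedVariables

variable {Ω : Type*} [MeasurableSpace Ω] {μ : Measure Ω} {X : Ω → ℝ} {B : ℝ}

lemma integrable_pow_of_abs_le [IsFiniteMeasure μ] (hX : Measurable X) (hB : ∀ ω, |X ω| ≤ B)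
    (m : ℕ) : Integrable (fun ω => X ω ^ m) μ :=
  Integrable.of_bound (hX.pow_const m).aestronglyMeasurable (B ^ m) <| ae_of_all _ fun ω => by
    rw [norm_pow]
    exact pow_le_pow_left₀ (norm_nonneg _) (hB ω) m

lemma integrable_exp_mul_of_abs_le [IsFiniteMeasure μ] (hX : Measurable X)
    (hB : ∀ ω, |X ω| ≤ B) (t : ℝ) : Integrable (fun ω => exp (t * X ω)) μ :=
  Integrable.of_bound (hX.const_mul t).exp.aestronglyMeasurable (exp (|t| * B)) <|
    ae_of_all _ fun ω => by
      rw [Real.norm_eq_abs, Real.abs_exp, exp_le_exp]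
      exact (le_abs_self _).trans ((abs_mul _ _).trans_le (by gcongr; exact hB ω))

lemma integral_abs_pow_le_of_abs_le [IsProbabilityMeasure μ] (hB : ∀ ω, |X ω| ≤ B) (m : ℕ) :
    ∫ ω, |X ω| ^ m ∂μ ≤ B ^ m :=
  calc ∫ ω, |X ω| ^ m ∂μ ≤ ∫ _, B ^ m ∂μ :=
        integral_mono_of_nonneg (ae_of_all _ fun ω => by positivity) (integrable_const _)
          (ae_of_all _ fun ω => pow_le_pow_left₀ (abs_nonneg _) (hB ω) m)
    _ = B ^ m := by rw [integral_const, probReal_univ, one_smul]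

end BoundedVariables

section Laplace

variable {Ω : Type*} [MeasurableSpace Ω] {μ : Measure Ω} [IsProbabilityMeasure μ] {B ε : ℝ}

lemma exp_le_one_add_add_sq {x : ℝ} (hx : |x| ≤ ε) (hε : ε ≤ 1) :
    exp x ≤ 1 + x + x ^ 2 / 2 * (1 + ε) := by
  have hexp := Real.exp_bound (hx.trans hε) (n := 3) (by norm_num)
  simp only [Finset.sum_range_succ, Finset.sum_range_zero, Nat.factorial] at hexp
  norm_num [pow_succ _ 2] at hexp
  have hcube : x ^ 2 * |x| ≤ x ^ 2 * ε := by gcongr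
  nlinarith [(abs_le.1 hexp).2, mul_nonneg (sq_nonneg x) (abs_nonneg x)]

lemma mgf_le_exp_of_abs_le {X : Ω → ℝ} (hX : Measurable X) (hB : ∀ ω, |X ω| ≤ B)
    (h0 : ∫ ω, X ω ∂μ = 0) {t : ℝ} (ht : |t| * B ≤ ε) (hε : ε ≤ 1) :
    mgf X μ t ≤ exp (t ^ 2 * ((1 + ε) * ∫ ω, X ω ^ 2 ∂μ) / 2) := by
  have hint : Integrable X μ := by simpa using integrable_pow_of_abs_le (μ := μ) hX hB 1
  have hint2 := integrable_pow_of_abs_le (μ := μ) hX hB 2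
  calc mgf X μ t
      ≤ ∫ ω, (1 + (t * X ω + (t ^ 2 * (1 + ε) / 2) * X ω ^ 2)) ∂μ := by
        refine integral_mono (integrable_exp_mul_of_abs_le hX hB t) (by fun_prop) fun ω => ?_
        have htX : |t * X ω| ≤ ε := (abs_mul _ _).trans_le (le_trans (by gcongr; exact hB ω) ht)
        exact (exp_le_one_add_add_sq htX hε).trans_eq (by ring)
    _ = 1 + t ^ 2 * ((1 + ε) * ∫ ω, X ω ^ 2 ∂μ) / 2 := by
        rw [integral_add (by fun_prop) (by fun_prop), integral_add (by fun_prop) (by fun_prop),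
          integral_const_mul, integral_const_mul, h0]
        simp only [integral_const, probReal_univ, smul_eq_mul]
        ring
    _ ≤ exp (t ^ 2 * ((1 + ε) * ∫ ω, X ω ^ 2 ∂μ) / 2) := by
        rw [add_comm]
        exact Real.add_one_le_exp _

lemma mgf_sum_le_exp_of_abs_le {ι : Type*} [Fintype ι] {Y : ι → Ω → ℝ} (hY : iIndepFun Y μ)
    (hm : ∀ k, Measurable (Y k)) (hB : ∀ k ω, |Y k ω| ≤ B) (h0 : ∀ k, ∫ ω, Y k ω ∂μ = 0) {t : ℝ}
    (ht : |t| * B ≤ ε) (hε : ε ≤ 1) :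
    mgf (∑ k, Y k) μ t ≤ exp (t ^ 2 * ((1 + ε) * ∑ k, ∫ ω, Y k ω ^ 2 ∂μ) / 2) := by
  rw [hY.mgf_sum hm, Finset.mul_sum, Finset.mul_sum, Finset.sum_div, Real.exp_sum]
  exact Finset.prod_le_prod (fun _ _ => mgf_nonneg) fun k _ =>
    mgf_le_exp_of_abs_le (hm k) (hB k) (h0 k) ht hε

lemma pow_le_pow_mul_exp {u l : ℝ} (hu : 0 ≤ u) (hl : 0 < l) {n : ℕ} (hn : n ≠ 0) :
    u ^ n ≤ (n / l) ^ n * exp (-n) * exp (l * u) := by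
  have : (0:ℝ) < n := by positivity
  have hbase : l * u / n ≤ exp (l * u / n - 1) := by
    linarith [Real.add_one_le_exp (l * u / n - 1)]
  calc u ^ n = (n / l) ^ n * (l * u / n) ^ n := by rw [← mul_pow]; field_simp
    _ ≤ (n / l) ^ n * exp (l * u / n - 1) ^ n := by gcongr
    _ = (n / l) ^ n * exp (-n) * exp (l * u) := by
        rw [← Real.exp_nat_mul, mul_assoc, ← Real.exp_add]
        congr 2
        field_simp
        ring

lemma integral_even_pow_le_mgf {X : Ω → ℝ} (hX : Measurable X) (hB : ∀ ω, |X ω| ≤ B) {l : ℝ}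
    (hl : 0 < l) {p : ℕ} (hp : p ≠ 0) :
    ∫ ω, X ω ^ (2 * p) ∂μ ≤
      (2 * p / l) ^ (2 * p) * exp (-(2 * p)) * (mgf X μ l + mgf X μ (-l)) := by
  have hpoint : ∀ ω, X ω ^ (2 * p) ≤
      (2 * p / l) ^ (2 * p) * exp (-(2 * p)) * (exp (l * X ω) + exp (-l * X ω)) := fun ω => by
    have hpow := pow_le_pow_mul_exp (abs_nonneg (X ω)) hl (n := 2 * p) (by omega)
    rw [(even_two_mul p).pow_abs] at hpow
    push_cast at hpow
    refine hpow.trans (mul_le_mul_of_nonneg_left ?_ (by positivity))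
    rcases abs_cases (X ω) with ⟨h, -⟩ | ⟨h, -⟩ <;> rw [h]
    · linarith [exp_pos (-l * X ω)]
    · rw [mul_neg, ← neg_mul]; linarith [exp_pos (l * X ω)]
  have hexp := integrable_exp_mul_of_abs_le (μ := μ) hX hB
  rw [mgf, mgf, ← integral_add (hexp l) (hexp (-l)), ← integral_const_mul]
  exact integral_mono (integrable_pow_of_abs_le hX hB _)
    (((hexp l).add (hexp (-l))).const_mul _) hpoint

/- The choice `l = √(2p / s)` minimises the exponential moment bound. -/
theorem integral_even_pow_sum_le {ι : Type*} [Fintype ι] {Y : ι → Ω → ℝ} (hY : iIndepFun Y μ)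
    (hm : ∀ k, Measurable (Y k)) (hB : ∀ k ω, |Y k ω| ≤ B) (h0 : ∀ k, ∫ ω, Y k ω ∂μ = 0)
    (hε : ε ≤ 1) {s : ℝ} (hs : 0 < s) (hvar : (1 + ε) * ∑ k, ∫ ω, Y k ω ^ 2 ∂μ ≤ s)
    {p : ℕ} (hp : p ≠ 0) (hBε : √(2 * p / s) * B ≤ ε) :
    ∫ ω, (∑ k, Y k ω) ^ (2 * p) ∂μ ≤ 2 * (2 * p * s) ^ p * exp (-p) := by
  obtain ⟨l, hl⟩ : ∃ l, l = √(2 * p / s) := ⟨_, rfl⟩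
  have hl0 : 0 < l := by rw [hl]; positivity
  have hl2 : l ^ 2 = 2 * p / s := by rw [hl, Real.sq_sqrt (by positivity)]
  have hmgf : ∀ t : ℝ, |t| = l → mgf (∑ k, Y k) μ t ≤ exp p := fun t ht => by
    refine (mgf_sum_le_exp_of_abs_le hY hm hB h0 (ht.trans hl ▸ hBε) hε).trans (exp_le_exp.2 ?_)
    calc (t ^ 2 * ((1 + ε) * ∑ k, ∫ ω, Y k ω ^ 2 ∂μ) / 2 : ℝ) ≤ t ^ 2 * s / 2 := by gcongr
      _ = (p : ℝ) := by rw [← sq_abs, ht, hl2, div_mul_cancel₀ _ hs.ne']; ring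
  have hbound : ∀ ω, |(∑ k, Y k) ω| ≤ ∑ _k : ι, B := fun ω => by
    rw [Finset.sum_apply]
    exact (Finset.abs_sum_le_sum_abs _ _).trans (Finset.sum_le_sum fun k _ => hB k ω)
  calc ∫ ω, (∑ k, Y k ω) ^ (2 * p) ∂μ
      ≤ (2 * p / l) ^ (2 * p) * exp (-(2 * p)) *
          (mgf (∑ k, Y k) μ l + mgf (∑ k, Y k) μ (-l)) := by
        simpa only [Finset.sum_apply] using integral_even_pow_le_mgf (μ := μ)
          (X := ∑ k, Y k) (by fun_prop) hbound hl0 hp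
    _ ≤ (2 * p / l) ^ (2 * p) * exp (-(2 * p)) * (exp p + exp p) := by
        gcongr
        · exact hmgf l (abs_of_pos hl0)
        · exact hmgf (-l) (by rw [abs_neg, abs_of_pos hl0])
    _ = 2 * (2 * p * s) ^ p * exp (-p) := by
        have hpow : (2 * p / l) ^ (2 * p) = (2 * p * s) ^ p := by
          rw [pow_mul, div_pow, hl2]
          congr 1
          field_simp
        have hexp : exp (-(2 * p : ℝ)) * exp p = exp (-p) := by
          rw [← Real.exp_add]; ring_nf
        rw [hpow, ← hexp]
        ring

end Laplace

section CharFun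

/-- The remainder of order `n` in the Taylor expansion of `x ↦ exp (i x)` at `0`. -/
def expITaylorRemainder (n : ℕ) (x : ℝ) : ℂ :=
  Complex.exp (x * Complex.I) - ∑ m ∈ Finset.range n, (x * Complex.I) ^ m / m.factorial

lemma hasDerivAt_expITaylorRemainder_succ (n : ℕ) (x : ℝ) :
    HasDerivAt (expITaylorRemainder (n + 1)) (Complex.I * expITaylorRemainder n x) x := by
  have hlin : HasDerivAt (fun x : ℝ => (x : ℂ) * Complex.I) Complex.I x := by
    simpa using (Complex.ofRealCLM.hasDerivAt (x := x)).mul_const Complex.I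
  have hterm : ∀ m : ℕ, HasDerivAt
      (fun x : ℝ => ((x : ℂ) * Complex.I) ^ (m + 1) / (m + 1).factorial)
      (Complex.I * ((x * Complex.I) ^ m / m.factorial)) x := fun m => by
    refine ((hlin.fun_pow (m + 1)).div_const _).congr_deriv ?_
    have : (m.factorial : ℂ) ≠ 0 := by exact_mod_cast m.factorial_ne_zero
    have : (m + 1 : ℂ) ≠ 0 := by exact_mod_cast m.succ_ne_zero
    rw [Nat.factorial_succ]
    push_cast
    field_simp
  have hsum : HasDerivAt
      (fun x : ℝ => ∑ m ∈ Finset.range (n + 1), ((x : ℂ) * Complex.I) ^ m / m.factorial)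
      (∑ m ∈ Finset.range n, Complex.I * ((x * Complex.I) ^ m / m.factorial)) x := by
    simp_rw [Finset.sum_range_succ' _ n, pow_zero]
    exact (HasDerivAt.fun_sum fun m _ => hterm m).add_const _
  refine (hlin.cexp.sub hsum).congr_deriv ?_
  rw [← Finset.mul_sum, expITaylorRemainder]
  ring

lemma norm_expITaylorRemainder_le_of_nonneg (n : ℕ) :
    ∀ x : ℝ, 0 ≤ x → ‖expITaylorRemainder n x‖ ≤ x ^ n / n.factorial := by
  induction n with
  | zero => simp [expITaylorRemainder, Complex.norm_exp]
  | succ n ih =>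
    intro x hx
    have hpow : ∀ y : ℝ, HasDerivAt (fun y : ℝ => y ^ (n + 1) / (n + 1).factorial)
        (y ^ n / n.factorial) y := fun y => by
      refine ((hasDerivAt_pow (n + 1) y).div_const _).congr_deriv ?_
      rw [Nat.factorial_succ]
      push_cast
      field_simp
    exact image_norm_le_of_norm_deriv_right_le_deriv_boundary
      (fun y _ => (hasDerivAt_expITaylorRemainder_succ n y).continuousAt.continuousWithinAt)
      (fun y _ => (hasDerivAt_expITaylorRemainder_succ n y).hasDerivWithinAt)
      (by simp [expITaylorRemainder, Finset.sum_range_succ']) hpow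
      (fun y hy => by simpa using ih y hy.1) (Set.right_mem_Icc.2 hx)

lemma expITaylorRemainder_neg (n : ℕ) (x : ℝ) :
    expITaylorRemainder n (-x) = starRingEnd ℂ (expITaylorRemainder n x) := by
  simp [expITaylorRemainder, ← Complex.exp_conj]

lemma norm_expITaylorRemainder_le (n : ℕ) (x : ℝ) :
    ‖expITaylorRemainder n x‖ ≤ |x| ^ n / n.factorial := by
  rcases abs_cases x with ⟨h, hx⟩ | ⟨h, hx⟩ <;> rw [h]
  · exact norm_expITaylorRemainder_le_of_nonneg n x hx
  · rw [← RCLike.norm_conj, ← expITaylorRemainder_neg]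
    exact norm_expITaylorRemainder_le_of_nonneg n (-x) (neg_nonneg.2 hx.le)

variable {Ω : Type*} [MeasurableSpace Ω] {μ : Measure Ω} [IsProbabilityMeasure μ] {X : Ω → ℝ}
  {B : ℝ}

lemma integrable_cexp_mul_I (hX : Measurable X) :
    Integrable (fun ω => Complex.exp (X ω * Complex.I)) μ :=
  Integrable.of_bound (by fun_prop) 1 <| ae_of_all _ fun ω =>
    (Complex.norm_exp_ofReal_mul_I _).le

lemma norm_integral_cexp_mul_I_le_one (X : Ω → ℝ) :
    ‖∫ ω, Complex.exp (X ω * Complex.I) ∂μ‖ ≤ 1 :=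
  (norm_integral_le_of_norm_le_const (C := 1)
    (ae_of_all _ fun ω => (Complex.norm_exp_ofReal_mul_I _).le)).trans (by simp)

lemma integral_expITaylorRemainder (hX : Measurable X) (hB : ∀ ω, |X ω| ≤ B) (n : ℕ) :
    ∫ ω, expITaylorRemainder n (X ω) ∂μ = ∫ ω, Complex.exp (X ω * Complex.I) ∂μ -
      ∑ m ∈ Finset.range n, Complex.I ^ m / m.factorial * ((∫ ω, X ω ^ m ∂μ : ℝ) : ℂ) := by
  have hterm : ∀ m : ℕ, (fun ω => (X ω * Complex.I) ^ m / m.factorial) =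
      fun ω => Complex.I ^ m / m.factorial * ((X ω ^ m : ℝ) : ℂ) := fun m => by
    ext ω
    push_cast
    ring
  have hint : ∀ m : ℕ, Integrable (fun ω => (X ω * Complex.I) ^ m / m.factorial) μ := fun m => by
    rw [hterm]
    exact (integrable_pow_of_abs_le hX hB m).ofReal.const_mul _
  simp_rw [expITaylorRemainder]
  rw [integral_sub (integrable_cexp_mul_I hX) (integrable_finsetSum _ fun m _ => hint m),
    integral_finsetSum _ fun m _ => hint m]
  simp_rw [hterm, integral_const_mul, integral_complex_ofReal]

lemma norm_integral_expITaylorRemainder_le (hX : Measurable X) (hB : ∀ ω, |X ω| ≤ B) (n : ℕ) :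
    ‖∫ ω, expITaylorRemainder n (X ω) ∂μ‖ ≤ (∫ ω, |X ω| ^ n ∂μ) / n.factorial := by
  rw [← integral_div]
  exact norm_integral_le_of_norm_le
    ((integrable_pow_of_abs_le hX.abs (fun ω => (abs_abs _).trans_le (hB ω)) n).div_const _)
    (ae_of_all _ fun ω => norm_expITaylorRemainder_le n (X ω))

lemma norm_integral_cexp_sub_le_of_moments_eq {Ω' : Type*} [MeasurableSpace Ω'] {μ' : Measure Ω'}
    [IsProbabilityMeasure μ'] {Y : Ω' → ℝ} {B' : ℝ} (hX : Measurable X) (hB : ∀ ω, |X ω| ≤ B)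
    (hY : Measurable Y) (hB' : ∀ ω, |Y ω| ≤ B') {p : ℕ}
    (hmom : ∀ m ≤ 2 * p, ∫ ω, X ω ^ m ∂μ = ∫ ω, Y ω ^ m ∂μ') :
    ‖∫ ω, Complex.exp (X ω * Complex.I) ∂μ - ∫ ω, Complex.exp (Y ω * Complex.I) ∂μ'‖ ≤
      2 * (∫ ω, Y ω ^ (2 * p) ∂μ') / (2 * p).factorial := by
  have hdiff : ∫ ω, Complex.exp (X ω * Complex.I) ∂μ - ∫ ω, Complex.exp (Y ω * Complex.I) ∂μ' =
      ∫ ω, expITaylorRemainder (2 * p) (X ω) ∂μ -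
        ∫ ω, expITaylorRemainder (2 * p) (Y ω) ∂μ' := by
    rw [integral_expITaylorRemainder hX hB, integral_expITaylorRemainder hY hB',
      Finset.sum_congr rfl fun m hm => by rw [hmom m (Finset.mem_range.1 hm).le]]
    ring
  have hXrem := norm_integral_expITaylorRemainder_le (μ := μ) hX hB (2 * p)
  have hYrem := norm_integral_expITaylorRemainder_le (μ := μ') hY hB' (2 * p)
  simp_rw [(even_two_mul p).pow_abs] at hXrem hYrem
  rw [hmom _ le_rfl] at hXrem
  rw [hdiff]
  exact (norm_sub_le_of_le hXrem hYrem).trans_eq (by ring)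

lemma norm_prod_sub_prod_le {ι R : Type*} [NormedCommRing R] [NormOneClass R] (s : Finset ι)
    {a b : ι → R} (ha : ∀ k ∈ s, ‖a k‖ ≤ 1) (hb : ∀ k ∈ s, ‖b k‖ ≤ 1) :
    ‖∏ k ∈ s, a k - ∏ k ∈ s, b k‖ ≤ ∑ k ∈ s, ‖a k - b k‖ := by
  induction s using Finset.cons_induction with
  | empty => simp
  | cons i s hi ih =>
    rw [Finset.forall_mem_cons] at ha hb
    rw [Finset.prod_cons, Finset.prod_cons, Finset.sum_cons]
    have hsplit : a i * ∏ k ∈ s, a k - b i * ∏ k ∈ s, b k =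
        (a i - b i) * ∏ k ∈ s, a k + b i * (∏ k ∈ s, a k - ∏ k ∈ s, b k) := by ring
    rw [hsplit]
    refine norm_add_le_of_le ((norm_mul_le _ _).trans ?_) ((norm_mul_le _ _).trans ?_)
    · exact mul_le_of_le_one_right (norm_nonneg _) ((Finset.norm_prod_le _ _).trans
        (Finset.prod_le_one (fun _ _ => norm_nonneg _) ha.2))
    · exact (mul_le_of_le_one_left (norm_nonneg _) hb.1).trans (ih ha.2 hb.2)

lemma norm_integral_cexp_sub_exp_le (hX : Measurable X) (hB : ∀ ω, |X ω| ≤ B) (hB1 : B ≤ 1)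
    (h0 : ∫ ω, X ω ∂μ = 0) :
    ‖∫ ω, Complex.exp (X ω * Complex.I) ∂μ - (exp (-(∫ ω, X ω ^ 2 ∂μ) / 2) : ℝ)‖ ≤ B ^ 3 := by
  obtain ⟨v, hv⟩ : ∃ v, v = ∫ ω, X ω ^ 2 ∂μ := ⟨_, rfl⟩
  obtain ⟨ω₀⟩ := nonempty_of_isProbabilityMeasure μ
  have hB0 : 0 ≤ B := (abs_nonneg _).trans (hB ω₀)
  have hv0 : 0 ≤ v := hv ▸ integral_nonneg fun ω => sq_nonneg _
  have hvB : v ≤ B ^ 2 := by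
    simpa only [sq_abs, ← hv] using integral_abs_pow_le_of_abs_le (μ := μ) hB 2
  have hv1 : v ≤ 1 := hvB.trans (pow_le_one₀ hB0 hB1)
  have hquadratic : ‖∫ ω, Complex.exp (X ω * Complex.I) ∂μ - ((1 - v / 2 : ℝ) : ℂ)‖ ≤
      B ^ 3 / 6 := by
    have htaylor : ∫ ω, expITaylorRemainder 3 (X ω) ∂μ =
        ∫ ω, Complex.exp (X ω * Complex.I) ∂μ - ((1 - v / 2 : ℝ) : ℂ) := by
      rw [integral_expITaylorRemainder hX hB]
      simp only [Finset.sum_range_succ, Finset.sum_range_zero, pow_zero, pow_one, ← hv, h0,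
        Complex.I_sq, Nat.factorial, integral_const, probReal_univ, one_smul]
      push_cast
      ring
    rw [← htaylor]
    refine (norm_integral_expITaylorRemainder_le hX hB 3).trans ?_
    exact div_le_div_of_nonneg_right (integral_abs_pow_le_of_abs_le hB 3) (by norm_num)
  have hexp : ‖((1 - v / 2 : ℝ) : ℂ) - (exp (-v / 2) : ℝ)‖ ≤ B ^ 3 / 4 := by
    rw [← Complex.ofReal_sub, Complex.norm_real, Real.norm_eq_abs, abs_sub_comm]
    calc |exp (-v / 2) - (1 - v / 2)| = |exp (-v / 2) - 1 - -v / 2| := by ring_nf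
      _ ≤ (-v / 2) ^ 2 :=
        Real.abs_exp_sub_one_sub_id_le (abs_le.2 ⟨by linarith, by linarith⟩)
      _ = v ^ 2 / 4 := by ring
      _ ≤ (B ^ 2) ^ 2 / 4 := by gcongr
      _ ≤ B ^ 3 / 4 := by
        rw [← pow_mul]
        exact div_le_div_of_nonneg_right (pow_le_pow_of_le_one hB0 hB1 (by norm_num)) (by norm_num)
  rw [← hv]
  refine (norm_sub_le_norm_sub_add_norm_sub _ _ _).trans ((add_le_add hquadratic hexp).trans ?_)
  nlinarith [pow_nonneg hB0 3]

theorem norm_integral_cexp_sum_sub_exp_le {ι : Type*} [Fintype ι] {Y : ι → Ω → ℝ} {b : ι → ℝ}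
    (hY : iIndepFun Y μ) (hm : ∀ k, Measurable (Y k)) (hb : ∀ k ω, |Y k ω| ≤ b k)
    (hb1 : ∀ k, b k ≤ 1) (h0 : ∀ k, ∫ ω, Y k ω ∂μ = 0) :
    ‖∫ ω, Complex.exp ((∑ k, Y k ω : ℝ) * Complex.I) ∂μ -
      (exp (-(∑ k, ∫ ω, Y k ω ^ 2 ∂μ) / 2) : ℝ)‖ ≤ ∑ k, b k ^ 3 := by
  have hchar : ∫ ω, Complex.exp ((∑ k, Y k ω : ℝ) * Complex.I) ∂μ =
      ∏ k, ∫ ω, Complex.exp (Y k ω * Complex.I) ∂μ := by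
    simp_rw [Complex.ofReal_sum, Finset.sum_mul, Complex.exp_sum]
    exact (hY.comp (fun _ x => Complex.exp (x * Complex.I))
      fun _ => by fun_prop).integral_fun_prod_eq_prod_integral
        fun k => (integrable_cexp_mul_I (hm k)).aestronglyMeasurable
  have hgauss : (exp (-(∑ k, ∫ ω, Y k ω ^ 2 ∂μ) / 2) : ℝ) =
      ∏ k, ((exp (-(∫ ω, Y k ω ^ 2 ∂μ) / 2) : ℝ) : ℂ) := by
    rw [← Complex.ofReal_prod, ← Real.exp_sum, ← Finset.sum_div, Finset.sum_neg_distrib]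
  rw [hchar, hgauss]
  refine (norm_prod_sub_prod_le _ (fun k _ => norm_integral_cexp_mul_I_le_one _)
    fun k _ => ?_).trans (Finset.sum_le_sum fun k _ =>
      norm_integral_cexp_sub_exp_le (hm k) (hb k) (hb1 k) (h0 k))
  rw [Complex.norm_real, Real.norm_eq_abs, Real.abs_exp, Real.exp_le_one_iff]
  have hvar : 0 ≤ ∫ ω, Y k ω ^ 2 ∂μ := integral_nonneg fun ω => sq_nonneg _
  linarith

end CharFun

/-! ### The independent model -/

section Probability

variable {Ω : Type*} [MeasurableSpace Ω] {μ : Measure Ω}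

lemma ae_eventually_notMem_of_summable [IsFiniteMeasure μ] {E : ℕ → Set Ω} {a : ℕ → ℝ}
    (ha : Summable a) (hE : ∀ᶠ Q in atTop, μ.real (E Q) ≤ a Q) :
    ∀ᵐ ω ∂μ, ∀ᶠ Q in atTop, ω ∉ E Q := by
  obtain ⟨Q₀, hQ₀⟩ := eventually_atTop.1 hE
  have hshift : ∀ᵐ ω ∂μ, ∀ᶠ Q in atTop, ω ∉ E (Q + Q₀) := by
    refine ae_eventually_notMem (ne_top_of_le_ne_top
      ((summable_nat_add_iff Q₀).2 ha).tsum_ofReal_ne_top (ENNReal.tsum_le_tsum fun Q => ?_))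
    rw [← ofReal_measureReal]
    exact ENNReal.ofReal_le_ofReal (hQ₀ _ (Nat.le_add_left _ _))
  filter_upwards [hshift] with ω hω
  rwa [← map_add_atTop_eq_nat Q₀, eventually_map]

lemma measureReal_ge_le_div {g : Ω → ℝ} (hg0 : 0 ≤ g) (hg : Integrable g μ) {t b : ℝ}
    (ht : 0 < t) (hb : ∫ ω, g ω ∂μ ≤ b) : μ.real {ω | t ≤ g ω} ≤ b / t := by
  rw [le_div_iff₀' ht]
  exact (mul_meas_ge_le_integral_of_nonneg (ae_of_all μ hg0) hg t).trans hb

lemma integral_abs_le_sqrt_integral_sq [IsProbabilityMeasure μ] {g : Ω → ℝ} (hg : MemLp g 2 μ) :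
    ∫ ω, |g ω| ∂μ ≤ √(∫ ω, g ω ^ 2 ∂μ) := by
  refine Real.le_sqrt_of_sq_le (sub_nonneg.1 ?_)
  simpa [variance_eq_sub hg.abs] using variance_nonneg |g| μ

end Probability

section Dilates

variable {g : ℝ → ℝ} {m : ℕ}

lemma integrable_uniform01_iff : Integrable g uniform01 ↔ IntervalIntegrable g volume 0 1 :=
  (intervalIntegrable_iff_integrableOn_Ioc_of_le zero_le_one).symm

lemma integrable_comp_natCast_mul_uniform01 (hg_per : Function.Periodic g 1)
    (hg : Integrable g uniform01) : Integrable (fun x => g (m * x)) uniform01 := by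
  rw [integrable_uniform01_iff] at hg ⊢
  rcases eq_or_ne m 0 with rfl | hm
  · simp
  · have hm' : (m : ℝ) ≠ 0 := Nat.cast_ne_zero.2 hm
    simpa [hm'] using (hg_per.intervalIntegrable₀ one_ne_zero hg 0 m).comp_mul_left (c := (m : ℝ))

lemma integral_comp_natCast_mul_uniform01 (hg_per : Function.Periodic g 1)
    (hg : Integrable g uniform01) (hm : m ≠ 0) :
    ∫ x, g (m * x) ∂uniform01 = ∫ x, g x ∂uniform01 := by
  have hperiods := hg_per.intervalIntegral_add_zsmul_eq m 0
    (hg_per.intervalIntegrable₀ one_ne_zero (integrable_uniform01_iff.1 hg))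
  simp only [zsmul_eq_mul, zero_add, mul_one, Int.cast_natCast] at hperiods
  have hm' : (m : ℝ) ≠ 0 := Nat.cast_ne_zero.2 hm
  rw [integral_uniform01, integral_uniform01, intervalIntegral.integral_comp_mul_left _ hm',
    mul_zero, mul_one, hperiods, smul_eq_mul, inv_mul_cancel_left₀ hm']

end Dilates

lemma eventually_mul_one_add_pow_le (A : ℝ) (k : ℕ) {r : ℝ} (hr : 1 < r) :
    ∀ᶠ Q : ℕ in atTop, A * (1 + Q) ^ k ≤ r ^ Q := by
  filter_upwards [(isLittleO_pow_const_const_pow_of_one_lt (R := ℝ) k hr).def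
    (show 0 < 1 / ((|A| + 1) * 2 ^ k) by positivity), eventually_ge_atTop 1] with Q hQ hQ1
  have hQ1' : (1:ℝ) ≤ Q := by exact_mod_cast hQ1
  have hr0 : 0 < r := one_pos.trans hr
  rw [Real.norm_of_nonneg (by positivity), Real.norm_of_nonneg (by positivity),
    one_div_mul_eq_div, le_div_iff₀ (by positivity)] at hQ
  calc A * (1 + Q) ^ k ≤ (|A| + 1) * (2 * Q) ^ k := by
        gcongr
        · linarith [le_abs_self A]
        · linarith
    _ = Q ^ k * ((|A| + 1) * 2 ^ k) := by ring
    _ ≤ r ^ Q := hQ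

lemma eventually_le_log_natCast (A : ℝ) : ∀ᶠ Q : ℕ in atTop, A ≤ log Q :=
  (Real.tendsto_log_atTop.comp tendsto_natCast_atTop_atTop).eventually_ge_atTop A

lemma eventually_mul_log_le_two_pow (D : ℝ) : ∀ᶠ Q : ℕ in atTop, D * log Q ≤ 2 ^ Q := by
  filter_upwards [eventually_mul_one_add_pow_le |D| 1 one_lt_two] with Q hQ
  have hlog : log (Q:ℝ) ≤ 1 + Q := (Real.log_le_self Q.cast_nonneg).trans (by linarith)
  refine le_trans ?_ hQ
  rw [pow_one]
  gcongr
  exact le_abs_self D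

lemma eventually_mul_log_le_of_log_rpow_le {ω : ℕ → ℝ} {α : ℝ} (hα : 0 < α) {k₀ : ℕ}
    (hω : ∀ k : ℕ, k₀ ≤ k → log k ^ α ≤ ω k) (D : ℝ) :
    ∀ᶠ Q : ℕ in atTop, D * log Q ≤ ω (2 ^ Q) := by
  have hlog2 := Real.log_pos one_lt_two
  filter_upwards [tendsto_natCast_atTop_atTop.eventually ((isLittleO_log_rpow_atTop hα).def
    (show 0 < log 2 ^ α / (|D| + 1) by positivity)), eventually_ge_atTop k₀] with Q hQ hQk
  have hlogQ := Real.log_natCast_nonneg Q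
  rw [Real.norm_of_nonneg hlogQ, Real.norm_of_nonneg (by positivity), div_mul_eq_mul_div,
    le_div_iff₀' (by positivity)] at hQ
  calc D * log Q ≤ (|D| + 1) * log Q := by gcongr; linarith [le_abs_self D]
    _ ≤ log 2 ^ α * (Q:ℝ) ^ α := hQ
    _ = log ((2 ^ Q : ℕ) : ℝ) ^ α := by
        rw [← Real.mul_rpow hlog2.le Q.cast_nonneg, mul_comm, ← Real.log_pow]
        push_cast
        rfl
    _ ≤ ω (2 ^ Q) := hω _ (hQk.trans Nat.lt_two_pow_self.le)

/-- All that the probabilistic part of the argument needs to know about `f` and `n`: bounded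
approximations `T Q` of `f`, precise enough for partial sums of length `2 ^ (12 * Q)`, together
with sets of good indices, missing at most `2 ^ Q` indices, along which the moments of
`∑ c k * T Q (n k * x)` of order `O(log Q)` are those of independent copies of `T Q`. -/
structure IndepModel (n : ℕ → ℕ) (f : ℝ → ℝ) where
  /-- The approximation at scale `Q`. -/
  T : ℕ → ℝ → ℝ
  /-- The constant in the uniform bound. -/
  C : ℝ
  /-- The indices kept at scale `Q`. -/
  good : ℕ → ℕ → Prop
  measurable_T : ∀ Q, Measurable (T Q)
  abs_T_le : ∀ Q x, |T Q x| ≤ C * (1 + Q)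
  integral_T : ∀ Q, ∫ x, T Q x ∂uniform01 = 0
  integral_sq_T_le : ∀ Q, ∫ x, T Q x ^ 2 ∂uniform01 ≤ ∫ x, f x ^ 2 ∂uniform01
  tendsto_integral_sq_T :
    Tendsto (fun Q => ∫ x, T Q x ^ 2 ∂uniform01) atTop (𝓝 (∫ x, f x ^ 2 ∂uniform01))
  card_le_of_not_good : ∀ Q (s : Finset ℕ), (∀ k ∈ s, ¬ good Q k) → s.card ≤ 2 ^ Q
  ae_eventually_error_le : ∀ᵐ x ∂uniform01, ∀ᶠ Q in atTop,
    ∑ k ∈ Finset.range (2 ^ (12 * Q)), |f (n k * x) - T Q (n k * x)| ≤ 1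
  eventually_moment_eq : ∀ D : ℝ, ∀ᶠ Q : ℕ in atTop, ∀ m : ℕ, (m : ℝ) ≤ D * log Q →
    ∀ I : Finset ℕ, (∀ k ∈ I, good Q k) → ∀ c : ℕ → ℝ,
    ∫ x, (∑ k ∈ I, c k * T Q (n k * x)) ^ m ∂uniform01 =
      ∫ u, (∑ k : I, c k * T Q (u k)) ^ m ∂Measure.pi fun _ : I => uniform01

section FourierModel

variable {n : ℕ → ℕ} {f : ℝ → ℝ} {V : ℝ}

lemma FourierDecay.abs_fourierPartialSum_two_pow_le (hf : FourierDecay f V) (Q : ℕ) (x : ℝ) :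
    |fourierPartialSum f (2 ^ (40 * Q)) x| ≤ 80 * V * (1 + Q) := by
  refine (hf.abs_fourierPartialSum_le _ x).trans ?_
  have hlog : log ((2 ^ (40 * Q) : ℕ) : ℝ) ≤ 40 * Q := by
    push_cast
    rw [Real.log_pow]
    push_cast
    exact mul_le_of_le_one_right (by positivity) (Real.log_two_lt_d9.le.trans (by norm_num))
  nlinarith [hf.nonneg, (Q.cast_nonneg : (0:ℝ) ≤ Q)]

lemma FourierDecay.tendsto_integral_sq_fourierPartialSum (hf : FourierDecay f V)
    (hf2 : MemLp f 2 uniform01) :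
    Tendsto (fun R => ∫ x, fourierPartialSum f R x ^ 2 ∂uniform01) atTop
      (𝓝 (∫ x, f x ^ 2 ∂uniform01)) := by
  have herror : Tendsto (fun R => ∫ x, (f x - fourierPartialSum f R x) ^ 2 ∂uniform01) atTop
      (𝓝 0) :=
    squeeze_zero' (Eventually.of_forall fun R => integral_nonneg fun x => sq_nonneg _)
      ((eventually_ne_atTop 0).mono fun R hR => integral_sq_sub_fourierPartialSum_le hf hf2 hR)
      (tendsto_const_div_atTop_nhds_zero_nat _)
  have hsq : ∀ R, ∫ x, fourierPartialSum f R x ^ 2 ∂uniform01 =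
      ∫ x, f x ^ 2 ∂uniform01 - ∫ x, (f x - fourierPartialSum f R x) ^ 2 ∂uniform01 := fun R => by
    rw [integral_sq_sub_fourierPartialSum hf hf2, sub_sub_cancel]
  simpa only [hsq, sub_zero] using tendsto_const_nhds.sub herror

lemma FourierDecay.integral_abs_sub_fourierPartialSum_le (hf : FourierDecay f V)
    (hf2 : MemLp f 2 uniform01) (Q : ℕ) :
    ∫ x, |f x - fourierPartialSum f (2 ^ (40 * Q)) x| ∂uniform01 ≤ 2 * V / 2 ^ (20 * Q) := by
  have hV := hf.nonneg
  refine (integral_abs_le_sqrt_integral_sq (hf2.sub (hf.memLp_fourierPartialSum _))).trans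
    (Real.sqrt_le_iff.2 ⟨by positivity, ?_⟩)
  refine (integral_sq_sub_fourierPartialSum_le hf hf2 (by positivity)).trans ?_
  rw [div_pow, ← pow_mul, mul_right_comm 20 Q 2]
  push_cast
  gcongr
  nlinarith [sq_nonneg V]

lemma FourierDecay.ae_eventually_sum_abs_sub_fourierPartialSum_le (hf : FourierDecay f V)
    (hf2 : MemLp f 2 uniform01) (hf_per : Function.Periodic f 1) (hn : ∀ k, 0 < n k) :
    ∀ᵐ x ∂uniform01, ∀ᶠ Q in atTop, ∑ k ∈ Finset.range (2 ^ (12 * Q)),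
      |f (n k * x) - fourierPartialSum f (2 ^ (40 * Q)) (n k * x)| ≤ 1 := by
  have hV := hf.nonneg
  obtain ⟨g, hg⟩ : ∃ g : ℕ → ℝ → ℝ, ∀ Q x,
    g Q x = |f x - fourierPartialSum f (2 ^ (40 * Q)) x| := ⟨_, fun _ _ => rfl⟩
  have hg_per : ∀ Q, Function.Periodic (g Q) 1 := fun Q x => by
    rw [hg, hg, hf_per, periodic_fourierPartialSum]
  have hg_int : ∀ Q, Integrable (g Q) uniform01 := fun Q => by
    simp_rw [funext (hg Q)]
    exact ((hf2.sub (hf.memLp_fourierPartialSum _)).integrable one_le_two).abs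
  have hg_dilate : ∀ Q k, Integrable (fun x => g Q (n k * x)) uniform01 := fun Q k =>
    integrable_comp_natCast_mul_uniform01 (hg_per Q) (hg_int Q)
  have hg_sum : ∀ Q, ∫ x, ∑ k ∈ Finset.range (2 ^ (12 * Q)), g Q (n k * x) ∂uniform01 ≤
      2 * V * (1 / 2) ^ Q := fun Q => by
    rw [integral_finsetSum _ fun k _ => hg_dilate Q k]
    simp_rw [integral_comp_natCast_mul_uniform01 (hg_per Q) (hg_int Q) (hn _).ne', hg,
      Finset.sum_const, Finset.card_range, nsmul_eq_mul]
    push_cast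
    calc _ ≤ 2 ^ (12 * Q) * (2 * V / 2 ^ (20 * Q)) := by
          gcongr
          exact hf.integral_abs_sub_fourierPartialSum_le hf2 Q
      _ = 2 * V * (1 / 2) ^ (8 * Q) := by
          rw [show 20 * Q = 12 * Q + 8 * Q by ring, pow_add, one_div_pow]
          field_simp
      _ ≤ 2 * V * (1 / 2) ^ Q := by
          gcongr _ * ?_
          exact pow_le_pow_of_le_one (by norm_num) (by norm_num) (by omega)
  simp_rw [← hg]
  filter_upwards [ae_eventually_notMem_of_summable
    ((summable_geometric_of_lt_one (by norm_num) one_half_lt_one).mul_left (2 * V))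
    (Eventually.of_forall fun Q => (measureReal_ge_le_div
      (fun x => Finset.sum_nonneg fun k _ => (abs_nonneg _).trans_eq (hg _ _).symm)
      (integrable_finsetSum _ fun k _ => hg_dilate Q k) one_pos (hg_sum Q)).trans_eq
        (div_one _))] with x hx
  exact hx.mono fun Q hQ => (not_le.1 hQ).le

lemma eventually_integral_pow_fourierPartialSum_eq {ω : ℕ → ℝ} {N₀ : ℕ}
    (hA : CondAWith ω n N₀) (hn : ∀ k, 0 < n k) {α : ℝ} (hα : 0 < α) {k₀ : ℕ}
    (hω : ∀ k : ℕ, k₀ ≤ k → log k ^ α ≤ ω k) (f : ℝ → ℝ) (D : ℝ) :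
    ∀ᶠ Q : ℕ in atTop, ∀ m : ℕ, (m : ℝ) ≤ D * log Q →
      ∀ I : Finset ℕ, (∀ k ∈ I, ¬ AmongSmallest n (2 ^ Q) k) → ∀ c : ℕ → ℝ,
      ∫ x, (∑ k ∈ I, c k * fourierPartialSum f (2 ^ (40 * Q)) (n k * x)) ^ m ∂uniform01 =
        ∫ u, (∑ k : I, c k * fourierPartialSum f (2 ^ (40 * Q)) (u k)) ^ m
          ∂Measure.pi fun _ : I => uniform01 := by
  filter_upwards [eventually_mul_log_le_of_log_rpow_le hα hω D, eventually_mul_log_le_two_pow D,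
    eventually_mul_log_le_of_log_rpow_le hα hω 1, eventually_le_log_natCast 41,
    (tendsto_pow_atTop_atTop_of_one_lt one_lt_two).eventually_ge_atTop N₀]
    with Q hmω hm2 hlogω hlog hN m hm I hI c
  have hcoeff : (m * (2 ^ (40 * Q) : ℕ) : ℝ) ≤ ((2 ^ Q : ℕ) : ℝ) ^ ω (2 ^ Q) := by
    push_cast
    calc (m : ℝ) * 2 ^ (40 * Q) ≤ 2 ^ Q * 2 ^ (40 * Q) := by gcongr; exact hm.trans hm2
      _ = ((2:ℝ) ^ Q) ^ (41:ℝ) := by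
          rw [← pow_add, ← Nat.cast_ofNat (n := 41), Real.rpow_natCast, ← pow_mul]
          ring_nf
      _ ≤ (2 ^ Q) ^ ω (2 ^ Q) :=
          Real.rpow_le_rpow_of_exponent_le (one_le_pow₀ one_le_two) (by linarith)
  refine (integral_congr_ae (ae_of_all _ fun x => ?_)).trans
    ((onlyTrivialRelations_of_condAWith hA hn hN hI (hm.trans hmω) hcoeff).integral_pow_dilates_eq
      (ofReal_fourierPartialSum f _) fun k => c k)
  exact congrArg (· ^ m)
    (Finset.sum_coe_sort I fun k => c k * fourierPartialSum f (2 ^ (40 * Q)) (n k * x)).symm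

/-- The independent model given by Fourier partial sums of degree `2 ^ (40 * Q)`, the good indices
being those outside the `2 ^ Q` smallest elements of the sequence. Condition `A_ω` with `N = 2 ^ Q`
then excludes the relations that would make a moment of order `m ≤ D log Q` differ from the
independent one: their coefficients are at most `m * 2 ^ (40 * Q) ≤ N ^ 41 ≤ N ^ ω N`. -/
def FourierDecay.indepModel (hf : FourierDecay f V) (hf2 : MemLp f 2 uniform01)
    (hf_per : Function.Periodic f 1) (hn : ∀ k, 0 < n k) (hn_inj : Function.Injective n)
    {ω : ℕ → ℝ} (hA : CondA ω n) {α : ℝ} (hα : 0 < α) {k₀ : ℕ}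
    (hω : ∀ k : ℕ, k₀ ≤ k → log k ^ α ≤ ω k) : IndepModel n f where
  T Q := fourierPartialSum f (2 ^ (40 * Q))
  C := 80 * V
  good Q k := ¬ AmongSmallest n (2 ^ Q) k
  measurable_T Q := (continuous_fourierPartialSum f _).measurable
  abs_T_le := hf.abs_fourierPartialSum_two_pow_le
  integral_T Q := hf.integral_fourierPartialSum _
  integral_sq_T_le Q := integral_sq_fourierPartialSum_le hf hf2 _
  tendsto_integral_sq_T := (hf.tendsto_integral_sq_fourierPartialSum hf2).comp <|
    (tendsto_pow_atTop_atTop_of_one_lt one_lt_two).comp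
      (tendsto_id.const_mul_atTop' (show 0 < 40 by norm_num))
  card_le_of_not_good Q s hs := card_le_of_amongSmallest hn_inj fun k hk => not_not.1 (hs k hk)
  ae_eventually_error_le := hf.ae_eventually_sum_abs_sub_fourierPartialSum_le hf2 hf_per hn
  eventually_moment_eq := by
    obtain ⟨N₀, hA⟩ := hA
    exact eventually_integral_pow_fourierPartialSum_eq hA hn hα hω f

end FourierModel

/-! ### Moments and characteristic functions of weighted sums -/

variable {n : ℕ → ℕ} {f : ℝ → ℝ}

section ModelSum

variable {ι : Type*} [Fintype ι] {T : ℝ → ℝ} {c : ι → ℝ}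

lemma iIndepFun_mul_eval (hT : Measurable T) :
    iIndepFun (fun k (u : ι → ℝ) => c k * T (u k)) (Measure.pi fun _ => uniform01) :=
  iIndepFun_pi (X := fun k x => c k * T x) fun _ => (hT.const_mul _).aemeasurable

lemma integral_mul_eval (hT : Measurable T) (k : ι) :
    ∫ u : ι → ℝ, c k * T (u k) ∂Measure.pi (fun _ => uniform01) =
      c k * ∫ x, T x ∂uniform01 := by
  rw [integral_const_mul, integral_comp_eval (μ := fun _ : ι => uniform01) (f := T)
    hT.aestronglyMeasurable]

lemma integral_sq_mul_eval (hT : Measurable T) (k : ι) :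
    ∫ u : ι → ℝ, (c k * T (u k)) ^ 2 ∂Measure.pi (fun _ => uniform01) =
      c k ^ 2 * ∫ x, T x ^ 2 ∂uniform01 := by
  simp_rw [mul_pow]
  rw [integral_const_mul, integral_comp_eval (μ := fun _ : ι => uniform01) (f := fun x => T x ^ 2)
    (hT.pow_const 2).aestronglyMeasurable]

end ModelSum

namespace IndepModel

/-- The weighted sum of the approximations at scale `Q` along the dilates `n k * x`, `k ∈ I`. -/
def dilateSum (M : IndepModel n f) (Q : ℕ) (I : Finset ℕ) (c : ℕ → ℝ) (x : ℝ) : ℝ :=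
  ∑ k ∈ I, c k * M.T Q (n k * x)

/-- The counterpart of `dilateSum` in which the dilates are replaced by independent variables. -/
def modelSum (M : IndepModel n f) (Q : ℕ) (I : Finset ℕ) (c : ℕ → ℝ) (u : I → ℝ) : ℝ :=
  ∑ k : I, c k * M.T Q (u k)

variable (M : IndepModel n f)

lemma C_nonneg : 0 ≤ M.C := by
  simpa using (abs_nonneg _).trans (M.abs_T_le 0 0)

lemma bound_nonneg (Q : ℕ) : 0 ≤ M.C * (1 + Q) :=
  mul_nonneg M.C_nonneg (by positivity)

lemma measurable_dilateSum (Q : ℕ) (I : Finset ℕ) (c : ℕ → ℝ) :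
    Measurable (M.dilateSum Q I c) :=
  Finset.measurable_fun_sum _ fun k _ =>
    ((M.measurable_T Q).comp (measurable_const_mul (n k : ℝ))).const_mul _

lemma abs_dilateSum_le (Q : ℕ) (I : Finset ℕ) (c : ℕ → ℝ) (x : ℝ) :
    |M.dilateSum Q I c x| ≤ (∑ k ∈ I, |c k|) * (M.C * (1 + Q)) := by
  rw [dilateSum, Finset.sum_mul]
  refine (Finset.abs_sum_le_sum_abs _ _).trans (Finset.sum_le_sum fun k _ => ?_)
  rw [abs_mul]
  exact mul_le_mul_of_nonneg_left (M.abs_T_le Q _) (abs_nonneg _)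

lemma measurable_modelSum (Q : ℕ) (I : Finset ℕ) (c : ℕ → ℝ) :
    Measurable (M.modelSum Q I c) :=
  Finset.measurable_fun_sum _ fun k _ =>
    ((M.measurable_T Q).comp (measurable_pi_apply k)).const_mul _

lemma abs_modelSum_le (Q : ℕ) (I : Finset ℕ) (c : ℕ → ℝ) (u : I → ℝ) :
    |M.modelSum Q I c u| ≤ ∑ k : I, |c k| * (M.C * (1 + Q)) := by
  refine (Finset.abs_sum_le_sum_abs _ _).trans (Finset.sum_le_sum fun k _ => ?_)
  rw [abs_mul]
  exact mul_le_mul_of_nonneg_left (M.abs_T_le Q _) (abs_nonneg _)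

lemma sum_integral_sq_eq (Q : ℕ) (I : Finset ℕ) (c : ℕ → ℝ) :
    ∑ k : I, ∫ u : I → ℝ, (c k * M.T Q (u k)) ^ 2 ∂Measure.pi (fun _ => uniform01) =
      (∑ k ∈ I, c k ^ 2) * ∫ x, M.T Q x ^ 2 ∂uniform01 := by
  rw [Finset.sum_mul, ← Finset.sum_coe_sort I]
  exact Finset.sum_congr rfl fun k _ =>
    integral_sq_mul_eval (c := fun k : I => c k) (M.measurable_T Q) k

lemma eventually_mul_log_mul_sq_le (D : ℝ) {δ : ℝ} (hδ : 0 < δ) :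
    ∀ᶠ Q : ℕ in atTop, D * log Q * (M.C * (1 + Q)) ^ 2 ≤ δ * 2 ^ Q := by
  filter_upwards [eventually_mul_one_add_pow_le (|D| * M.C ^ 2 / δ) 3 one_lt_two] with Q hQ
  rw [div_mul_eq_mul_div, div_le_iff₀' hδ] at hQ
  have hlog : log (Q:ℝ) ≤ 1 + Q := (Real.log_le_self Q.cast_nonneg).trans (by linarith)
  calc D * log Q * (M.C * (1 + Q)) ^ 2 ≤ |D| * (1 + Q) * (M.C * (1 + Q)) ^ 2 := by
        gcongr
        exact le_abs_self D
    _ = |D| * M.C ^ 2 * (1 + Q) ^ 3 := by ring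
    _ ≤ _ := hQ

theorem eventually_integral_modelSum_pow_le (D : ℝ) {s : ℝ}
    (hs : ∫ x, f x ^ 2 ∂uniform01 < s) :
    ∀ᶠ Q : ℕ in atTop, ∀ p : ℕ, p ≠ 0 → p ≤ D * log Q → ∀ (I : Finset ℕ) (c : ℕ → ℝ) (V : ℝ),
      0 < V → ∑ k ∈ I, c k ^ 2 ≤ V → (∀ k ∈ I, c k ^ 2 * 2 ^ Q ≤ V) →
      ∫ u, M.modelSum Q I c u ^ (2 * p) ∂Measure.pi (fun _ => uniform01) ≤
        2 * (2 * p * (s * V)) ^ p * exp (-p) := by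
  obtain ⟨v, hv⟩ : ∃ v, v = ∫ x, f x ^ 2 ∂uniform01 := ⟨_, rfl⟩
  rw [← hv] at hs
  have hv0 : 0 ≤ v := hv ▸ integral_nonneg fun x => sq_nonneg _
  have hs0 : 0 < s := hv0.trans_lt hs
  obtain ⟨ε, hε0, hε1, hεs⟩ : ∃ ε : ℝ, 0 < ε ∧ ε ≤ 1 ∧ (1 + ε) * v ≤ s := by
    refine ⟨min 1 ((s - v) / (v + 1)), lt_min one_pos (by have := sub_pos.2 hs; positivity),
      min_le_left _ _, ?_⟩
    have hmin := min_le_right 1 ((s - v) / (v + 1))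
    rw [le_div_iff₀ (by positivity)] at hmin
    nlinarith [lt_min one_pos (div_pos (sub_pos.2 hs) (by positivity : 0 < v + 1))]
  filter_upwards [M.eventually_mul_log_mul_sq_le (2 * D) (by positivity : 0 < ε ^ 2 * s)]
    with Q hQ p hp hpD I c V hV hcV hc
  refine integral_even_pow_sum_le (B := √(V / 2 ^ Q) * (M.C * (1 + Q)))
    (iIndepFun_mul_eval (c := fun k : I => c k) (M.measurable_T Q))
    (fun k => ((M.measurable_T Q).comp (measurable_pi_apply k)).const_mul _) (fun k u => ?_)
    (fun k => ?_) hε1 (by positivity) ?_ hp ?_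
  · rw [abs_mul]
    refine mul_le_mul (Real.abs_le_sqrt ?_) (M.abs_T_le Q _) (abs_nonneg _) (Real.sqrt_nonneg _)
    rw [le_div_iff₀ (by positivity)]
    exact hc k k.2
  · rw [integral_mul_eval (c := fun k : I => c k) (M.measurable_T Q), M.integral_T, mul_zero]
  · rw [sum_integral_sq_eq]
    calc (1 + ε) * ((∑ k ∈ I, c k ^ 2) * ∫ x, M.T Q x ^ 2 ∂uniform01) ≤ (1 + ε) * (V * v) := by
          gcongr
          exact hv ▸ M.integral_sq_T_le Q
      _ = ((1 + ε) * v) * V := by ring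
      _ ≤ s * V := by gcongr
  · refine abs_le_of_sq_le_sq' ?_ hε0.le |>.2
    rw [mul_pow, mul_pow, Real.sq_sqrt (by positivity), Real.sq_sqrt (by positivity)]
    calc 2 * p / (s * V) * (V / 2 ^ Q * (M.C * (1 + Q)) ^ 2)
        = 2 * p * (M.C * (1 + Q)) ^ 2 / (s * 2 ^ Q) := by field_simp
      _ ≤ 2 * D * log Q * (M.C * (1 + Q)) ^ 2 / (s * 2 ^ Q) := by gcongr ?_ * _ / _; linarith
      _ ≤ ε ^ 2 := by
          rw [div_le_iff₀ (by positivity)]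
          linarith

end IndepModel

lemma eventually_exists_nat_mul_log_le {a b : ℝ} (ha : 0 < a) (hab : a < b) :
    ∀ᶠ Q : ℕ in atTop, ∃ p : ℕ, a * log Q ≤ p ∧ p ≤ b * log Q := by
  filter_upwards [eventually_le_log_natCast (1 / (b - a))] with Q hQ
  rw [div_le_iff₀ (sub_pos.2 hab)] at hQ
  refine ⟨⌈a * log Q⌉₊, Nat.le_ceil _, ?_⟩
  linarith [Nat.ceil_lt_add_one (mul_nonneg ha.le (Real.log_natCast_nonneg Q))]

lemma exp_neg_le_inv_rpow {Q : ℕ} (hQ : Q ≠ 0) {a p : ℝ} (h : a * log Q ≤ p) :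
    exp (-p) ≤ ((Q:ℝ) ^ a)⁻¹ := by
  rw [Real.rpow_def_of_pos (by positivity), ← Real.exp_neg, exp_le_exp]
  linarith

lemma two_mul_pow_mul_exp_neg_div_factorial_le {p : ℕ} {a : ℝ} (ha : 0 ≤ a)
    (hp : a * exp 1 ^ 2 ≤ p) :
    2 * (2 * (2 * p * a) ^ p * exp (-p)) / (2 * p).factorial ≤ 4 * exp (-p) := by
  have hfactorial : (2 * p * a) ^ p ≤ ((2 * p).factorial : ℝ) := by
    have hexp := Real.pow_div_factorial_le_exp (2 * p : ℝ) (by positivity) (2 * p)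
    rw [div_le_iff₀ (by positivity), show exp (2 * p : ℝ) = (exp 1 ^ 2) ^ p by
      rw [← pow_mul, ← Real.exp_nat_mul]; push_cast; ring_nf] at hexp
    refine le_of_mul_le_mul_left (le_trans ?_ hexp) (by positivity : 0 < (exp 1 ^ 2) ^ p)
    rw [← mul_pow, pow_mul]
    refine pow_le_pow_left₀ (by positivity) ?_ p
    nlinarith [(p.cast_nonneg : (0:ℝ) ≤ p)]
  rw [div_le_iff₀ (by positivity)]
  nlinarith [mul_le_mul_of_nonneg_right hfactorial (exp_pos (-(p:ℝ))).le]

lemma sum_abs_mul_pow_three_le {ι : Type*} (I : Finset ι) {c : ι → ℝ} {K W : ℝ} (hK : 0 ≤ K)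
    (hW : 0 < W) (hc : ∀ k ∈ I, |c k| * W ≤ 1) :
    ∑ k ∈ I, (|c k| * K) ^ 3 ≤ (∑ k ∈ I, c k ^ 2) * K ^ 3 / W := by
  rw [Finset.sum_mul, Finset.sum_div]
  refine Finset.sum_le_sum fun k hk => ?_
  rw [le_div_iff₀ hW, show (|c k| * K) ^ 3 * W = c k ^ 2 * K ^ 3 * (|c k| * W) by
    rw [← sq_abs]; ring]
  exact mul_le_of_le_one_right (by positivity) (hc k hk)

namespace IndepModel

variable (M : IndepModel n f)

/-- The smallness `|c k| ≤ 2 ^ (-Q / 2)` of the coefficients beats the polynomially large bound on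
`T Q`. -/
lemma eventually_norm_integral_cexp_modelSum_sub_le (D : ℝ) :
    ∀ᶠ Q : ℕ in atTop, ∀ (I : Finset ℕ) (c : ℕ → ℝ),
      ∑ k ∈ I, c k ^ 2 ≤ D * log Q → (∀ k ∈ I, c k ^ 2 * 2 ^ Q ≤ 1) →
      ‖∫ u, Complex.exp (M.modelSum Q I c u * Complex.I) ∂Measure.pi (fun _ => uniform01) -
        (exp (-((∑ k ∈ I, c k ^ 2) * ∫ x, M.T Q x ^ 2 ∂uniform01) / 2) : ℝ)‖ ≤
          1 / (2 * (Q:ℝ) ^ 3) := by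
  have hsqrt : 1 < √2 := Real.one_lt_sqrt_two
  filter_upwards [eventually_mul_one_add_pow_le (2 * |D| * M.C ^ 3) 7 hsqrt,
    eventually_mul_one_add_pow_le M.C 1 hsqrt, eventually_ne_atTop 0]
    with Q hpow hbound hQ I c hcD hc
  have hK := M.bound_nonneg Q
  have hcW : ∀ k ∈ I, |c k| * √2 ^ Q ≤ 1 := fun k hk => by
    refine abs_le_of_sq_le_sq' ?_ zero_le_one |>.2
    rw [mul_pow, sq_abs, ← pow_mul, mul_comm Q, pow_mul, Real.sq_sqrt zero_le_two, one_pow]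
    exact hc k hk
  have hgauss := norm_integral_cexp_sum_sub_exp_le
    (iIndepFun_mul_eval (c := fun k : I => c k) (M.measurable_T Q))
    (fun k => ((M.measurable_T Q).comp (measurable_pi_apply k)).const_mul _)
    (b := fun k : I => |c k| * (M.C * (1 + Q)))
    (fun k u => by
      rw [abs_mul]
      exact mul_le_mul_of_nonneg_left (M.abs_T_le Q _) (abs_nonneg _))
    (fun k => (mul_le_mul_of_nonneg_left (by simpa using hbound) (abs_nonneg _)).trans
      (hcW k k.2))
    (fun k => by
      rw [integral_mul_eval (c := fun k : I => c k) (M.measurable_T Q), M.integral_T, mul_zero])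
  rw [sum_integral_sq_eq, Finset.sum_coe_sort I fun k => (|c k| * (M.C * (1 + Q))) ^ 3] at hgauss
  refine hgauss.trans ((sum_abs_mul_pow_three_le I hK (by positivity) hcW).trans ?_)
  rw [div_le_div_iff₀ (by positivity) (by positivity), one_mul]
  refine le_trans ?_ hpow
  have hlog : log (Q:ℝ) ≤ 1 + Q := (Real.log_le_self Q.cast_nonneg).trans (by linarith)
  have := Real.log_natCast_nonneg Q
  have hC := M.C_nonneg
  calc (∑ k ∈ I, c k ^ 2) * (M.C * (1 + Q)) ^ 3 * (2 * (Q:ℝ) ^ 3)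
      ≤ |D| * (1 + Q) * (M.C * (1 + Q)) ^ 3 * (2 * (1 + Q) ^ 3) := by
        gcongr
        · exact hcD.trans (by gcongr; exact le_abs_self D)
        · linarith
    _ = 2 * |D| * M.C ^ 3 * (1 + Q) ^ 7 := by ring

lemma eventually_norm_integral_cexp_dilateSum_sub_modelSum_le (D : ℝ) :
    ∀ᶠ Q : ℕ in atTop, ∀ I : Finset ℕ, (∀ k ∈ I, M.good Q k) → ∀ c : ℕ → ℝ,
      ∑ k ∈ I, c k ^ 2 ≤ D * log Q → (∀ k ∈ I, c k ^ 2 * 2 ^ Q ≤ 1) →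
      ‖∫ x, Complex.exp (M.dilateSum Q I c x * Complex.I) ∂uniform01 -
        ∫ u, Complex.exp (M.modelSum Q I c u * Complex.I) ∂Measure.pi (fun _ => uniform01)‖ ≤
          1 / (2 * (Q:ℝ) ^ 3) := by
  obtain ⟨s, hs⟩ : ∃ s, ∫ x, f x ^ 2 ∂uniform01 < s := exists_gt _
  have hs0 : 0 < s := (integral_nonneg fun x => sq_nonneg _).trans_lt hs
  obtain ⟨E, hE⟩ : ∃ E, E = 4 + exp 1 ^ 2 * (s * (|D| + 1)) := ⟨_, rfl⟩
  have hE4 : 4 ≤ E := by rw [hE]; linarith [show 0 ≤ exp 1 ^ 2 * (s * (|D| + 1)) by positivity]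
  filter_upwards [eventually_exists_nat_mul_log_le (by linarith : 0 < E) (lt_add_one E),
    M.eventually_moment_eq (2 * (E + 1)), M.eventually_integral_modelSum_pow_le (E + 1) hs,
    eventually_le_log_natCast 1, eventually_ge_atTop 8]
    with Q ⟨p, hEp, hpE⟩ hmoment_eq hmoment_le hlog hQ I hI c hcD hc
  have hV : 1 ≤ (|D| + 1) * log Q := by nlinarith [abs_nonneg D]
  have hp : p ≠ 0 := by
    rintro rfl
    norm_num at hEp
    nlinarith
  have hmoment := hmoment_le p hp hpE I c ((|D| + 1) * log Q) (by linarith)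
    (hcD.trans (by gcongr; linarith [le_abs_self D])) fun k hk => (hc k hk).trans hV
  calc _ ≤ 2 * (∫ u, M.modelSum Q I c u ^ (2 * p) ∂Measure.pi (fun _ => uniform01)) /
          (2 * p).factorial :=
        norm_integral_cexp_sub_le_of_moments_eq (M.measurable_dilateSum Q I c)
          (M.abs_dilateSum_le Q I c) (M.measurable_modelSum Q I c) (M.abs_modelSum_le Q I c)
          fun m hm => hmoment_eq m (by
            have : (m:ℝ) ≤ 2 * p := by exact_mod_cast hm
            linarith) I hI c
    _ ≤ 2 * (2 * (2 * p * (s * ((|D| + 1) * log Q))) ^ p * exp (-p)) / (2 * p).factorial := by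
        gcongr
    _ ≤ 4 * exp (-p) := by
        refine two_mul_pow_mul_exp_neg_div_factorial_le (by positivity) (le_trans ?_ hEp)
        rw [hE]
        nlinarith
    _ ≤ 4 * ((Q:ℝ) ^ (4:ℝ))⁻¹ := by
        gcongr
        exact exp_neg_le_inv_rpow (by omega) (le_trans (by gcongr) hEp)
    _ ≤ 1 / (2 * (Q:ℝ) ^ 3) := by
        have hQ8 : (8:ℝ) ≤ Q := by exact_mod_cast hQ
        rw [show (Q:ℝ) ^ (4:ℝ) = (Q:ℝ) ^ 3 * Q by norm_cast, ← div_eq_mul_inv,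
          div_le_div_iff₀ (by positivity) (by positivity)]
        nlinarith [pow_pos (by positivity : (0:ℝ) < Q) 3]

theorem eventually_norm_integral_cexp_dilateSum_sub_le (D : ℝ) :
    ∀ᶠ Q : ℕ in atTop, ∀ I : Finset ℕ, (∀ k ∈ I, M.good Q k) → ∀ c : ℕ → ℝ,
      ∑ k ∈ I, c k ^ 2 ≤ D * log Q → (∀ k ∈ I, c k ^ 2 * 2 ^ Q ≤ 1) →
      ‖∫ x, Complex.exp (M.dilateSum Q I c x * Complex.I) ∂uniform01 -
        (exp (-((∑ k ∈ I, c k ^ 2) * ∫ x, M.T Q x ^ 2 ∂uniform01) / 2) : ℝ)‖ ≤ 1 / (Q:ℝ) ^ 3 := by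
  filter_upwards [M.eventually_norm_integral_cexp_dilateSum_sub_modelSum_le D,
    M.eventually_norm_integral_cexp_modelSum_sub_le D] with Q htransfer hgauss I hI c hcD hc
  calc _ ≤ 1 / (2 * (Q:ℝ) ^ 3) + 1 / (2 * (Q:ℝ) ^ 3) :=
        (norm_sub_le_norm_sub_add_norm_sub _ _ _).trans
          (add_le_add (htransfer I hI c hcD hc) (hgauss I c hcD hc))
    _ = 1 / (Q:ℝ) ^ 3 := by ring

theorem eventually_measureReal_le_abs_dilateSum_le {s : ℝ} (hs : ∫ x, f x ^ 2 ∂uniform01 < s)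
    {a D : ℝ} (ha : 0 < a) (haD : a < D) (m : ℕ) :
    ∀ᶠ Q : ℕ in atTop, ∀ I : Finset ℕ, (∀ k ∈ I, M.good Q k) → ∀ (c : ℕ → ℝ) (V : ℝ),
      0 < V → ∑ k ∈ I, c k ^ 2 ≤ V → (∀ k ∈ I, c k ^ 2 * 2 ^ Q ≤ V) → ∀ l r : ℝ, 0 < l →
      0 ≤ r → r ≤ 1 → 2 * (D * log Q) * (s * V) ≤ r * l ^ 2 →
      uniform01.real {x | l ≤ |M.dilateSum Q I c x|} ≤ 2 * r ^ m * ((Q:ℝ) ^ a)⁻¹ := by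
  have hs0 : 0 < s := (integral_nonneg fun x => sq_nonneg _).trans_lt hs
  filter_upwards [eventually_exists_nat_mul_log_le ha haD, M.eventually_moment_eq (2 * D),
    M.eventually_integral_modelSum_pow_le D hs, eventually_le_log_natCast ((m + 1) / a),
    eventually_ne_atTop 0]
    with Q ⟨p, hap, hpD⟩ hmoment_eq hmoment_le hlog hQ I hI c V hV hcV hc l r hl hr0 hr1 hlr
  have hmp : m + 1 ≤ p := by
    rw [div_le_iff₀' ha] at hlog
    exact_mod_cast hlog.trans hap
  have hmoment : ∫ x, M.dilateSum Q I c x ^ (2 * p) ∂uniform01 ≤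
      2 * (2 * p * (s * V)) ^ p * exp (-p) :=
    (hmoment_eq (2 * p) (by push_cast; linarith) I hI c).trans_le
      (hmoment_le p (by omega) hpD I c V hV hcV hc)
  calc uniform01.real {x | l ≤ |M.dilateSum Q I c x|}
      ≤ uniform01.real {x | l ^ (2 * p) ≤ M.dilateSum Q I c x ^ (2 * p)} := by
        refine measureReal_mono fun x hx => ?_
        rw [Set.mem_ofPred_eq, ← (even_two_mul p).pow_abs (M.dilateSum Q I c x)]
        exact pow_le_pow_left₀ hl.le hx _
    _ ≤ 2 * (2 * p * (s * V)) ^ p * exp (-p) / l ^ (2 * p) :=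
        measureReal_ge_le_div (fun x => (even_two_mul p).pow_nonneg _)
          (integrable_pow_of_abs_le (M.measurable_dilateSum Q I c) (M.abs_dilateSum_le Q I c) _)
          (by positivity) hmoment
    _ = 2 * (2 * p * (s * V) / l ^ 2) ^ p * exp (-p) := by rw [div_pow, pow_mul l]; ring
    _ ≤ 2 * r ^ p * exp (-p) := by
        gcongr
        rw [div_le_iff₀ (by positivity)]
        exact le_trans (by gcongr) hlr
    _ ≤ 2 * r ^ m * ((Q:ℝ) ^ a)⁻¹ := by
        gcongr ?_ * ?_ * ?_
        · exact pow_le_pow_of_le_one hr0 hr1 (by omega)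
        · exact exp_neg_le_inv_rpow hQ hap

end IndepModel

/-! ### The upper bound -/

lemma ae_eventually_forall_notMem_of_summable {Ω ι : Type*} [MeasurableSpace Ω] {μ : Measure Ω}
    [IsFiniteMeasure μ] {s : ℕ → Finset ι} {E : ℕ → ι → Set Ω} {a : ℕ → ℝ} (ha : Summable a)
    (hE : ∀ᶠ Q in atTop, ∑ i ∈ s Q, μ.real (E Q i) ≤ a Q) :
    ∀ᵐ ω ∂μ, ∀ᶠ Q in atTop, ∀ i ∈ s Q, ω ∉ E Q i := by
  filter_upwards [ae_eventually_notMem_of_summable (E := fun Q => ⋃ i ∈ s Q, E Q i) ha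
    (hE.mono fun Q hQ => (measureReal_biUnion_finset_le _ _).trans hQ)] with ω hω
  simpa only [Set.mem_iUnion₂, not_exists] using hω

namespace IndepModel

/-- The good indices in the block `[a, b)`. -/
def goodIco (M : IndepModel n f) (Q a b : ℕ) : Finset ℕ :=
  open Classical in {k ∈ Finset.Ico a b | M.good Q k}

/-- The sum of the approximations at scale `Q` over the good indices in the block `[a, b)`. -/
def blockSum (M : IndepModel n f) (Q a b : ℕ) (x : ℝ) : ℝ :=
  M.dilateSum Q (M.goodIco Q a b) 1 x

variable (M : IndepModel n f)

lemma good_of_mem_goodIco {Q a b k : ℕ} (hk : k ∈ M.goodIco Q a b) : M.good Q k := by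
  classical exact (Finset.mem_filter.1 hk).2

lemma card_goodIco_le (Q a b : ℕ) : (M.goodIco Q a b).card ≤ b - a := by
  classical exact (Finset.card_filter_le _ _).trans_eq (Nat.card_Ico a b)

lemma blockSum_eq (Q a b : ℕ) (x : ℝ) :
    M.blockSum Q a b x = ∑ k ∈ M.goodIco Q a b, M.T Q (n k * x) := by
  simp only [blockSum, dilateSum, Pi.one_apply, one_mul]

lemma blockSum_add (Q : ℕ) {a b c : ℕ} (hab : a ≤ b) (hbc : b ≤ c) (x : ℝ) :
    M.blockSum Q a b x + M.blockSum Q b c x = M.blockSum Q a c x := by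
  simp only [blockSum_eq, goodIco, Finset.sum_filter]
  exact Finset.sum_Ico_consecutive _ hab hbc

lemma abs_blockSum_le (Q a b : ℕ) (x : ℝ) :
    |M.blockSum Q a b x| ≤ (b - a : ℕ) * (M.C * (1 + Q)) := by
  refine (M.abs_dilateSum_le Q _ 1 x).trans ?_
  have hcard : ((M.goodIco Q a b).card : ℝ) ≤ (b - a : ℕ) := by
    exact_mod_cast M.card_goodIco_le Q a b
  simpa using mul_le_mul_of_nonneg_right hcard (M.bound_nonneg Q)

lemma abs_sum_sub_blockSum_le {Q N : ℕ} {x : ℝ} (hN : N ≤ 2 ^ (12 * Q))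
    (hx : ∑ k ∈ Finset.range (2 ^ (12 * Q)), |f (n k * x) - M.T Q (n k * x)| ≤ 1) :
    |∑ k ∈ Finset.range N, f (n k * x) - M.blockSum Q 0 N x| ≤ 1 + 2 ^ Q * (M.C * (1 + Q)) := by
  classical
  have hsplit : ∑ k ∈ Finset.range N, f (n k * x) - M.blockSum Q 0 N x =
      ∑ k ∈ Finset.range N, (f (n k * x) - M.T Q (n k * x)) +
        ∑ k ∈ Finset.range N with ¬ M.good Q k, M.T Q (n k * x) := by
    rw [blockSum_eq, Finset.sum_sub_distrib, ← Finset.sum_filter_add_sum_filter_not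
      (Finset.range N) (M.good Q) fun k => M.T Q (n k * x), goodIco, Finset.range_eq_Ico]
    ring
  have herror : |∑ k ∈ Finset.range N, (f (n k * x) - M.T Q (n k * x))| ≤ 1 :=
    (Finset.abs_sum_le_sum_abs _ _).trans <| hx.trans' <|
      Finset.sum_le_sum_of_subset_of_nonneg (Finset.range_mono hN) fun _ _ _ => abs_nonneg _
  have hbad : |∑ k ∈ Finset.range N with ¬ M.good Q k, M.T Q (n k * x)| ≤
      2 ^ Q * (M.C * (1 + Q)) := by
    refine (Finset.abs_sum_le_sum_abs _ _).trans ?_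
    refine (Finset.sum_le_card_nsmul _ _ _ fun k _ => M.abs_T_le Q _).trans ?_
    rw [nsmul_eq_mul]
    refine mul_le_mul_of_nonneg_right ?_ (M.bound_nonneg Q)
    exact_mod_cast M.card_le_of_not_good Q _ fun k hk => (Finset.mem_filter.1 hk).2
  rw [hsplit]
  exact (abs_add_le _ _).trans (add_le_add herror hbad)

lemma eventually_measureReal_le_abs_blockSum_le {s : ℝ} (hs : ∫ x, f x ^ 2 ∂uniform01 < s)
    {α D : ℝ} (hα : 0 < α) (hαD : α < D) (m : ℕ) :
    ∀ᶠ Q : ℕ in atTop, ∀ (a b : ℕ) (V l r : ℝ), (b - a : ℕ) ≤ V → 2 ^ Q ≤ V → 0 < l →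
      0 ≤ r → r ≤ 1 → 2 * (D * log Q) * (s * V) ≤ r * l ^ 2 →
      uniform01.real {x | l ≤ |M.blockSum Q a b x|} ≤ 2 * r ^ m * ((Q:ℝ) ^ α)⁻¹ := by
  filter_upwards [M.eventually_measureReal_le_abs_dilateSum_le hs hα hαD m]
    with Q hQ a b V l r hcard hV hl hr0 hr1 hlr
  refine hQ _ (fun k => M.good_of_mem_goodIco) 1 V (hV.trans_lt' (by positivity)) ?_ ?_ l r
    hl hr0 hr1 hlr
  · refine le_trans ?_ hcard
    simpa using M.card_goodIco_le Q a b
  · simpa using fun _ _ => hV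

lemma ae_eventually_abs_blockSum_grid_le {s D : ℝ} (hs : ∫ x, f x ^ 2 ∂uniform01 < s)
    (hD : 1 < D) (q : ℕ) :
    ∀ᵐ x ∂uniform01, ∀ᶠ Q : ℕ in atTop, ∀ i ∈ Finset.Icc 1 (2 ^ (q + 4)),
      |M.blockSum Q 0 (i * 2 ^ (4 * Q - q)) x| ≤
        √(2 * (D * log Q) * (s * (i * 2 ^ (4 * Q - q) : ℕ))) := by
  have hs0 : 0 < s := (integral_nonneg fun x => sq_nonneg _).trans_lt hs
  obtain ⟨α, hα1, hαD⟩ := exists_between hD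
  have hsum : Summable fun Q : ℕ => 2 ^ (q + 4) * (2 * ((Q:ℝ) ^ α)⁻¹) :=
    ((Real.summable_nat_rpow_inv.2 hα1).mul_left 2).mul_left _
  suffices htail : ∀ᶠ Q : ℕ in atTop, ∑ i ∈ Finset.Icc 1 (2 ^ (q + 4)), uniform01.real
      {x | √(2 * (D * log Q) * (s * (i * 2 ^ (4 * Q - q) : ℕ))) ≤
        |M.blockSum Q 0 (i * 2 ^ (4 * Q - q)) x|} ≤ 2 ^ (q + 4) * (2 * ((Q:ℝ) ^ α)⁻¹) by
    filter_upwards [ae_eventually_forall_notMem_of_summable hsum htail] with x hx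
    exact hx.mono fun Q hQ i hi => (not_le.1 (hQ i hi)).le
  filter_upwards [M.eventually_measureReal_le_abs_blockSum_le hs (one_pos.trans hα1) hαD 0,
    eventually_le_log_natCast 1, eventually_ge_atTop q] with Q hQ hlog hqQ
  refine (Finset.sum_le_card_nsmul _ _ (2 * ((Q:ℝ) ^ α)⁻¹) fun i hi => ?_).trans_eq
    (by simp [Nat.card_Icc])
  have hpow : 2 ^ Q ≤ i * 2 ^ (4 * Q - q) :=
    (Nat.pow_le_pow_right two_pos (by omega)).trans
      (Nat.le_mul_of_pos_left _ (Finset.mem_Icc.1 hi).1)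
  have hi0 : 0 < i := (Finset.mem_Icc.1 hi).1
  have htail := hQ 0 (i * 2 ^ (4 * Q - q)) (i * 2 ^ (4 * Q - q) : ℕ)
    (√(2 * (D * log Q) * (s * (i * 2 ^ (4 * Q - q) : ℕ)))) 1 (by simp)
    (by exact_mod_cast hpow) (by positivity) zero_le_one le_rfl
    (by rw [one_mul, Real.sq_sqrt (by positivity)])
  simpa only [pow_zero, mul_one] using htail

/-- The threshold on `q` makes `(3 / 4) ^ m` an admissible factor in the tail bound for every
`m > q`: `(3 / 4) * (7 / 8) ^ 2 * 2 = 147 / 128 > 1`. Its third power compensates for the number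
of blocks, since `2 * (3 / 4) ^ 3 < 1`. -/
lemma eventually_sum_measureReal_dyadic_block_le {s : ℝ} (hs : ∫ x, f x ^ 2 ∂uniform01 < s) {q : ℕ}
    (hq : 8 * s ≤ (147 / 128) ^ q) :
    ∀ᶠ Q : ℕ in atTop, ∀ m ∈ Finset.Icc (q + 1) (3 * Q),
      ∑ j ∈ Finset.range (2 ^ (m + 4)), uniform01.real {x | (7 / 8) ^ m * √(16 ^ Q * log Q) ≤
        |M.blockSum Q (j * 2 ^ (4 * Q - m)) ((j + 1) * 2 ^ (4 * Q - m)) x|} ≤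
          32 * ((Q:ℝ) ^ 3)⁻¹ := by
  filter_upwards [M.eventually_measureReal_le_abs_blockSum_le hs (by norm_num : (0:ℝ) < 3)
    (by norm_num : (3:ℝ) < 4) 3, eventually_le_log_natCast 1] with Q hQ hlog m hm
  obtain ⟨hqm, hmQ⟩ := Finset.mem_Icc.1 hm
  have hlength : (16:ℝ) ^ Q = 2 ^ m * 2 ^ (4 * Q - m) := by
    rw [← pow_add, Nat.add_sub_cancel' (by omega), pow_mul]
    norm_num
  have hratio : ((3 / 4) ^ m * ((7 / 8) ^ m) ^ 2 * 2 ^ m : ℝ) = (147 / 128) ^ m := by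
    rw [← pow_mul, mul_comm m 2, pow_mul, ← mul_pow, ← mul_pow]
    norm_num
  have hsm : 8 * s ≤ (147 / 128) ^ m :=
    hq.trans (pow_le_pow_right₀ (by norm_num) (by omega))
  have hblock : ∀ j ∈ Finset.range (2 ^ (m + 4)),
      uniform01.real {x | (7 / 8) ^ m * √(16 ^ Q * log Q) ≤
        |M.blockSum Q (j * 2 ^ (4 * Q - m)) ((j + 1) * 2 ^ (4 * Q - m)) x|} ≤
          2 * ((3 / 4) ^ m) ^ 3 * ((Q:ℝ) ^ 3)⁻¹ := fun j _ => by
    have htail := hQ (j * 2 ^ (4 * Q - m)) ((j + 1) * 2 ^ (4 * Q - m)) (2 ^ (4 * Q - m))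
      ((7 / 8) ^ m * √(16 ^ Q * log Q)) ((3 / 4) ^ m) (by simp [← Nat.sub_mul])
      (pow_le_pow_right₀ one_le_two (by omega)) (by positivity) (by positivity)
      (pow_le_one₀ (by norm_num) (by norm_num)) ?_
    · exact_mod_cast htail
    rw [mul_pow, Real.sq_sqrt (by positivity), hlength]
    calc 2 * (4 * log Q) * (s * 2 ^ (4 * Q - m)) = 8 * s * (2 ^ (4 * Q - m) * log Q) := by ring
      _ ≤ (147 / 128) ^ m * (2 ^ (4 * Q - m) * log Q) := by gcongr
      _ = (3 / 4) ^ m * (((7 / 8) ^ m) ^ 2 * (2 ^ m * 2 ^ (4 * Q - m) * log Q)) := by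
        rw [← hratio]
        ring
  calc _ ≤ 2 ^ (m + 4) * (2 * ((3 / 4) ^ m) ^ 3 * ((Q:ℝ) ^ 3)⁻¹) := by
        simpa using Finset.sum_le_card_nsmul _ _ _ hblock
    _ = 32 * (27 / 32) ^ m * ((Q:ℝ) ^ 3)⁻¹ := by
        rw [show (27 / 32 : ℝ) = 2 * (3 / 4) ^ 3 by norm_num, mul_pow, ← pow_mul, ← pow_mul,
          mul_comm m 3]
        ring
    _ ≤ 32 * 1 * ((Q:ℝ) ^ 3)⁻¹ := by
        gcongr
        exact pow_le_one₀ (by norm_num) (by norm_num)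
    _ = 32 * ((Q:ℝ) ^ 3)⁻¹ := by rw [mul_one]

lemma ae_eventually_abs_blockSum_dyadic_le {s : ℝ} (hs : ∫ x, f x ^ 2 ∂uniform01 < s) {q : ℕ}
    (hq : 8 * s ≤ (147 / 128) ^ q) :
    ∀ᵐ x ∂uniform01, ∀ᶠ Q : ℕ in atTop, ∀ m ∈ Finset.Icc (q + 1) (3 * Q),
      ∀ j ∈ Finset.range (2 ^ (m + 4)),
        |M.blockSum Q (j * 2 ^ (4 * Q - m)) ((j + 1) * 2 ^ (4 * Q - m)) x| ≤
          (7 / 8) ^ m * √(16 ^ Q * log Q) := by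
  have hsum : Summable fun Q : ℕ => 96 * ((Q:ℝ) ^ 2)⁻¹ :=
    (Real.summable_nat_pow_inv.2 one_lt_two).mul_left _
  suffices htail : ∀ᶠ Q : ℕ in atTop,
      ∑ i ∈ (Finset.Icc (q + 1) (3 * Q)).sigma fun m => Finset.range (2 ^ (m + 4)),
        uniform01.real {x | (7 / 8) ^ i.1 * √(16 ^ Q * log Q) ≤
          |M.blockSum Q (i.2 * 2 ^ (4 * Q - i.1)) ((i.2 + 1) * 2 ^ (4 * Q - i.1)) x|} ≤
        96 * ((Q:ℝ) ^ 2)⁻¹ by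
    filter_upwards [ae_eventually_forall_notMem_of_summable hsum htail] with x hx
    exact hx.mono fun Q hQ m hm j hj =>
      (not_le.1 (hQ ⟨m, j⟩ (Finset.mem_sigma.2 ⟨hm, hj⟩))).le
  filter_upwards [M.eventually_sum_measureReal_dyadic_block_le hs hq, eventually_ne_atTop 0]
    with Q hQ hQ0
  have hcard : ((Finset.Icc (q + 1) (3 * Q)).card : ℝ) ≤ 3 * Q := by
    rw [Nat.card_Icc]
    exact_mod_cast (by omega : 3 * Q + 1 - (q + 1) ≤ 3 * Q)
  rw [Finset.sum_sigma]
  refine (Finset.sum_le_card_nsmul _ _ _ hQ).trans ?_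
  rw [nsmul_eq_mul]
  calc _ ≤ (3 * Q : ℝ) * (32 * ((Q:ℝ) ^ 3)⁻¹) := by gcongr
    _ = 96 * ((Q:ℝ) ^ 2)⁻¹ := by field_simp; norm_num

end IndepModel

/-- Chaining: `N` is rounded down to multiples of smaller and smaller powers of two, and each
refinement costs at most one increment. -/
lemma abs_le_add_sum_of_dyadic_increments {g : ℕ → ℝ} {L q N : ℕ} {A : ℝ} {e : ℕ → ℝ}
    (he : ∀ m, 0 ≤ e m) (hbase : |g (N / 2 ^ (L - q) * 2 ^ (L - q))| ≤ A) {m : ℕ} (hqm : q ≤ m)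
    (hmL : m ≤ L) (hstep : ∀ i, q < i → i ≤ m → ∀ j, (j + 1) * 2 ^ (L - i) ≤ N →
      |g ((j + 1) * 2 ^ (L - i)) - g (j * 2 ^ (L - i))| ≤ e i) :
    |g (N / 2 ^ (L - m) * 2 ^ (L - m))| ≤ A + ∑ i ∈ Finset.Ico (q + 1) (m + 1), e i := by
  induction m, hqm using Nat.le_induction with
  | base => simpa using hbase
  | succ m hqm ih =>
    have ih := ih (by omega) fun i hqi him => hstep i hqi (by omega)
    rw [Finset.sum_Ico_succ_top (by omega), ← add_assoc]
    obtain ⟨d, hd⟩ : ∃ d, d = 2 ^ (L - (m + 1)) := ⟨_, rfl⟩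
    have h2d : 2 ^ (L - m) = d * 2 := by
      rw [hd, ← pow_succ]
      congr 1
      omega
    rw [h2d, ← Nat.div_div_eq_div_mul] at ih
    rw [← hd]
    obtain ⟨j, hj | hj⟩ := Nat.even_or_odd' (N / d)
    · rw [show N / d / 2 * (d * 2) = N / d * d by
        rw [hj, Nat.mul_div_cancel_left _ two_pos]; ring] at ih
      exact ih.trans (le_add_of_nonneg_right (he _))
    · rw [show N / d / 2 * (d * 2) = 2 * j * d by
        rw [show N / d / 2 = j by omega]; ring] at ih
      have hinc := hstep (m + 1) (by omega) le_rfl (2 * j)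
        (by rw [← hd, ← hj]; exact Nat.div_mul_le_self N d)
      rw [← hd] at hinc
      rw [hj]
      linarith [abs_sub_abs_le_abs_sub (g ((2 * j + 1) * d)) (g (2 * j * d))]

lemma sum_Ico_geometric_le (q m : ℕ) :
    ∑ i ∈ Finset.Ico (q + 1) m, (7 / 8 : ℝ) ^ i ≤ 7 * (7 / 8) ^ q := by
  rcases le_total (q + 1) m with h | h
  · rw [geom_sum_Ico (by norm_num) h, div_le_iff_of_neg (by norm_num), pow_succ]
    linarith [pow_pos (by norm_num : (0:ℝ) < 7 / 8) m]
  · rw [Finset.Ico_eq_empty_of_le h, Finset.sum_empty]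
    positivity

namespace IndepModel

variable (M : IndepModel n f)

lemma abs_blockSum_le_of_grid_of_dyadic {Q q N : ℕ} {x D s : ℝ} (hD : 0 ≤ D) (hs : 0 ≤ s)
    (hqQ : q ≤ Q) (hN : 16 ^ Q ≤ N) (hN' : N < 16 ^ (Q + 1))
    (hgrid : ∀ i ∈ Finset.Icc 1 (2 ^ (q + 4)), |M.blockSum Q 0 (i * 2 ^ (4 * Q - q)) x| ≤
      √(2 * (D * log Q) * (s * (i * 2 ^ (4 * Q - q) : ℕ))))
    (hdyadic : ∀ m ∈ Finset.Icc (q + 1) (3 * Q), ∀ j ∈ Finset.range (2 ^ (m + 4)),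
      |M.blockSum Q (j * 2 ^ (4 * Q - m)) ((j + 1) * 2 ^ (4 * Q - m)) x| ≤
        (7 / 8) ^ m * √(16 ^ Q * log Q)) :
    |M.blockSum Q 0 N x| ≤ √(2 * (D * log Q) * (s * N)) + 7 * (7 / 8) ^ q * √(N * log Q) +
      2 ^ Q * (M.C * (1 + Q)) := by
  have := Real.log_natCast_nonneg Q
  have h16 : ∀ r ≤ 4 * Q, 16 ^ (Q + 1) = 2 ^ (r + 4) * 2 ^ (4 * Q - r) := fun r hr => by
    rw [← pow_add, show 16 = 2 ^ 4 by norm_num, ← pow_mul]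
    congr 1
    omega
  have hindex : N / 2 ^ (4 * Q - q) ∈ Finset.Icc 1 (2 ^ (q + 4)) := by
    refine Finset.mem_Icc.2 ⟨?_, (Nat.div_lt_of_lt_mul ?_).le⟩
    · rw [Nat.one_le_div_iff (by positivity)]
      refine le_trans ?_ hN
      rw [show 16 = 2 ^ 4 by norm_num, ← pow_mul]
      exact Nat.pow_le_pow_right two_pos (by omega)
    · rw [mul_comm, ← h16 q (by omega)]
      exact hN'
  have hbase : |M.blockSum Q 0 (N / 2 ^ (4 * Q - q) * 2 ^ (4 * Q - q)) x| ≤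
      √(2 * (D * log Q) * (s * N)) := by
    refine (hgrid _ hindex).trans (Real.sqrt_le_sqrt ?_)
    gcongr
    exact Nat.div_mul_le_self N _
  have hfine := abs_le_add_sum_of_dyadic_increments (g := fun N => M.blockSum Q 0 N x)
    (L := 4 * Q) (m := 3 * Q) (e := fun m => (7 / 8) ^ m * √(16 ^ Q * log Q))
    (fun m => by positivity) hbase (by omega) (by omega) fun i hqi hi j hj => by
      have hjd : j * 2 ^ (4 * Q - i) ≤ (j + 1) * 2 ^ (4 * Q - i) := by gcongr; omega
      rw [← M.blockSum_add Q (Nat.zero_le _) hjd, add_sub_cancel_left]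
      refine hdyadic i (Finset.mem_Icc.2 ⟨hqi, hi⟩) j (Finset.mem_range.2 ?_)
      have hlt := hj.trans_lt hN'
      rw [h16 i (by omega)] at hlt
      exact (lt_add_one j).trans (lt_of_mul_lt_mul_right hlt (Nat.zero_le _))
  have hsum : ∑ i ∈ Finset.Ico (q + 1) (3 * Q + 1), (7 / 8) ^ i * √(16 ^ Q * log Q) ≤
      7 * (7 / 8) ^ q * √(N * log Q) := by
    rw [← Finset.sum_mul]
    refine mul_le_mul (sum_Ico_geometric_le q _) (Real.sqrt_le_sqrt ?_) (Real.sqrt_nonneg _)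
      (by positivity)
    gcongr
    exact_mod_cast hN
  have hlast : |M.blockSum Q (N / 2 ^ Q * 2 ^ Q) N x| ≤ 2 ^ Q * (M.C * (1 + Q)) := by
    refine (M.abs_blockSum_le Q _ _ x).trans (mul_le_mul_of_nonneg_right ?_ (M.bound_nonneg Q))
    have hmod := Nat.div_add_mod' N (2 ^ Q)
    have := Nat.mod_lt N (show 0 < 2 ^ Q by positivity)
    exact_mod_cast (by omega : N - N / 2 ^ Q * 2 ^ Q ≤ 2 ^ Q)
  rw [show 4 * Q - 3 * Q = Q by omega] at hfine
  rw [← M.blockSum_add Q (Nat.zero_le _) (Nat.div_mul_le_self N (2 ^ Q)) x]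
  exact (abs_add_le _ _).trans (add_le_add (hfine.trans (by gcongr)) hlast)

lemma eventually_two_pow_mul_le (A B : ℝ) {η : ℝ} (hη : 0 < η) :
    ∀ᶠ Q : ℕ in atTop, A + B * (2 ^ Q * (M.C * (1 + Q))) ≤ η * 4 ^ Q := by
  filter_upwards [eventually_mul_one_add_pow_le ((|A| + |B| * M.C) / η) 1 one_lt_two] with Q hQ
  have hC := M.C_nonneg
  rw [div_mul_eq_mul_div, div_le_iff₀ hη, pow_one] at hQ
  calc A + B * (2 ^ Q * (M.C * (1 + Q)))
      ≤ |A| * (2 ^ Q * (1 + Q)) + |B| * (2 ^ Q * (M.C * (1 + Q))) := by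
        gcongr
        · refine (le_abs_self A).trans (le_mul_of_one_le_right (abs_nonneg A) ?_)
          exact one_le_mul_of_one_le_of_one_le (one_le_pow₀ one_le_two) (by simp)
        · exact le_abs_self B
    _ = 2 ^ Q * ((|A| + |B| * M.C) * (1 + Q)) := by ring
    _ ≤ 2 ^ Q * (2 ^ Q * η) := by gcongr
    _ = η * 4 ^ Q := by
        rw [show (4:ℝ) = 2 * 2 by norm_num, mul_pow]
        ring

end IndepModel

lemma log_log_sixteen_le {Q N : ℕ} (hQ : Q ≠ 0) (hN : 16 ^ Q ≤ N) :
    log Q ≤ log (log N) := by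
  refine Real.log_le_log (by positivity) ?_
  have hlog16 : 1 ≤ log 16 := by
    rw [Real.le_log_iff_exp_le (by norm_num)]
    linarith [Real.exp_one_lt_d9]
  calc (Q:ℝ) ≤ Q * log 16 := le_mul_of_one_le_right (by positivity) hlog16
    _ = log ((16 ^ Q : ℕ) : ℝ) := by
        push_cast
        rw [Real.log_pow]
    _ ≤ log N := Real.log_le_log (by positivity) (by exact_mod_cast hN)

lemma four_pow_le_sqrt {Q N : ℕ} (hQ : 1 ≤ log Q) (hN : 16 ^ Q ≤ N) :
    (4:ℝ) ^ Q ≤ √(2 * N * log Q) := by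
  have hN' : (16:ℝ) ^ Q ≤ N := by exact_mod_cast hN
  refine Real.le_sqrt_of_sq_le ?_
  rw [← pow_mul, mul_comm Q 2, pow_mul]
  norm_num
  nlinarith [pow_pos (show (0:ℝ) < 16 by norm_num) Q]

lemma tendsto_natLog_atTop {b : ℕ} (hb : 1 < b) : Tendsto (Nat.log b) atTop atTop :=
  tendsto_atTop_atTop.2 fun k => ⟨b ^ k, fun _ hN => Nat.le_log_of_pow_le hb hN⟩

lemma IndepModel.abs_sum_le_of_grid_of_dyadic (M : IndepModel n f) {Q q N : ℕ} {x s t η : ℝ}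
    (hs : 0 < s) (ht : 0 ≤ t) (hη : 0 ≤ η) (hqη : 7 * (7 / 8) ^ q ≤ η) (hqQ : q < Q)
    (hlog : 1 ≤ log Q) (hsmall : 1 + 2 * (2 ^ Q * (M.C * (1 + Q))) ≤ η * 4 ^ Q)
    (hN : 16 ^ Q ≤ N) (hN' : N < 16 ^ (Q + 1))
    (herror : ∑ k ∈ Finset.range (2 ^ (12 * Q)), |f (n k * x) - M.T Q (n k * x)| ≤ 1)
    (hgrid : ∀ i ∈ Finset.Icc 1 (2 ^ (q + 4)), |M.blockSum Q 0 (i * 2 ^ (4 * Q - q)) x| ≤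
      √(2 * (t ^ 2 / s * log Q) * (s * (i * 2 ^ (4 * Q - q) : ℕ))))
    (hdyadic : ∀ m ∈ Finset.Icc (q + 1) (3 * Q), ∀ j ∈ Finset.range (2 ^ (m + 4)),
      |M.blockSum Q (j * 2 ^ (4 * Q - m)) ((j + 1) * 2 ^ (4 * Q - m)) x| ≤
        (7 / 8) ^ m * √(16 ^ Q * log Q)) :
    |∑ k ∈ Finset.range N, f (n k * x)| ≤ (t + 2 * η) * √(2 * N * log (log N)) := by
  have hN12 : N ≤ 2 ^ (12 * Q) := by
    refine hN'.le.trans ?_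
    rw [show 16 = 2 ^ 4 by norm_num, ← pow_mul]
    exact Nat.pow_le_pow_right two_pos (by omega)
  have hblock := M.abs_blockSum_le_of_grid_of_dyadic (by positivity) hs.le hqQ.le hN hN' hgrid
    hdyadic
  have hmain : √(2 * (t ^ 2 / s * log Q) * (s * N)) = t * √(2 * N * log Q) := by
    rw [← Real.sqrt_sq ht, ← Real.sqrt_mul (sq_nonneg _), Real.sqrt_sq ht]
    congr 1
    field_simp
  have hfine : 7 * (7 / 8) ^ q * √(N * log Q) ≤ η * √(2 * N * log Q) := by
    gcongr
    linarith [(N.cast_nonneg : (0:ℝ) ≤ N)]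
  have hremainder := hsmall.trans (mul_le_mul_of_nonneg_left (four_pow_le_sqrt hlog hN) hη)
  calc |∑ k ∈ Finset.range N, f (n k * x)|
      ≤ |∑ k ∈ Finset.range N, f (n k * x) - M.blockSum Q 0 N x| + |M.blockSum Q 0 N x| := by
        simpa using abs_add_le (∑ k ∈ Finset.range N, f (n k * x) - M.blockSum Q 0 N x)
          (M.blockSum Q 0 N x)
    _ ≤ (t + 2 * η) * √(2 * N * log Q) := by linarith [M.abs_sum_sub_blockSum_le hN12 herror]
    _ ≤ (t + 2 * η) * √(2 * N * log (log N)) := by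
        have := log_log_sixteen_le (by omega) hN
        gcongr

theorem IndepModel.ae_eventually_abs_sum_le (M : IndepModel n f) {σ : ℝ} (hσ0 : 0 < σ)
    (hσ : ∫ x, f x ^ 2 ∂uniform01 < σ ^ 2) :
    ∀ᵐ x ∂uniform01, ∀ᶠ N : ℕ in atTop,
      |∑ k ∈ Finset.range N, f (n k * x)| ≤ σ * √(2 * N * log (log N)) := by
  have hf0 : 0 ≤ ∫ x, f x ^ 2 ∂uniform01 := integral_nonneg fun x => sq_nonneg _
  obtain ⟨t, ht, htσ⟩ := exists_between ((Real.sqrt_lt' hσ0).2 hσ)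
  have ht0 : 0 < t := (Real.sqrt_nonneg _).trans_lt ht
  obtain ⟨s, hs, hst⟩ := exists_between ((Real.sqrt_lt' ht0).1 ht)
  have hs0 : 0 < s := hf0.trans_lt hs
  have hD : 1 < t ^ 2 / s := (one_lt_div hs0).2 hst
  obtain ⟨η, hη0, rfl⟩ : ∃ η, 0 < η ∧ t + 2 * η = σ := ⟨(σ - t) / 2, by linarith, by ring⟩
  obtain ⟨q, hq, hqη⟩ : ∃ q : ℕ, 8 * s ≤ (147 / 128) ^ q ∧ 7 * (7 / 8) ^ q ≤ η := by
    have hgeom := (tendsto_pow_atTop_nhds_zero_of_lt_one (r := (7 / 8 : ℝ)) (by norm_num)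
      (by norm_num)).const_mul 7
    rw [mul_zero] at hgeom
    exact (((tendsto_pow_atTop_atTop_of_one_lt (by norm_num)).eventually_ge_atTop _).and
      (hgeom.eventually (ge_mem_nhds hη0))).exists
  filter_upwards [M.ae_eventually_error_le, M.ae_eventually_abs_blockSum_grid_le hs hD q,
    M.ae_eventually_abs_blockSum_dyadic_le hs hq] with x herror hgrid hdyadic
  filter_upwards [(tendsto_natLog_atTop (b := 16) (by norm_num)).eventually
    (herror.and (hgrid.and (hdyadic.and ((eventually_le_log_natCast 1).and
      ((eventually_gt_atTop q).and (M.eventually_two_pow_mul_le 1 2 hη0)))))),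
    eventually_ne_atTop 0] with N ⟨herror, hgrid, hdyadic, hlog, hqQ, hsmall⟩ hN0
  exact M.abs_sum_le_of_grid_of_dyadic hs0 ht0.le hη0.le hqη hqQ hlog hsmall
    (Nat.pow_log_le_self 16 hN0) (Nat.lt_pow_succ_log_self (by norm_num) N) herror hgrid hdyadic

/-! ### A periodic bump and the second moment method -/

/-- A nonnegative trigonometric polynomial that, modulo its period, is concentrated near `t`. It
replaces the indicator function of a neighbourhood of `t`: its mean depends on finitely many values
of a characteristic function only. -/
def cosBump (K : ℕ) (θ t y : ℝ) : ℝ := cos (θ * (y - t)) ^ (2 * K)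

lemma cosBump_nonneg (K : ℕ) (θ t y : ℝ) : 0 ≤ cosBump K θ t y := (even_two_mul K).pow_nonneg _

lemma cosBump_le_one (K : ℕ) (θ t y : ℝ) : cosBump K θ t y ≤ 1 := by
  rw [cosBump, pow_mul]
  exact pow_le_one₀ (sq_nonneg _) (cos_sq_le_one _)

lemma measurable_cosBump (K : ℕ) (θ t : ℝ) : Measurable (cosBump K θ t) := by
  unfold cosBump
  fun_prop

lemma norm_cosBump_le_one (K : ℕ) (θ t y : ℝ) : ‖cosBump K θ t y‖ ≤ 1 :=
  (Real.norm_of_nonneg (cosBump_nonneg K θ t y)).trans_le (cosBump_le_one K θ t y)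

lemma exists_cosBump_eq_sum_cexp (K : ℕ) (θ t : ℝ) : ∃ (c : ℕ → ℂ) (ξ : ℕ → ℝ),
    ∑ b ∈ Finset.range (2 * K + 1), ‖c b‖ = 1 ∧
    (∀ b ∈ Finset.range (2 * K + 1), |ξ b| ≤ 2 * K * |θ|) ∧
    ∀ y, (cosBump K θ t y : ℂ) = ∑ b ∈ Finset.range (2 * K + 1),
      c b * Complex.exp ((ξ b * y : ℝ) * Complex.I) := by
  let ξ : ℕ → ℝ := fun b => (2 * b - 2 * K) * θ
  refine ⟨fun b => ((2 * K).choose b / 4 ^ K : ℝ) * Complex.exp ((-(ξ b * t) : ℝ) * Complex.I), ξ,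
    ?_, fun b hb => ?_, fun y => ?_⟩
  · have hnorm : ∀ b, ‖(((2 * K).choose b / 4 ^ K : ℝ) : ℂ)‖ = (2 * K).choose b / 4 ^ K :=
      fun b => Complex.norm_of_nonneg (by positivity)
    simp only [norm_mul, Complex.norm_exp_ofReal_mul_I, mul_one, hnorm]
    rw [← Finset.sum_div, ← Nat.cast_sum, Nat.sum_range_choose, pow_mul]
    norm_num
  · have hb : (b : ℝ) ≤ 2 * K := by
      exact_mod_cast Nat.lt_succ_iff.1 (Finset.mem_range.1 hb)
    rw [abs_mul]
    refine mul_le_mul_of_nonneg_right (abs_le.2 ⟨?_, ?_⟩) (abs_nonneg θ) <;>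
      linarith [b.cast_nonneg (α := ℝ)]
  · simp only [cosBump, ξ]
    push_cast
    rw [Complex.cos, div_pow, add_pow, Finset.sum_div]
    refine Finset.sum_congr rfl fun b hb => ?_
    have hb : b ≤ 2 * K := Nat.lt_succ_iff.1 (Finset.mem_range.1 hb)
    rw [← Complex.exp_nat_mul, ← Complex.exp_nat_mul, ← Complex.exp_add,
      mul_assoc _ (Complex.exp _), ← Complex.exp_add, pow_mul, show (2 : ℂ) ^ 2 = 4 by norm_num,
      mul_div_assoc, mul_comm]
    congr 2
    push_cast [Nat.cast_sub hb]
    ring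

section Comparison

variable {Ω Ω' : Type*} {mΩ : MeasurableSpace Ω} {mΩ' : MeasurableSpace Ω'} {μ : Measure Ω}
  {ν : Measure Ω'} [IsProbabilityMeasure μ] [IsProbabilityMeasure ν] {δ : ℝ}

lemma abs_integral_sub_integral_le_of_eq_sum_cexp {ι : Type*} {s : Finset ι} {c : ι → ℂ}
    {g : ι → Ω → ℝ} {g' : ι → Ω' → ℝ} {F : Ω → ℝ} {F' : Ω' → ℝ}
    (hg : ∀ b, Measurable (g b)) (hg' : ∀ b, Measurable (g' b))
    (hF : ∀ x, (F x : ℂ) = ∑ b ∈ s, c b * Complex.exp (g b x * Complex.I))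
    (hF' : ∀ y, (F' y : ℂ) = ∑ b ∈ s, c b * Complex.exp (g' b y * Complex.I))
    (hc : ∑ b ∈ s, ‖c b‖ ≤ 1) (hδ : 0 ≤ δ)
    (h : ∀ b ∈ s, ‖∫ x, Complex.exp (g b x * Complex.I) ∂μ -
      ∫ y, Complex.exp (g' b y * Complex.I) ∂ν‖ ≤ δ) :
    |∫ x, F x ∂μ - ∫ y, F' y ∂ν| ≤ δ := by
  rw [← Real.norm_eq_abs, ← Complex.norm_real, Complex.ofReal_sub, ← integral_complex_ofReal,
    ← integral_complex_ofReal]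
  simp only [hF, hF']
  rw [integral_finsetSum _ fun b _ => (integrable_cexp_mul_I (hg b)).const_mul _,
    integral_finsetSum _ fun b _ => (integrable_cexp_mul_I (hg' b)).const_mul _,
    ← Finset.sum_sub_distrib]
  simp only [integral_const_mul, ← mul_sub]
  calc ‖∑ b ∈ s, c b * (∫ x, Complex.exp (g b x * Complex.I) ∂μ -
        ∫ y, Complex.exp (g' b y * Complex.I) ∂ν)‖
      ≤ ∑ b ∈ s, ‖c b‖ * δ := by
        refine norm_sum_le_of_le _ fun b hb => ?_
        rw [norm_mul]
        exact mul_le_mul_of_nonneg_left (h b hb) (norm_nonneg _)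
    _ = (∑ b ∈ s, ‖c b‖) * δ := by rw [Finset.sum_mul]
    _ ≤ δ := mul_le_of_le_one_left hδ hc

variable {K : ℕ} {θ t Λ : ℝ}

lemma abs_integral_cosBump_sub_le {X : Ω → ℝ} {Y : Ω' → ℝ} (hX : Measurable X) (hY : Measurable Y)
    (hΛ : 2 * K * |θ| ≤ Λ) (hδ : 0 ≤ δ)
    (h : ∀ a : ℝ, |a| ≤ Λ → ‖∫ x, Complex.exp ((a * X x : ℝ) * Complex.I) ∂μ -
      ∫ y, Complex.exp ((a * Y y : ℝ) * Complex.I) ∂ν‖ ≤ δ) :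
    |∫ x, cosBump K θ t (X x) ∂μ - ∫ y, cosBump K θ t (Y y) ∂ν| ≤ δ := by
  obtain ⟨c, ξ, hc, hξ, hφ⟩ := exists_cosBump_eq_sum_cexp K θ t
  exact abs_integral_sub_integral_le_of_eq_sum_cexp (fun b => hX.const_mul (ξ b))
    (fun b => hY.const_mul (ξ b)) (fun x => hφ _) (fun y => hφ _) hc.le hδ
    fun b hb => h _ ((hξ b hb).trans hΛ)

lemma abs_integral_cosBump_mul_sub_le {X₁ X₂ : Ω → ℝ} {Y₁ Y₂ : Ω' → ℝ} (hX₁ : Measurable X₁)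
    (hX₂ : Measurable X₂) (hY₁ : Measurable Y₁) (hY₂ : Measurable Y₂)
    (hΛ : 2 * K * |θ| ≤ Λ) (hδ : 0 ≤ δ)
    (h : ∀ a b : ℝ, |a| ≤ Λ → |b| ≤ Λ →
      ‖∫ x, Complex.exp ((a * X₁ x + b * X₂ x : ℝ) * Complex.I) ∂μ -
        ∫ y, Complex.exp ((a * Y₁ y + b * Y₂ y : ℝ) * Complex.I) ∂ν‖ ≤ δ) :
    |∫ x, cosBump K θ t (X₁ x) * cosBump K θ t (X₂ x) ∂μ -
      ∫ y, cosBump K θ t (Y₁ y) * cosBump K θ t (Y₂ y) ∂ν| ≤ δ := by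
  obtain ⟨c, ξ, hc, hξ, hφ⟩ := exists_cosBump_eq_sum_cexp K θ t
  have hmul : ∀ y z, ((cosBump K θ t y * cosBump K θ t z : ℝ) : ℂ) =
      ∑ p ∈ Finset.range (2 * K + 1) ×ˢ Finset.range (2 * K + 1),
        c p.1 * c p.2 * Complex.exp ((ξ p.1 * y + ξ p.2 * z : ℝ) * Complex.I) := fun y z => by
    rw [Complex.ofReal_mul, hφ, hφ, Finset.sum_mul_sum, ← Finset.sum_product']
    refine Finset.sum_congr rfl fun p _ => ?_
    rw [mul_mul_mul_comm, ← Complex.exp_add, ← add_mul, ← Complex.ofReal_add]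
  have hsum : ∑ p ∈ Finset.range (2 * K + 1) ×ˢ Finset.range (2 * K + 1), ‖c p.1 * c p.2‖ ≤ 1 := by
    simp only [norm_mul, Finset.sum_product, ← Finset.sum_mul_sum, hc, mul_one, le_refl]
  have hg (p : ℕ × ℕ) : Measurable fun x => ξ p.1 * X₁ x + ξ p.2 * X₂ x := by fun_prop
  have hg' (p : ℕ × ℕ) : Measurable fun y => ξ p.1 * Y₁ y + ξ p.2 * Y₂ y := by fun_prop
  exact abs_integral_sub_integral_le_of_eq_sum_cexp hg hg' (fun x => hmul (X₁ x) (X₂ x))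
    (fun y => hmul (Y₁ y) (Y₂ y)) hsum hδ fun p hp =>
      h _ _ ((hξ _ (Finset.mem_product.1 hp).1).trans hΛ)
        ((hξ _ (Finset.mem_product.1 hp).2).trans hΛ)

end Comparison

lemma integral_cexp_gaussianReal (v : ℝ≥0) (a : ℝ) :
    ∫ y, Complex.exp ((a * y : ℝ) * Complex.I) ∂gaussianReal 0 v =
      (exp (-(v * a ^ 2 / 2)) : ℝ) := by
  have hchar := charFun_gaussianReal (μ := 0) (v := v) a
  rw [charFun_apply_real] at hchar
  push_cast at hchar ⊢
  rw [hchar]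
  congr 1
  ring

lemma integral_cexp_gaussianReal_prod (v : ℝ≥0) (a b : ℝ) :
    ∫ y, Complex.exp ((a * y.1 + b * y.2 : ℝ) * Complex.I)
      ∂(gaussianReal 0 v).prod (gaussianReal 0 v) = (exp (-(v * (a ^ 2 + b ^ 2) / 2)) : ℝ) := by
  simp only [Complex.ofReal_add, add_mul, Complex.exp_add]
  rw [integral_prod_mul (fun y : ℝ => Complex.exp ((a * y : ℝ) * Complex.I))
    fun y : ℝ => Complex.exp ((b * y : ℝ) * Complex.I), integral_cexp_gaussianReal,
    integral_cexp_gaussianReal, ← Complex.ofReal_mul, ← Real.exp_add]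
  congr 2
  ring

section SecondMoment

variable {Ω ι : Type*} {mΩ : MeasurableSpace Ω} {μ : Measure Ω} [IsProbabilityMeasure μ]
  {s : Finset ι} {F : ι → Ω → ℝ} {m δ : ℝ}

lemma integral_sub_mul_sub {X Y : Ω → ℝ} (hX : Integrable X μ) (hY : Integrable Y μ)
    (hXY : Integrable (fun x => X x * Y x) μ) (m : ℝ) :
    ∫ x, (X x - m) * (Y x - m) ∂μ =
      ∫ x, X x * Y x ∂μ - m * ∫ x, X x ∂μ - m * ∫ x, Y x ∂μ + m ^ 2 := by
  have hX' : Integrable (fun x => m * X x) μ := hX.const_mul m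
  have hY' : Integrable (fun x => m * Y x) μ := hY.const_mul m
  have hXY' : Integrable (fun x => X x * Y x - m * X x) μ := hXY.sub hX'
  have hXY'' : Integrable (fun x => X x * Y x - m * X x - m * Y x) μ := hXY'.sub hY'
  calc ∫ x, (X x - m) * (Y x - m) ∂μ
      = ∫ x, (X x * Y x - m * X x - m * Y x + m ^ 2) ∂μ := by
        congr 1 with x
        ring
    _ = ∫ x, X x * Y x ∂μ - m * ∫ x, X x ∂μ - m * ∫ x, Y x ∂μ + m ^ 2 := by
        rw [integral_add hXY'' (integrable_const _), integral_sub hXY' hY', integral_sub hXY hX',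
          integral_const_mul, integral_const_mul, integral_const, probReal_univ, one_smul]

lemma integral_sq_sum_sub_le (hF : ∀ i, Measurable (F i)) (hF0 : ∀ i x, 0 ≤ F i x)
    (hF1 : ∀ i x, F i x ≤ 1) (hm0 : 0 ≤ m) (hm1 : m ≤ 1) (hδ : 0 ≤ δ)
    (h1 : ∀ i ∈ s, |∫ x, F i x ∂μ - m| ≤ δ)
    (h2 : ∀ i ∈ s, ∀ j ∈ s, i ≠ j → |∫ x, F i x * F j x ∂μ - m ^ 2| ≤ δ) :
    ∫ x, (∑ i ∈ s, (F i x - m)) ^ 2 ∂μ ≤ s.card * m + 3 * s.card ^ 2 * δ := by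
  classical
  have hnorm : ∀ i x, ‖F i x‖ ≤ 1 := fun i x =>
    (Real.norm_of_nonneg (hF0 i x)).trans_le (hF1 i x)
  have hint : ∀ i, Integrable (F i) μ := fun i =>
    .of_bound (hF i).aestronglyMeasurable 1 (ae_of_all _ (hnorm i))
  have hint2 : ∀ i j, Integrable (fun x => F i x * F j x) μ := fun i j =>
    (hint i).mul_bdd (hF j).aestronglyMeasurable (ae_of_all _ (hnorm j))
  have hintd : ∀ i j, Integrable (fun x => (F i x - m) * (F j x - m)) μ := fun i j =>
    ((hint i).sub (integrable_const m)).mul_bdd (c := 1 + |m|) (by fun_prop)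
      (ae_of_all _ fun x => (norm_sub_le _ _).trans (add_le_add_left (hnorm j x) _))
  have hcov : ∀ i ∈ s, ∀ j ∈ s, ∫ x, (F i x - m) * (F j x - m) ∂μ ≤
      (if i = j then m else 0) + 3 * δ := fun i hi j hj => by
    rw [integral_sub_mul_sub (hint i) (hint j) (hint2 i j)]
    have hi' := mul_le_mul_of_nonneg_left (abs_le.1 (h1 i hi)).1 hm0
    have hj' := mul_le_mul_of_nonneg_left (abs_le.1 (h1 j hj)).1 hm0
    have hmδ : m * δ ≤ δ := mul_le_of_le_one_left hδ hm1
    split_ifs with hij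
    · subst hij
      have hsq : ∫ x, F i x * F i x ∂μ ≤ ∫ x, F i x ∂μ := integral_mono (hint2 i i) (hint i)
        fun x => mul_le_of_le_one_left (hF0 i x) (hF1 i x)
      nlinarith [(abs_le.1 (h1 i hi)).2]
    · nlinarith [(abs_le.1 (h2 i hi j hj hij)).2]
  simp only [sq (∑ _ ∈ s, _), Finset.sum_mul_sum]
  rw [integral_finsetSum _ fun i _ => integrable_finsetSum _ fun j _ => hintd i j]
  simp_rw [integral_finsetSum _ fun j _ => hintd _ j]
  calc ∑ i ∈ s, ∑ j ∈ s, ∫ x, (F i x - m) * (F j x - m) ∂μ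
      ≤ ∑ i ∈ s, ∑ j ∈ s, ((if i = j then m else 0) + 3 * δ) :=
        Finset.sum_le_sum fun i hi => Finset.sum_le_sum fun j hj => hcov i hi j hj
    _ = s.card * m + 3 * s.card ^ 2 * δ := by
        simp only [Finset.sum_add_distrib, Finset.sum_ite_eq, Finset.sum_const, nsmul_eq_mul,
          Finset.sum_ite_mem, Finset.inter_self]
        ring

lemma measureReal_forall_le_half_le (hF : ∀ i, Measurable (F i)) (hF0 : ∀ i x, 0 ≤ F i x)
    (hF1 : ∀ i x, F i x ≤ 1) (hs : s.Nonempty) (hm0 : 0 < m) (hm1 : m ≤ 1) (hδ : 0 ≤ δ)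
    (h1 : ∀ i ∈ s, |∫ x, F i x ∂μ - m| ≤ δ)
    (h2 : ∀ i ∈ s, ∀ j ∈ s, i ≠ j → |∫ x, F i x * F j x ∂μ - m ^ 2| ≤ δ) :
    μ.real {x | ∀ i ∈ s, F i x ≤ m / 2} ≤ 4 / (s.card * m) + 12 * δ / m ^ 2 := by
  have : (0 : ℝ) < s.card := by exact_mod_cast hs.card_pos
  have hint : Integrable (fun x => (∑ i ∈ s, (F i x - m)) ^ 2) μ := by
    refine .of_bound (by fun_prop) ((∑ _ ∈ s, (1 : ℝ)) ^ 2) (ae_of_all _ fun x => ?_)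
    rw [norm_pow]
    gcongr
    refine norm_sum_le_of_le s fun i _ => ?_
    rw [Real.norm_eq_abs, abs_le]
    constructor <;> linarith [hF0 i x, hF1 i x]
  calc μ.real {x | ∀ i ∈ s, F i x ≤ m / 2}
      ≤ μ.real {x | (s.card * (m / 2)) ^ 2 ≤ (∑ i ∈ s, (F i x - m)) ^ 2} := by
        refine measureReal_mono fun x hx => ?_
        have hsum : ∑ i ∈ s, (F i x - m) ≤ -(s.card * (m / 2)) := by
          rw [← mul_neg, ← nsmul_eq_mul]
          exact Finset.sum_le_card_nsmul _ _ _ fun i hi => by linarith [hx i hi]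
        rw [Set.mem_ofPred_eq, ← neg_sq (∑ i ∈ s, _)]
        gcongr
        linarith
    _ ≤ (s.card * m + 3 * s.card ^ 2 * δ) / (s.card * (m / 2)) ^ 2 :=
        measureReal_ge_le_div (fun x => sq_nonneg _) hint (by positivity)
          (integral_sq_sum_sub_le hF hF0 hF1 hm0.le hm1 hδ h1 h2)
    _ = 4 / (s.card * m) + 12 * δ / m ^ 2 := by
        field_simp
        ring

lemma integral_cosBump_gaussianReal_le_one (K : ℕ) (θ t : ℝ) (v : ℝ≥0) :
    ∫ y, cosBump K θ t y ∂gaussianReal 0 v ≤ 1 := by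
  simpa using integral_mono_of_nonneg (μ := gaussianReal 0 v) (ae_of_all _ (cosBump_nonneg K θ t))
    (integrable_const 1) (ae_of_all _ (cosBump_le_one K θ t))

/-- Being periodic, `cosBump` cannot tell large values of `X i` from values near `t`; `htail` rules
out the former. -/
lemma measureReal_forall_lt_le {X : ι → Ω → ℝ} {v : ℝ≥0} {K : ℕ} {θ t Λ δ' w τ : ℝ}
    (hX : ∀ i, Measurable (X i)) (hs : s.Nonempty) (hΛ : 2 * K * |θ| ≤ Λ) (hδ : 0 ≤ δ)
    (h1 : ∀ i ∈ s, ∀ a : ℝ, |a| ≤ Λ → ‖∫ x, Complex.exp ((a * X i x : ℝ) * Complex.I) ∂μ -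
      (exp (-(v * a ^ 2 / 2)) : ℝ)‖ ≤ δ)
    (h2 : ∀ i ∈ s, ∀ j ∈ s, i ≠ j → ∀ a b : ℝ, |a| ≤ Λ → |b| ≤ Λ →
      ‖∫ x, Complex.exp ((a * X i x + b * X j x : ℝ) * Complex.I) ∂μ -
        (exp (-(v * (a ^ 2 + b ^ 2) / 2)) : ℝ)‖ ≤ δ)
    (htail : ∀ i ∈ s, μ.real {x | w ≤ |X i x|} ≤ δ')
    (hm : ∫ y, cosBump K θ t y ∂gaussianReal 0 v = m) (hm0 : 0 < m)
    (hbump : ∀ y, |y| < w → y < τ → cosBump K θ t y ≤ m / 2) :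
    μ.real {x | ∀ i ∈ s, X i x < τ} ≤ 4 / (s.card * m) + 12 * δ / m ^ 2 + s.card * δ' := by
  simp only [← integral_cexp_gaussianReal] at h1
  simp only [← integral_cexp_gaussianReal_prod] at h2
  have hmean : ∀ i ∈ s, |∫ x, cosBump K θ t (X i x) ∂μ - m| ≤ δ := fun i hi =>
    hm ▸ abs_integral_cosBump_sub_le (hX i) measurable_id hΛ hδ (h1 i hi)
  have hcorr : ∀ i ∈ s, ∀ j ∈ s, i ≠ j →
      |∫ x, cosBump K θ t (X i x) * cosBump K θ t (X j x) ∂μ - m ^ 2| ≤ δ := fun i hi j hj hij => by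
    rw [← hm, sq, ← integral_prod_mul]
    exact abs_integral_cosBump_mul_sub_le (hX i) (hX j) measurable_fst measurable_snd hΛ hδ
      (h2 i hi j hj hij)
  have hsub : {x | ∀ i ∈ s, X i x < τ} ⊆
      {x | ∀ i ∈ s, cosBump K θ t (X i x) ≤ m / 2} ∪ ⋃ i ∈ s, {x | w ≤ |X i x|} := by
    intro x hx
    by_cases hlarge : ∃ i ∈ s, w ≤ |X i x|
    · exact Or.inr (by simpa using hlarge)
    · push Not at hlarge
      exact Or.inl fun i hi => hbump _ (hlarge i hi) (hx i hi)
  calc μ.real {x | ∀ i ∈ s, X i x < τ}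
      ≤ μ.real {x | ∀ i ∈ s, cosBump K θ t (X i x) ≤ m / 2} +
          μ.real (⋃ i ∈ s, {x | w ≤ |X i x|}) :=
        (measureReal_mono hsub).trans (measureReal_union_le _ _)
    _ ≤ 4 / (s.card * m) + 12 * δ / m ^ 2 + s.card * δ' := by
        gcongr
        · exact measureReal_forall_le_half_le (fun i => (measurable_cosBump K θ t).comp (hX i))
            (fun i x => cosBump_nonneg _ _ _ _) (fun i x => cosBump_le_one _ _ _ _) hs hm0
            (hm ▸ integral_cosBump_gaussianReal_le_one K θ t v) hδ hmean hcorr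
        · rw [← nsmul_eq_mul]
          exact (measureReal_biUnion_finset_le _ _).trans (Finset.sum_le_card_nsmul _ _ _ htail)

end SecondMoment

lemma cosBump_le_exp {K : ℕ} {θ t y : ℝ} (hy : |θ * (y - t)| ≤ 1) :
    cosBump K θ t y ≤ exp (-(4 * K / π ^ 2 * (θ * (y - t)) ^ 2)) := by
  set z := θ * (y - t)
  have hcos : cos z ≤ exp (-(2 / π ^ 2 * z ^ 2)) := calc
    cos z ≤ 1 - 2 / π ^ 2 * z ^ 2 :=
      cos_le_one_sub_mul_cos_sq (hy.trans (by linarith [Real.pi_gt_three]))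
    _ ≤ exp (-(2 / π ^ 2 * z ^ 2)) := one_sub_le_exp_neg _
  calc cosBump K θ t y ≤ exp (-(2 / π ^ 2 * z ^ 2)) ^ (2 * K) :=
        pow_le_pow_left₀ (cos_pos_of_le_one hy).le hcos _
    _ = exp (-(4 * K / π ^ 2 * z ^ 2)) := by
        rw [← Real.exp_nat_mul]
        congr 1
        push_cast
        ring

lemma half_le_cosBump {K : ℕ} {θ t d y : ℝ} (hK : K * (θ * d) ^ 2 ≤ 1 / 2)
    (hy : y ∈ Set.Icc t (t + d)) : 1 / 2 ≤ cosBump K θ t y := by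
  rcases K.eq_zero_or_pos with rfl | hK0
  · norm_num [cosBump]
  set z := θ * (y - t) with hz
  have hzd : z ^ 2 ≤ (θ * d) ^ 2 := by
    rw [hz, mul_pow, mul_pow]
    have := hy.1
    have := hy.2
    gcongr
    linarith
  have hKz : K * z ^ 2 ≤ 1 / 2 := (mul_le_mul_of_nonneg_left hzd K.cast_nonneg).trans hK
  have hz1 : z ^ 2 ≤ 1 / 2 :=
    (le_mul_of_one_le_left (sq_nonneg z) (by exact_mod_cast hK0)).trans hKz
  have hcos : 1 + -z ^ 2 ≤ cos z ^ 2 := by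
    rw [cos_sq']
    linarith [Real.sin_sq_le_sq (x := z)]
  calc (1 / 2 : ℝ) ≤ 1 + K * -z ^ 2 := by linarith
    _ ≤ (1 + -z ^ 2) ^ K := one_add_mul_le_pow (by linarith) K
    _ ≤ (cos z ^ 2) ^ K := by gcongr; linarith
    _ = cosBump K θ t y := by rw [cosBump, pow_mul]

lemma le_integral_cosBump_gaussianReal {K : ℕ} {θ t d : ℝ} {v : ℝ≥0} (hv : 0 < v) (ht : 0 ≤ t)
    (hd : 0 ≤ d) (hK : K * (θ * d) ^ 2 ≤ 1 / 2) :
    d * ((√(2 * π * v))⁻¹ * exp (-(t + d) ^ 2 / (2 * v)) * (1 / 2)) ≤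
      ∫ y, cosBump K θ t y ∂gaussianReal 0 v := by
  rw [integral_gaussianReal_eq_integral_smul hv.ne']
  have hint : Integrable (fun y => gaussianPDFReal 0 v y • cosBump K θ t y) :=
    (integrable_gaussianPDFReal 0 v).mul_bdd (measurable_cosBump K θ t).aestronglyMeasurable
      (ae_of_all _ (norm_cosBump_le_one K θ t))
  have hpdf : ∀ y ∈ Set.Icc t (t + d),
      (√(2 * π * v))⁻¹ * exp (-(t + d) ^ 2 / (2 * v)) ≤ gaussianPDFReal 0 v y := fun y hy => by
    have := ht.trans hy.1
    have := hy.2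
    rw [gaussianPDFReal, sub_zero]
    gcongr
  calc d * ((√(2 * π * v))⁻¹ * exp (-(t + d) ^ 2 / (2 * v)) * (1 / 2))
      = ((√(2 * π * v))⁻¹ * exp (-(t + d) ^ 2 / (2 * v)) * (1 / 2)) *
          volume.real (Set.Icc t (t + d)) := by
        rw [Real.volume_real_Icc_of_le (by linarith)]
        ring
    _ ≤ ∫ y in Set.Icc t (t + d), gaussianPDFReal 0 v y • cosBump K θ t y := by
        rw [mul_comm]
        refine setIntegral_ge_of_const_le measurableSet_Icc (by simp) (fun y hy => ?_)
          hint.integrableOn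
        exact mul_le_mul (hpdf y hy) (half_le_cosBump hK hy) (by norm_num)
          (gaussianPDFReal_nonneg 0 v y)
    _ ≤ ∫ y, gaussianPDFReal 0 v y • cosBump K θ t y :=
        setIntegral_le_integral hint (ae_of_all _ fun y =>
          mul_nonneg (gaussianPDFReal_nonneg 0 v y) (cosBump_nonneg K θ t y))

lemma rpow_neg_le_integral_cosBump {K Q : ℕ} {θ t d r v₀ w : ℝ} {v : ℝ≥0} (hQ : 1 ≤ Q)
    (hv₀ : 0 < v₀) (hv : v₀ ≤ v) (hw : v ≤ w) (ht : 0 ≤ t) (hd : 0 ≤ d)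
    (htd : t + d ≤ r * √(log Q)) (hK : K * (θ * d) ^ 2 ≤ 1 / 2) :
    d * ((√(2 * π * w))⁻¹ * (1 / 2)) * (Q : ℝ) ^ (-(r ^ 2 / (2 * v₀))) ≤
      ∫ y, cosBump K θ t y ∂gaussianReal 0 v := by
  have hv0 : (0 : ℝ) < v := hv₀.trans_le hv
  have hlog : 0 ≤ log Q := log_natCast_nonneg Q
  have hsq : (t + d) ^ 2 ≤ r ^ 2 * log Q := by
    rw [← Real.sq_sqrt hlog, ← mul_pow]
    gcongr
  have hexp : (Q : ℝ) ^ (-(r ^ 2 / (2 * v₀))) ≤ exp (-(t + d) ^ 2 / (2 * v)) := by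
    rw [Real.rpow_def_of_pos (by exact_mod_cast hQ), exp_le_exp, neg_div, mul_neg, neg_le_neg_iff]
    calc (t + d) ^ 2 / (2 * v) ≤ r ^ 2 * log Q / (2 * v₀) := by gcongr
      _ = log Q * (r ^ 2 / (2 * v₀)) := by ring
  calc d * ((√(2 * π * w))⁻¹ * (1 / 2)) * (Q : ℝ) ^ (-(r ^ 2 / (2 * v₀)))
      ≤ d * ((√(2 * π * v))⁻¹ * (1 / 2)) * exp (-(t + d) ^ 2 / (2 * v)) := by gcongr
    _ = d * ((√(2 * π * v))⁻¹ * exp (-(t + d) ^ 2 / (2 * v)) * (1 / 2)) := by ring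
    _ ≤ ∫ y, cosBump K θ t y ∂gaussianReal 0 v :=
        le_integral_cosBump_gaussianReal hv0 ht hd hK

lemma cosBump_le_exp_neg_sq {K : ℕ} {W r r' u y : ℝ} (hu : 0 < u) (hW : 0 < W) (hr' : 0 < r')
    (hr : r < r') (hK : (π * (W + r') / (2 * (r' - r))) ^ 2 * u ^ 2 ≤ K) (hyW : |y| < W * u)
    (hyr : y < r * u) : cosBump K ((W + r')⁻¹ / u) (r' * u) y ≤ exp (-u ^ 2) := by
  have hWr : 0 < W + r' := by positivity
  have hr0 : 0 < r' - r := sub_pos.2 hr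
  set z := (W + r')⁻¹ / u * (y - r' * u) with hz
  have hz_eq : z = (y - r' * u) / ((W + r') * u) := by
    rw [hz]
    field_simp
  have hz1 : |z| ≤ 1 := by
    rw [hz_eq, abs_div, abs_of_pos (by positivity : 0 < (W + r') * u), div_le_one (by positivity),
      abs_le]
    constructor <;> nlinarith [abs_lt.1 hyW, mul_pos hr' hu, mul_pos hW hu]
  have hz2 : ((r' - r) / (W + r')) ^ 2 ≤ z ^ 2 := by
    have hle : (r' - r) / (W + r') ≤ -z := by
      rw [hz_eq, ← neg_div, div_le_div_iff₀ hWr (by positivity)]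
      nlinarith [mul_lt_mul_of_pos_left hyr hWr]
    rw [← neg_sq z]
    gcongr
  refine (cosBump_le_exp hz1).trans (exp_le_exp.2 (neg_le_neg ?_))
  calc u ^ 2 = 4 * ((π * (W + r') / (2 * (r' - r))) ^ 2 * u ^ 2) / π ^ 2 *
        ((r' - r) / (W + r')) ^ 2 := by
        field_simp
        norm_num
    _ ≤ 4 * K / π ^ 2 * z ^ 2 := by gcongr

lemma exists_cosBump_parameters {r v₀ w W : ℝ} (hr : 0 < r) (hv₀ : 0 < v₀) (hvw : v₀ ≤ w)
    (hrv : r ^ 2 < 2 * v₀) (hW : 0 < W) :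
    ∃ κ ∈ Set.Ioo (0 : ℝ) 1, ∃ c > 0, ∃ Λ, ∀ᶠ Q : ℕ in atTop, ∃ (K : ℕ) (θ t : ℝ),
      2 * K * |θ| ≤ Λ * √(log Q) ∧
      (∀ y, |y| < W * √(log Q) → y < r * √(log Q) → cosBump K θ t y ≤ 1 / Q) ∧
      ∀ v : ℝ≥0, v₀ ≤ v → v ≤ w →
        c * (Q : ℝ) ^ (-κ) ≤ ∫ y, cosBump K θ t y ∂gaussianReal 0 v := by
  obtain ⟨r'', hr'', hrv''⟩ := exists_between (Real.lt_sqrt_of_sq_lt hrv)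
  have hr''0 : 0 < r'' := hr.trans hr''
  rw [Real.lt_sqrt hr''0.le] at hrv''
  obtain ⟨r', hr', hr'r''⟩ := exists_between hr''
  have hr'0 : 0 < r' := hr.trans hr'
  set β := (π * (W + r') / (2 * (r' - r))) ^ 2
  set θ₀ := (W + r')⁻¹
  set d := (θ₀ * √(2 * (β + 1)))⁻¹ with hd
  have hβ : 0 ≤ β := sq_nonneg _
  have hθ₀ : 0 < θ₀ := by positivity
  have hdsq : (β + 1) * (θ₀ * d) ^ 2 = 1 / 2 := by
    rw [hd, mul_inv, mul_inv_cancel_left₀ hθ₀.ne', inv_pow, Real.sq_sqrt (by positivity)]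
    field_simp
  have hw : 0 < w := hv₀.trans_le hvw
  refine ⟨r'' ^ 2 / (2 * v₀), ⟨by positivity, (div_lt_one (by positivity)).2 hrv''⟩,
    d * ((√(2 * π * w))⁻¹ * (1 / 2)), by positivity, 2 * (β + 1) * θ₀, ?_⟩
  filter_upwards [eventually_le_log_natCast (max 1 (d / (r'' - r')) ^ 2), eventually_ge_atTop 1]
    with Q hQ hQ1
  set u := √(log Q)
  have hu2 : u ^ 2 = log Q := Real.sq_sqrt (log_natCast_nonneg Q)
  have hmax : max 1 (d / (r'' - r')) ≤ u := Real.le_sqrt_of_sq_le hQ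
  have hu1 : 1 ≤ u := (le_max_left _ _).trans hmax
  have hdu : r' * u + d ≤ r'' * u := by
    have := (div_le_iff₀ (sub_pos.2 hr'r'')).1 ((le_max_right _ _).trans hmax)
    linarith
  have hK : (⌈β * u ^ 2⌉₊ : ℝ) ≤ (β + 1) * u ^ 2 := by
    have := Nat.ceil_lt_add_one (by positivity : 0 ≤ β * u ^ 2)
    nlinarith
  refine ⟨⌈β * u ^ 2⌉₊, θ₀ / u, r' * u, ?_, fun y hyW hyr => ?_, fun v hv hw => ?_⟩
  · rw [abs_of_pos (by positivity)]
    calc 2 * (⌈β * u ^ 2⌉₊ : ℝ) * (θ₀ / u) ≤ 2 * ((β + 1) * u ^ 2) * (θ₀ / u) := by gcongr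
      _ = 2 * (β + 1) * θ₀ * u := by field_simp
  · refine (cosBump_le_exp_neg_sq (by linarith) hW hr'0 hr' (Nat.le_ceil _) hyW hyr).trans_eq ?_
    rw [hu2, exp_neg, exp_log (by exact_mod_cast hQ1), one_div]
  · refine rpow_neg_le_integral_cosBump hQ1 hv₀ hv hw (by positivity) (by positivity) hdu ?_
    calc (⌈β * u ^ 2⌉₊ : ℝ) * (θ₀ / u * d) ^ 2 ≤ (β + 1) * u ^ 2 * (θ₀ / u * d) ^ 2 := by gcongr
      _ = (β + 1) * (θ₀ * d) ^ 2 := by field_simp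
      _ ≤ 1 / 2 := hdsq.le

/-! ### Large normalized blocks -/

lemma sum_union_piecewise {ι α R : Type*} [DecidableEq ι] [AddCommMonoid R] {I I' : Finset ι}
    (h : Disjoint I I') (φ : ι → α → R) (c c' : ι → α) :
    ∑ k ∈ I ∪ I', φ k (I.piecewise c c' k) = ∑ k ∈ I, φ k (c k) + ∑ k ∈ I', φ k (c' k) := by
  rw [Finset.sum_union h]
  congr 1
  · exact Finset.sum_congr rfl fun k hk => by rw [Finset.piecewise_eq_of_mem _ _ _ hk]
  · exact Finset.sum_congr rfl fun k hk => by
      rw [Finset.piecewise_eq_of_notMem _ _ _ (Finset.disjoint_right.1 h hk)]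

lemma card_mul_sq_mul_inv_sqrt_card {ι : Type*} {I : Finset ι} {p A : ℝ} (hA : 0 < A)
    (hp : p ^ 2 * A ≤ I.card) : I.card * (p * (√I.card)⁻¹) ^ 2 = p ^ 2 := by
  rw [mul_pow, inv_pow, Real.sq_sqrt (Nat.cast_nonneg _)]
  rcases I.eq_empty_or_nonempty with rfl | hI
  · have : p ^ 2 ≤ 0 := by
      rw [Finset.card_empty, Nat.cast_zero] at hp
      exact nonpos_of_mul_nonpos_left hp hA
    simp [this.antisymm (sq_nonneg p)]
  · have : (I.card : ℝ) ≠ 0 := by simpa using hI.ne_empty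
    field_simp

lemma sq_mul_inv_sqrt_card_mul_le {ι : Type*} {I : Finset ι} {p A : ℝ}
    (hp : p ^ 2 * A ≤ I.card) : (p * (√I.card)⁻¹) ^ 2 * A ≤ 1 := by
  rw [mul_pow, inv_pow, Real.sq_sqrt (Nat.cast_nonneg _), mul_right_comm, ← div_eq_mul_inv]
  exact div_le_one_of_le₀ hp (Nat.cast_nonneg _)

lemma eventually_sq_mul_two_pow_le (L : ℝ) : ∀ᶠ Q : ℕ in atTop, ∀ p : ℝ, |p| ≤ L * √(log Q) →
    p ^ 2 ≤ L ^ 2 * log Q ∧ p ^ 2 * 2 ^ Q ≤ 4 ^ Q := by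
  filter_upwards [eventually_mul_log_le_two_pow (L ^ 2)] with Q hQ p hp
  have hsq : p ^ 2 ≤ L ^ 2 * log Q := by
    rw [← sq_abs, ← Real.sq_sqrt (log_natCast_nonneg Q), ← mul_pow]
    gcongr
  refine ⟨hsq, (mul_le_mul_of_nonneg_right (hsq.trans hQ) (by positivity)).trans_eq ?_⟩
  rw [← mul_pow]
  norm_num

lemma second_moment_bound_le {c m y N Q : ℝ} (hc : 0 < c) (hy : 1 ≤ y) (hyQ : y ≤ Q) (hN : 1 ≤ N)
    (hNQ : N ≤ Q) (hm : c / y ≤ m) :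
    4 / (N * m) + 12 * (1 / Q ^ 3) / m ^ 2 + N * (2 / Q ^ 3) ≤
      (4 / c + 12 / c ^ 2 + 2) * (y / N) := by
  have hQ : 1 ≤ Q := hy.trans hyQ
  have hyN : y * N ≤ Q ^ 3 := by nlinarith [mul_le_mul hyQ hNQ (by positivity) (by positivity)]
  have hNN : N * N ≤ y * Q ^ 3 := by
    nlinarith [mul_le_mul hNQ hNQ (by positivity) (by positivity), one_le_pow₀ hQ (n := 3)]
  have hterm1 : 4 / (N * m) ≤ 4 / c * (y / N) := by
    calc 4 / (N * m) ≤ 4 / (N * (c / y)) := by gcongr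
      _ = 4 / c * (y / N) := by field_simp
  have hterm2 : 12 * (1 / Q ^ 3) / m ^ 2 ≤ 12 / c ^ 2 * (y / N) := by
    calc 12 * (1 / Q ^ 3) / m ^ 2 ≤ 12 * (1 / Q ^ 3) / (c / y) ^ 2 := by gcongr
      _ = 12 / c ^ 2 * (y * (y / Q ^ 3)) := by field_simp
      _ ≤ 12 / c ^ 2 * (y * (1 / N)) := by
        gcongr 12 / c ^ 2 * (y * ?_)
        rw [div_le_div_iff₀ (by positivity) (by positivity)]
        linarith
      _ = 12 / c ^ 2 * (y / N) := by ring
  have hterm3 : N * (2 / Q ^ 3) ≤ 2 * (y / N) := by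
    rw [mul_div_assoc', mul_div_assoc', div_le_div_iff₀ (by positivity) (by positivity)]
    linarith
  linarith

namespace IndepModel

/-- The sum of the approximations at scale `Q` over the indices in `I`, normalized by the square
root of the number of terms. -/
def normalizedSum (M : IndepModel n f) (Q : ℕ) (I : Finset ℕ) : ℝ → ℝ :=
  M.dilateSum Q I fun _ => (√I.card)⁻¹

variable (M : IndepModel n f)

lemma measurable_normalizedSum (Q : ℕ) (I : Finset ℕ) : Measurable (M.normalizedSum Q I) :=
  M.measurable_dilateSum Q I _

lemma mul_normalizedSum (Q : ℕ) (I : Finset ℕ) (p x : ℝ) :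
    p * M.normalizedSum Q I x = M.dilateSum Q I (fun _ => p * (√I.card)⁻¹) x := by
  simp only [normalizedSum, dilateSum, Finset.mul_sum, mul_assoc]

lemma eventually_norm_integral_cexp_normalizedSum_add_sub_le (D : ℝ) :
    ∀ᶠ Q : ℕ in atTop, ∀ I I' : Finset ℕ, Disjoint I I' → (∀ k ∈ I, M.good Q k) →
      (∀ k ∈ I', M.good Q k) → ∀ p q : ℝ, p ^ 2 + q ^ 2 ≤ D * log Q →
      p ^ 2 * 2 ^ Q ≤ I.card → q ^ 2 * 2 ^ Q ≤ I'.card →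
      ‖∫ x, Complex.exp ((p * M.normalizedSum Q I x + q * M.normalizedSum Q I' x : ℝ) * Complex.I)
          ∂uniform01 - (exp (-((∫ x, M.T Q x ^ 2 ∂uniform01) * (p ^ 2 + q ^ 2) / 2)) : ℝ)‖ ≤
        1 / (Q:ℝ) ^ 3 := by
  filter_upwards [M.eventually_norm_integral_cexp_dilateSum_sub_le D]
    with Q hQ I I' hdisj hI hI' p q hpq hp hq
  set c : ℕ → ℝ := I.piecewise (fun _ => p * (√I.card)⁻¹) fun _ => q * (√I'.card)⁻¹
  have hsum : ∀ x, p * M.normalizedSum Q I x + q * M.normalizedSum Q I' x =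
      M.dilateSum Q (I ∪ I') c x := fun x => by
    rw [mul_normalizedSum, mul_normalizedSum]
    exact (sum_union_piecewise hdisj (fun k a => a * M.T Q (n k * x)) _ _).symm
  have hsq : ∑ k ∈ I ∪ I', c k ^ 2 = p ^ 2 + q ^ 2 := by
    rw [sum_union_piecewise hdisj fun _ a => a ^ 2]
    simp only [Finset.sum_const, nsmul_eq_mul]
    rw [card_mul_sq_mul_inv_sqrt_card (by positivity) hp,
      card_mul_sq_mul_inv_sqrt_card (by positivity) hq]
  have hmax : ∀ k ∈ I ∪ I', c k ^ 2 * 2 ^ Q ≤ 1 := fun k _ => by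
    by_cases hkI : k ∈ I
    · simpa only [c, Finset.piecewise_eq_of_mem _ _ _ hkI] using sq_mul_inv_sqrt_card_mul_le hp
    · simpa only [c, Finset.piecewise_eq_of_notMem _ _ _ hkI] using sq_mul_inv_sqrt_card_mul_le hq
  have hgood : ∀ k ∈ I ∪ I', M.good Q k := fun k hk => (Finset.mem_union.1 hk).elim (hI k) (hI' k)
  simpa only [hsum, hsq, mul_comm (p ^ 2 + q ^ 2), neg_div] using
    hQ (I ∪ I') hgood c (hsq.trans_le hpq) hmax

lemma eventually_measureReal_le_abs_normalizedSum_le :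
    ∀ᶠ Q : ℕ in atTop, ∀ I : Finset ℕ, (∀ k ∈ I, M.good Q k) → 2 ^ Q ≤ I.card →
      uniform01.real {x | 4 * √(∫ x, f x ^ 2 ∂uniform01 + 1) * √(log Q) ≤
        |M.normalizedSum Q I x|} ≤ 2 / (Q:ℝ) ^ 3 := by
  have hv : 0 ≤ ∫ x, f x ^ 2 ∂uniform01 := integral_nonneg fun x => sq_nonneg _
  filter_upwards [M.eventually_measureReal_le_abs_dilateSum_le (lt_add_one _)
    (by norm_num : (0:ℝ) < 3) (by norm_num : (3:ℝ) < 4) 0, eventually_le_log_natCast 1]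
    with Q hQ hlog I hI hcard
  have hpow : (1:ℝ) ^ 2 * 2 ^ Q ≤ I.card := by
    rw [one_pow, one_mul]
    exact_mod_cast hcard
  have hsq : ∑ _k ∈ I, (√I.card)⁻¹ ^ 2 = (1:ℝ) := by
    rw [Finset.sum_const, nsmul_eq_mul]
    simpa using card_mul_sq_mul_inv_sqrt_card (by positivity) hpow
  have htail := hQ I hI (fun _ => (√I.card)⁻¹) 1 one_pos hsq.le
    (fun k _ => by simpa using sq_mul_inv_sqrt_card_mul_le hpow)
    (4 * √(∫ x, f x ^ 2 ∂uniform01 + 1) * √(log Q)) 1 (by positivity) zero_le_one le_rfl (by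
      rw [mul_pow, mul_pow, Real.sq_sqrt (by positivity), Real.sq_sqrt (by positivity)]
      nlinarith)
  rw [pow_zero, mul_one, ← div_eq_mul_inv] at htail
  exact_mod_cast htail

lemma exists_measureReal_forall_normalizedSum_lt_le {r : ℝ} (hr : 0 < r)
    (hrf : r ^ 2 < 2 * ∫ x, f x ^ 2 ∂uniform01) :
    ∃ κ < (1 : ℝ), ∃ C, ∀ᶠ Q : ℕ in atTop, ∀ (s : Finset ℕ) (I : ℕ → Finset ℕ),
      s.Nonempty → s.card ≤ Q → (s : Set ℕ).PairwiseDisjoint I →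
      (∀ i ∈ s, ∀ k ∈ I i, M.good Q k) → (∀ i ∈ s, 4 ^ Q ≤ (I i).card) →
      uniform01.real {x | ∀ i ∈ s, M.normalizedSum Q (I i) x < r * √(log Q)} ≤
        C * ((Q:ℝ) ^ κ / s.card) := by
  obtain ⟨v₀, hrv₀, hv₀f⟩ := exists_between (show r ^ 2 / 2 < ∫ x, f x ^ 2 ∂uniform01 by linarith)
  have hv₀ : 0 < v₀ := lt_trans (by positivity) hrv₀
  set w := ∫ x, f x ^ 2 ∂uniform01
  obtain ⟨κ, ⟨hκ0, hκ1⟩, c, hc, Λ, hcos⟩ := exists_cosBump_parameters hr hv₀ hv₀f.le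
    (by linarith) (show 0 < 4 * √(w + 1) by have := hv₀.trans hv₀f; positivity)
  refine ⟨κ, hκ1, 4 / c + 12 / c ^ 2 + 2, ?_⟩
  have hpow : ∀ᶠ Q : ℕ in atTop, 2 / c ≤ (Q:ℝ) ^ (1 - κ) :=
    ((tendsto_rpow_atTop (by linarith)).comp tendsto_natCast_atTop_atTop).eventually_ge_atTop _
  filter_upwards [hcos, hpow, M.eventually_norm_integral_cexp_normalizedSum_add_sub_le (2 * Λ ^ 2),
    M.eventually_measureReal_le_abs_normalizedSum_le, eventually_sq_mul_two_pow_le Λ,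
    M.tendsto_integral_sq_T.eventually (le_mem_nhds hv₀f), eventually_le_log_natCast 1,
    eventually_ge_atTop 1]
    with Q ⟨K, θ, t, hΛ, hbump, hmean⟩ hpow hpair htail hsq hv hlog hQ s I hs hsQ hI hgood hcard
  set v : ℝ≥0 := ⟨∫ x, M.T Q x ^ 2 ∂uniform01, integral_nonneg fun x => sq_nonneg _⟩
  have hQ1 : (1:ℝ) ≤ Q := by exact_mod_cast hQ
  have hsqcard : ∀ i ∈ s, ∀ p, |p| ≤ Λ * √(log Q) → p ^ 2 * 2 ^ Q ≤ (I i).card :=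
    fun i hi p hp => (hsq p hp).2.trans (by exact_mod_cast hcard i hi)
  have hmean := hmean v hv (M.integral_sq_T_le Q)
  have hmean0 : 0 < ∫ y, cosBump K θ t y ∂gaussianReal 0 v := hmean.trans_lt' (by positivity)
  refine (measureReal_forall_lt_le (fun i => M.measurable_normalizedSum Q (I i)) hs hΛ
    (δ := 1 / (Q:ℝ) ^ 3) (δ' := 2 / (Q:ℝ) ^ 3) (by positivity) (fun i hi a ha => ?_)
    (fun i hi j hj hij a b ha hb => ?_) (fun i hi => htail (I i) (hgood i hi) ?_) rfl hmean0
    fun y hyW hyr => (hbump y hyW hyr).trans ?_).trans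
    (second_moment_bound_le hc (one_le_rpow hQ1 hκ0.le) ?_ ?_ ?_ ?_)
  · have hone := hpair (I i) ∅ (Finset.disjoint_empty_right _) (hgood i hi) (by simp) a 0
      (by linarith [(hsq a ha).1, (hsq a ha).1.trans' (sq_nonneg a)]) (hsqcard i hi a ha) (by simp)
    simp only [zero_mul, add_zero, zero_pow two_ne_zero] at hone
    exact hone
  · exact hpair (I i) (I j) (hI hi hj hij) (hgood i hi) (hgood j hj) a b
      (by linarith [(hsq a ha).1, (hsq b hb).1]) (hsqcard i hi a ha) (hsqcard j hj b hb)
  · exact (Nat.pow_le_pow_left (by norm_num) Q).trans (hcard i hi)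
  · refine le_trans ?_ (div_le_div_of_nonneg_right hmean zero_le_two)
    rw [rpow_neg (by positivity)]
    rw [rpow_sub (by positivity), rpow_one, div_le_div_iff₀ hc (by positivity)] at hpow
    rw [← div_eq_mul_inv, div_div, div_le_div_iff₀ (by positivity) (by positivity)]
    linarith
  · exact (rpow_le_rpow_of_exponent_le hQ1 hκ1.le).trans_eq (rpow_one _)
  · exact_mod_cast hs.card_pos
  · exact_mod_cast hsQ
  · rwa [div_eq_mul_inv, ← rpow_neg (by positivity)]

/-- The good indices in `[16 ^ (b * i), 16 ^ (b * (i + 1)))`. -/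
def geometricBlock (M : IndepModel n f) (Q b i : ℕ) : Finset ℕ :=
  M.goodIco Q (16 ^ (b * i)) (16 ^ (b * (i + 1)))

lemma pairwise_disjoint_geometricBlock (Q b : ℕ) :
    Pairwise (Function.onFun Disjoint (M.geometricBlock Q b)) := by
  classical
  have hmono : Monotone fun i => 16 ^ (b * i) := fun i j hij =>
    Nat.pow_le_pow_right (by norm_num) (Nat.mul_le_mul_left b hij)
  refine fun i j hij => Finset.disjoint_filter_filter (Finset.disjoint_coe.1 ?_)
  simpa using hmono.pairwise_disjoint_on_Ico_succ hij

lemma sub_le_card_goodIco_add (Q a b : ℕ) : b - a ≤ (M.goodIco Q a b).card + 2 ^ Q := by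
  classical
  rw [← Nat.card_Ico, ← Finset.card_filter_add_card_filter_not (s := Finset.Ico a b) (M.good Q)]
  exact Nat.add_le_add_left
    (M.card_le_of_not_good Q _ fun k hk => (Finset.mem_filter.1 hk).2) _

lemma mul_le_card_geometricBlock {Q b i : ℕ} (hQ : Q ≤ b * i) :
    (1 - 2 / 16 ^ b) * 16 ^ (b * (i + 1)) ≤ ((M.geometricBlock Q b i).card : ℝ) := by
  have hcard := M.sub_le_card_goodIco_add Q (16 ^ (b * i)) (16 ^ (b * (i + 1)))
  have hQi : 2 ^ Q ≤ 16 ^ (b * i) :=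
    (Nat.pow_le_pow_left (by norm_num) Q).trans (Nat.pow_le_pow_right (by norm_num) hQ)
  have hcard' : (16:ℝ) ^ (b * (i + 1)) ≤ (M.geometricBlock Q b i).card + 2 * 16 ^ (b * i) := by
    rw [geometricBlock]
    exact_mod_cast (by omega : 16 ^ (b * (i + 1)) ≤ _ + 2 * 16 ^ (b * i))
  have hsplit : (16:ℝ) ^ (b * (i + 1)) = 16 ^ b * 16 ^ (b * i) := by
    rw [← pow_add]
    ring_nf
  calc (1 - 2 / 16 ^ b) * (16:ℝ) ^ (b * (i + 1)) =
        16 ^ (b * (i + 1)) - 2 * 16 ^ (b * i) := by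
        rw [hsplit]
        field_simp
    _ ≤ _ := by linarith

lemma pow_le_card_geometricBlock {Q b i : ℕ} (hb : b ≠ 0) (hQ : Q ≤ b * i) :
    4 ^ Q ≤ (M.geometricBlock Q b i).card := by
  have hb16 : (16:ℝ) ^ 1 ≤ 16 ^ b := pow_le_pow_right₀ (by norm_num) (by omega)
  have hhalf : 1 / 2 ≤ 1 - 2 / (16:ℝ) ^ b := by
    rw [le_sub_comm, div_le_iff₀ (by positivity)]
    linarith
  have hpow : (4:ℝ) ^ Q ≤ 16 ^ (b * i) :=
    (pow_le_pow_left₀ (by norm_num) (by norm_num) Q).trans (pow_le_pow_right₀ (by norm_num) hQ)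
  have : (4:ℝ) ^ Q ≤ (M.geometricBlock Q b i).card := by
    refine le_trans ?_ (M.mul_le_card_geometricBlock hQ)
    calc (4:ℝ) ^ Q ≤ 1 / 2 * (16 ^ b * 16 ^ (b * i)) := by
          nlinarith [pow_pos (show (0:ℝ) < 16 by norm_num) (b * i)]
      _ = 1 / 2 * 16 ^ (b * (i + 1)) := by
        rw [← pow_add]
        ring_nf
      _ ≤ _ := by gcongr
  exact_mod_cast this

theorem ae_eventually_exists_le_normalizedSum {r : ℝ} (hr : 0 < r)
    (hrf : r ^ 2 < 2 * ∫ x, f x ^ 2 ∂uniform01) {b : ℕ} (hb : b ≠ 0) :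
    ∀ᵐ x ∂uniform01, ∀ᶠ s : ℕ in atTop, ∃ i ∈ Finset.Ico (2 ^ s) (2 * 2 ^ s),
      r * √(log (b * 2 ^ s : ℕ)) ≤
        M.normalizedSum (b * 2 ^ s) (M.geometricBlock (b * 2 ^ s) b i) x := by
  obtain ⟨κ, hκ1, C, hC⟩ := M.exists_measureReal_forall_normalizedSum_lt_le hr hrf
  have hsum : Summable fun s : ℕ => C * (b:ℝ) ^ κ * ((2:ℝ) ^ (κ - 1)) ^ s :=
    (summable_geometric_of_lt_one (by positivity)
      (rpow_lt_one_of_one_lt_of_neg one_lt_two (by linarith))).mul_left _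
  have hscale : Tendsto (fun s : ℕ => b * 2 ^ s) atTop atTop :=
    (tendsto_pow_atTop_atTop_of_one_lt one_lt_two).const_mul_atTop' (Nat.pos_of_ne_zero hb)
  suffices hE : ∀ᶠ s : ℕ in atTop, uniform01.real {x | ∀ i ∈ Finset.Ico (2 ^ s) (2 * 2 ^ s),
      M.normalizedSum (b * 2 ^ s) (M.geometricBlock (b * 2 ^ s) b i) x <
        r * √(log (b * 2 ^ s : ℕ))} ≤ C * (b:ℝ) ^ κ * ((2:ℝ) ^ (κ - 1)) ^ s by
    filter_upwards [ae_eventually_notMem_of_summable hsum hE] with x hx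
    filter_upwards [hx] with s hs
    simpa only [Set.mem_ofPred_eq, not_forall, not_lt, exists_prop] using hs
  filter_upwards [hscale.eventually hC] with s hs
  have hle : ∀ i ∈ Finset.Ico (2 ^ s) (2 * 2 ^ s), b * 2 ^ s ≤ b * i := fun i hi =>
    Nat.mul_le_mul_left b (Finset.mem_Ico.1 hi).1
  have hcard : (Finset.Ico (2 ^ s) (2 * 2 ^ s)).card = 2 ^ s := by
    rw [Nat.card_Ico]
    omega
  have hpos : 0 < 2 ^ s := by positivity
  refine (hs (Finset.Ico (2 ^ s) (2 * 2 ^ s)) (M.geometricBlock (b * 2 ^ s) b)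
    (Finset.nonempty_Ico.2 (by omega)) ?_ (fun i _ j _ hij =>
      M.pairwise_disjoint_geometricBlock _ b hij) (fun i _ k => M.good_of_mem_goodIco)
      fun i hi => M.pow_le_card_geometricBlock hb (hle i hi)).trans_eq ?_
  · rw [hcard]
    exact Nat.le_mul_of_pos_left _ (Nat.pos_of_ne_zero hb)
  · rw [hcard]
    push_cast
    rw [mul_rpow (by positivity) (by positivity), ← rpow_natCast_mul (by norm_num), mul_comm (s:ℝ),
      rpow_mul_natCast (by norm_num), rpow_sub_one two_ne_zero, div_pow]
    ring

end IndepModel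

/-! ### The lower bound -/

lemma log_log_le_log_eight_add {Q N : ℕ} (hQ : Q ≠ 0) (hN1 : 1 < N) (hN : N ≤ 256 ^ Q) :
    log (log N) ≤ log 8 + log Q := by
  rw [← Real.log_mul (by norm_num) (by exact_mod_cast hQ)]
  refine Real.log_le_log (Real.log_pos (by exact_mod_cast hN1)) ?_
  calc log N ≤ log ((256 ^ Q : ℕ) : ℝ) :=
        Real.log_le_log (by exact_mod_cast one_pos.trans hN1) (by exact_mod_cast hN)
    _ = 8 * Q * log 2 := by
        push_cast
        rw [show (256:ℝ) = 2 ^ 8 by norm_num, ← pow_mul, Real.log_pow]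
        push_cast
        ring
    _ ≤ 8 * Q := mul_le_of_le_one_right (by positivity) (by linarith [Real.log_two_lt_d9])

lemma mul_sqrt_log_log_le_sqrt_log {Q N : ℕ} {η : ℝ} (hη0 : 0 ≤ η) (hη1 : η ≤ 1)
    (hlog : log 8 ≤ η * log Q) (hQ : log Q ≤ log (log N)) (hN : log (log N) ≤ log 8 + log Q) :
    (1 - η) * √(log (log N)) ≤ √(log Q) := by
  have hlogQ := log_natCast_nonneg Q
  refine Real.le_sqrt_of_sq_le ?_
  rw [mul_pow, Real.sq_sqrt (hlogQ.trans hQ)]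
  calc (1 - η) ^ 2 * log (log N) ≤ (1 - η) ^ 2 * ((1 + η) * log Q) := by
        gcongr
        linarith
    _ = (1 - η) * (1 - η ^ 2) * log Q := by ring
    _ ≤ 1 * log Q := by
        gcongr
        nlinarith [sq_nonneg η]
    _ = log Q := one_mul _

lemma sqrt_mul_log_log_sixteen_pow_le {b i : ℕ} (hbi : b * i ≠ 0) {η : ℝ}
    (hbη : (1 / 4) ^ b ≤ η) :
    √(2 * (16 ^ (b * i) : ℕ) * log (log (16 ^ (b * i) : ℕ))) ≤
      η * √(2 * (16 ^ (b * (i + 1)) : ℕ) * log (log (16 ^ (b * (i + 1)) : ℕ))) := by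
  refine le_trans ?_ (mul_le_mul_of_nonneg_right hbη (Real.sqrt_nonneg _))
  have hlog : 0 < log (16 ^ (b * i) : ℕ) :=
    Real.log_pos (by exact_mod_cast Nat.one_lt_pow hbi (by norm_num))
  have hloglog : log (log (16 ^ (b * i) : ℕ)) ≤ log (log (16 ^ (b * (i + 1)) : ℕ)) := by
    gcongr <;> norm_num
  rw [← Real.sqrt_sq (show 0 ≤ (1 / 4 : ℝ) ^ b by positivity), ← Real.sqrt_mul (sq_nonneg _),
    ← mul_assoc]
  refine Real.sqrt_le_sqrt ?_
  have hcancel : ((1 / 4 : ℝ) ^ b) ^ 2 * (2 * (16 ^ (b * (i + 1)) : ℕ)) =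
      2 * (16 ^ (b * i) : ℕ) := by
    have : ((1 / 4 : ℝ) ^ b) ^ 2 * 16 ^ b = 1 := by
      rw [← pow_mul, mul_comm, pow_mul', ← mul_pow]
      norm_num
    push_cast
    rw [mul_add_one, pow_add]
    linear_combination 2 * (16:ℝ) ^ (b * i) * this
  rw [hcancel]
  gcongr

namespace IndepModel

variable (M : IndepModel n f)

lemma blockSum_eq_sqrt_card_mul_normalizedSum {Q a b : ℕ} (h : M.goodIco Q a b ≠ ∅) (x : ℝ) :
    M.blockSum Q a b x = √(M.goodIco Q a b).card * M.normalizedSum Q (M.goodIco Q a b) x := by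
  have hcard : √((M.goodIco Q a b).card : ℝ) ≠ 0 := by
    simpa [Real.sqrt_eq_zero] using h
  rw [mul_normalizedSum, blockSum, mul_inv_cancel₀ hcard]
  rfl

lemma mul_sqrt_le_blockSum {s η x : ℝ} {Q b i : ℕ} (hs : 0 ≤ s) (hη0 : 0 ≤ η) (hη : η ≤ 1 / 3)
    (hbη : (1 / 4) ^ b ≤ η) (hQi : Q ≤ b * i)
    (hlog : (1 - η) * √(log (log (16 ^ (b * (i + 1)) : ℕ))) ≤ √(log Q))
    (hblock : √2 * s * √(log Q) ≤ M.normalizedSum Q (M.geometricBlock Q b i) x) :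
    s * (1 - 3 * η) * √(2 * (16 ^ (b * (i + 1)) : ℕ) * log (log (16 ^ (b * (i + 1)) : ℕ))) ≤
      M.blockSum Q (16 ^ (b * i)) (16 ^ (b * (i + 1))) x := by
  have hb : b ≠ 0 := by
    rintro rfl
    norm_num at hbη
    linarith
  have hb16 : 2 / (16:ℝ) ^ b ≤ 2 * η := by
    have : (1 / 16 : ℝ) ^ b ≤ (1 / 4) ^ b := by gcongr; norm_num
    rw [div_eq_mul_one_div, ← one_div_pow]
    linarith
  have hcard : √(16 ^ (b * (i + 1)) : ℕ) * (1 - 2 * η) ≤ √(M.geometricBlock Q b i).card := by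
    refine Real.le_sqrt_of_sq_le ?_
    rw [mul_pow, Real.sq_sqrt (by positivity)]
    refine le_trans ?_ (M.mul_le_card_geometricBlock hQi)
    push_cast
    rw [mul_comm]
    gcongr
    nlinarith
  have hne : M.geometricBlock Q b i ≠ ∅ := by
    have := M.pow_le_card_geometricBlock hb hQi
    exact Finset.card_pos.1 (lt_of_lt_of_le (by positivity) this) |>.ne_empty
  rw [M.blockSum_eq_sqrt_card_mul_normalizedSum hne, ← geometricBlock]
  set N : ℕ := 16 ^ (b * (i + 1))
  calc s * (1 - 3 * η) * √(2 * N * log (log N))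
      ≤ s * ((1 - 2 * η) * (1 - η)) * √(2 * N * log (log N)) := by
        gcongr
        nlinarith
    _ = √N * (1 - 2 * η) * (√2 * s * ((1 - η) * √(log (log N)))) := by
        rw [Real.sqrt_mul (by positivity), Real.sqrt_mul (by norm_num)]
        ring
    _ ≤ √(M.geometricBlock Q b i).card * M.normalizedSum Q (M.geometricBlock Q b i) x := by
        have : 0 ≤ 1 - 2 * η := by linarith
        have hterm : √2 * s * ((1 - η) * √(log (log N))) ≤ √2 * s * √(log Q) := by gcongr
        refine (mul_le_mul_of_nonneg_left (hterm.trans hblock) (by positivity)).trans ?_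
        have : 0 ≤ M.normalizedSum Q (M.geometricBlock Q b i) x :=
          hblock.trans' (by positivity)
        gcongr

/-- The sum before the block is negligible by the upper bound. -/
lemma mul_sqrt_le_sum_of_le_normalizedSum {s η σ x : ℝ} {Q b i : ℕ} (hs : 0 ≤ s) (hη0 : 0 ≤ η)
    (hσ : 0 ≤ σ) (hη : η ≤ 1 / 3) (hbη : (1 / 4) ^ b ≤ η) (hQi : Q ≤ b * i)
    (hiQ : b * (i + 1) ≤ 2 * Q) (hlog : log 8 ≤ η * log Q) (hlog1 : 1 ≤ log Q)
    (hsmall : 2 + 2 * (2 ^ Q * (M.C * (1 + Q))) ≤ η * 4 ^ Q)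
    (herror : ∑ k ∈ Finset.range (2 ^ (12 * Q)), |f (n k * x) - M.T Q (n k * x)| ≤ 1)
    (hbefore : |∑ k ∈ Finset.range (16 ^ (b * i)), f (n k * x)| ≤
      σ * √(2 * (16 ^ (b * i) : ℕ) * log (log (16 ^ (b * i) : ℕ))))
    (hblock : √2 * s * √(log Q) ≤ M.normalizedSum Q (M.geometricBlock Q b i) x) :
    (s * (1 - 3 * η) - σ * η - η) *
        √(2 * (16 ^ (b * (i + 1)) : ℕ) * log (log (16 ^ (b * (i + 1)) : ℕ))) ≤
      ∑ k ∈ Finset.range (16 ^ (b * (i + 1))), f (n k * x) := by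
  have hQ0 : Q ≠ 0 := by
    rintro rfl
    norm_num at hlog1
  have hbi : b * i ≠ 0 := by omega
  have hN₀ : 1 < 16 ^ (b * i) := Nat.one_lt_pow hbi (by norm_num)
  have hN₀N : 16 ^ (b * i) ≤ 16 ^ (b * (i + 1)) :=
    Nat.pow_le_pow_right (by norm_num) (Nat.mul_le_mul_left b i.le_succ)
  have hQN : 16 ^ Q ≤ 16 ^ (b * (i + 1)) :=
    (Nat.pow_le_pow_right (by norm_num) hQi).trans hN₀N
  have hN256 : 16 ^ (b * (i + 1)) ≤ 256 ^ Q :=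
    (Nat.pow_le_pow_right (by norm_num) hiQ).trans_eq (by rw [pow_mul]; norm_num)
  have hN12 : 16 ^ (b * (i + 1)) ≤ 2 ^ (12 * Q) :=
    hN256.trans (by rw [pow_mul]; exact Nat.pow_le_pow_left (by norm_num) Q)
  have hloglog := log_log_sixteen_le hQ0 hQN
  have hlarge := M.mul_sqrt_le_blockSum hs hη0 hη hbη hQi (mul_sqrt_log_log_le_sqrt_log hη0
    (by linarith) hlog hloglog (log_log_le_log_eight_add hQ0 (hN₀.trans_le hN₀N) hN256)) hblock
  have hbefore' := hbefore.trans
    (mul_le_mul_of_nonneg_left (sqrt_mul_log_log_sixteen_pow_le hbi hbη) hσ)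
  have hfour := four_pow_le_sqrt hlog1 hQN
  have hsplit := M.blockSum_add Q (Nat.zero_le _) hN₀N x
  have hsub₀ := M.abs_sum_sub_blockSum_le (hN₀N.trans hN12) herror
  have hsub := M.abs_sum_sub_blockSum_le hN12 herror
  set N : ℕ := 16 ^ (b * (i + 1))
  have hfour' : (4:ℝ) ^ Q ≤ √(2 * N * log (log N)) := hfour.trans (by gcongr)
  have hsmall' := hsmall.trans (mul_le_mul_of_nonneg_left hfour' hη0)
  rw [abs_le] at hsub₀ hsub hbefore'
  linarith

end IndepModel

lemma exists_pos_le_third_eq {s τ σ : ℝ} (hτ0 : 0 < τ) (hτs : τ < s) (hσ0 : 0 < σ) :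
    ∃ η, 0 < η ∧ η ≤ 1 / 3 ∧ s * (1 - 3 * η) - σ * η - η = τ := by
  have hs0 := hτ0.trans hτs
  refine ⟨(s - τ) / (3 * s + σ + 1), div_pos (by linarith) (by positivity), ?_, ?_⟩
  · rw [div_le_div_iff₀ (by positivity) (by norm_num)]
    linarith
  · field_simp
    ring

theorem IndepModel.ae_frequently_mul_sqrt_le_sum_of_pos (M : IndepModel n f) {τ : ℝ} (hτ0 : 0 < τ)
    (hτ : τ ^ 2 < ∫ x, f x ^ 2 ∂uniform01) :
    ∀ᵐ x ∂uniform01, ∃ᶠ N : ℕ in atTop,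
      τ * √(2 * N * log (log N)) ≤ ∑ k ∈ Finset.range N, f (n k * x) := by
  obtain ⟨s, hτs, hs⟩ := exists_between (Real.lt_sqrt_of_sq_lt hτ)
  have hs0 : 0 < s := hτ0.trans hτs
  have hs2 : s ^ 2 < ∫ x, f x ^ 2 ∂uniform01 := (Real.lt_sqrt hs0.le).1 hs
  set σ := √(∫ x, f x ^ 2 ∂uniform01) + 1
  have hσ0 : 0 < σ := by positivity
  have hσ : ∫ x, f x ^ 2 ∂uniform01 < σ ^ 2 := (Real.sqrt_lt' hσ0).1 (lt_add_one _)
  obtain ⟨η, hη0, hη3, hητ⟩ := exists_pos_le_third_eq hτ0 hτs hσ0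
  obtain ⟨b, hbη, hb⟩ : ∃ b : ℕ, (1 / 4 : ℝ) ^ b ≤ η ∧ b ≠ 0 :=
    (((tendsto_pow_atTop_nhds_zero_of_lt_one (by norm_num) (by norm_num)).eventually
      (ge_mem_nhds hη0)).and (eventually_ne_atTop 0)).exists
  have hscale : Tendsto (fun s : ℕ => b * 2 ^ s) atTop atTop :=
    (tendsto_pow_atTop_atTop_of_one_lt one_lt_two).const_mul_atTop' (Nat.pos_of_ne_zero hb)
  filter_upwards [M.ae_eventually_error_le, M.ae_eventually_abs_sum_le hσ0 hσ,
    M.ae_eventually_exists_le_normalizedSum (r := √2 * s) (by positivity)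
      (by rw [mul_pow, Real.sq_sqrt zero_le_two]; linarith) hb] with x herror hupper hlarge
  rw [frequently_atTop]
  intro N₁
  obtain ⟨N₂, hN₂⟩ := eventually_atTop.1 hupper
  obtain ⟨k, ⟨herror, hlog, hlog1, hsmall⟩, ⟨i, hi, hblock⟩, hk⟩ := ((hscale.eventually
    (herror.and ((eventually_le_log_natCast (log 8 / η)).and ((eventually_le_log_natCast 1).and
      (M.eventually_two_pow_mul_le 2 2 hη0))))).and
        (hlarge.and (eventually_ge_atTop (N₁ + N₂)))).exists
  obtain ⟨hki, hik⟩ := Finset.mem_Ico.1 hi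
  have hgrow : ∀ j, i ≤ j → N₁ + N₂ ≤ 16 ^ (b * j) := fun j hij =>
    calc N₁ + N₂ ≤ 2 ^ k := hk.trans Nat.lt_two_pow_self.le
      _ ≤ b * j := (hki.trans hij).trans (Nat.le_mul_of_pos_left _ (Nat.pos_of_ne_zero hb))
      _ ≤ 16 ^ (b * j) := (Nat.lt_pow_self (by norm_num)).le
  refine ⟨16 ^ (b * (i + 1)), le_self_add.trans (hgrow _ (by omega)), ?_⟩
  rw [← hητ]
  exact M.mul_sqrt_le_sum_of_le_normalizedSum hs0.le hη0.le hσ0.le hη3 hbη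
    (Nat.mul_le_mul_left b hki)
    (by rw [mul_left_comm]; exact Nat.mul_le_mul_left b (by omega))
    (by rwa [div_le_iff₀' hη0] at hlog) hlog1 hsmall herror
    (hN₂ _ (le_add_self.trans (hgrow i le_rfl))) hblock

theorem IndepModel.ae_frequently_mul_sqrt_le_sum (M : IndepModel n f) {τ : ℝ}
    (hτ : τ < √(∫ x, f x ^ 2 ∂uniform01)) :
    ∀ᵐ x ∂uniform01, ∃ᶠ N : ℕ in atTop,
      τ * √(2 * N * log (log N)) ≤ ∑ k ∈ Finset.range N, f (n k * x) := by
  rcases (Real.sqrt_nonneg (∫ x, f x ^ 2 ∂uniform01)).eq_or_lt with h0 | h0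
  · rw [← h0] at hτ
    have hf0 : ∫ x, f x ^ 2 ∂uniform01 < (-τ) ^ 2 := by
      rw [← Real.sqrt_lt' (by linarith), ← h0]
      linarith
    filter_upwards [M.ae_eventually_abs_sum_le (by linarith) hf0] with x hx
    refine (hx.mono fun N hN => ?_).frequently
    linarith [neg_le_of_abs_le hN]
  · obtain ⟨τ', hττ', hτ'⟩ := exists_between (max_lt hτ h0)
    have hτ'0 := (le_max_right _ _).trans_lt hττ'
    filter_upwards [M.ae_frequently_mul_sqrt_le_sum_of_pos hτ'0 ((Real.lt_sqrt hτ'0.le).1 hτ')]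
      with x hx
    refine hx.mono fun N hN => hN.trans' ?_
    gcongr
    exact (le_max_left _ _).trans hττ'.le

lemma limsup_div_eq_of_abs_le_of_le {a g : ℕ → ℝ} {σ : ℝ} (hg : ∀ᶠ N in atTop, 0 < g N)
    (hupper : ∀ k : ℕ, ∀ᶠ N in atTop, |a N| ≤ (σ + 1 / (k + 1)) * g N)
    (hlower : ∀ k : ℕ, ∃ᶠ N in atTop, (σ - 1 / (k + 1)) * g N ≤ a N) :
    limsup (fun N => a N / g N) atTop = σ := by
  have habs : ∀ k : ℕ, ∀ᶠ N in atTop, |a N / g N| ≤ σ + 1 / (k + 1) := fun k => by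
    filter_upwards [hupper k, hg] with N hN hgN
    rwa [abs_div, abs_of_pos hgN, div_le_iff₀ hgN]
  have hbdd : IsBoundedUnder (· ≤ ·) atTop fun N => a N / g N :=
    isBoundedUnder_of_eventually_le ((habs 0).mono fun N hN => (le_abs_self _).trans hN)
  have hcobdd : IsCoboundedUnder (· ≤ ·) atTop fun N => a N / g N :=
    (isBoundedUnder_of_eventually_ge
      ((habs 0).mono fun N hN => neg_le_of_abs_le hN)).isCoboundedUnder_le
  have hlim := tendsto_one_div_add_atTop_nhds_zero_nat (𝕜 := ℝ)
  have hadd : Tendsto (fun k : ℕ => σ + 1 / ((k:ℝ) + 1)) atTop (𝓝 σ) := by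
    simpa only [add_zero] using hlim.const_add σ
  have hsub : Tendsto (fun k : ℕ => σ - 1 / ((k:ℝ) + 1)) atTop (𝓝 σ) := by
    simpa only [sub_zero] using hlim.const_sub σ
  refine le_antisymm ?_ ?_
  · refine ge_of_tendsto' hadd fun k => ?_
    exact limsup_le_of_le hcobdd ((habs k).mono fun N hN => (le_abs_self _).trans hN)
  · refine le_of_tendsto' hsub fun k => ?_
    refine le_limsup_of_frequently_le (((hlower k).and_eventually hg).mono fun N hN => ?_) hbdd
    rw [le_div_iff₀ hN.2]
    exact hN.1

lemma eventually_sqrt_mul_log_log_pos : ∀ᶠ N : ℕ in atTop, 0 < √(2 * N * log (log N)) := by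
  have hloglog := ((tendsto_log_atTop.comp tendsto_log_atTop).comp
    tendsto_natCast_atTop_atTop).eventually_gt_atTop (0:ℝ)
  filter_upwards [hloglog, eventually_gt_atTop 0] with N hN hN0
  have : 0 < log (log (N:ℝ)) := hN
  positivity

theorem IndepModel.ae_limsup_eq (M : IndepModel n f) :
    ∀ᵐ x ∂uniform01, limsup (fun N : ℕ => (∑ k ∈ Finset.range N, f (n k * x)) /
      √(2 * N * log (log N))) atTop = √(∫ x, f x ^ 2 ∂uniform01) := by
  set σ := √(∫ x, f x ^ 2 ∂uniform01)
  have hk : ∀ k : ℕ, 0 < 1 / ((k:ℝ) + 1) := fun k => by positivity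
  have hupper := ae_all_iff.2 fun k : ℕ => M.ae_eventually_abs_sum_le (σ := σ + 1 / (k + 1))
    (by positivity) ((Real.sqrt_lt' (by positivity)).1 (lt_add_of_pos_right _ (hk k)))
  have hlower := ae_all_iff.2 fun k : ℕ => M.ae_frequently_mul_sqrt_le_sum (sub_lt_self σ (hk k))
  filter_upwards [hupper, hlower] with x hx hx'
  exact limsup_div_eq_of_abs_le_of_le eventually_sqrt_mul_log_log_pos hx hx'

end LIL

open LIL

theorem statement3_general {ω : ℕ → ℝ} {α : ℝ} (hα : 0 < α) {k₀ : ℕ}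
    (hω_log : ∀ k : ℕ, k₀ ≤ k → log k ^ α ≤ ω k) {n : ℕ → ℕ} (hn_pos : ∀ k, 0 < n k)
    (hn_inj : Function.Injective n) (hA : CondA ω n) {f : ℝ → ℝ} {V : ℝ}
    (hf : FourierDecay f V) (hf2 : MemLp f 2 uniform01) (hf_per : Function.Periodic f 1) :
    ∀ᵐ x ∂(volume.restrict (Set.Ioo (0:ℝ) 1)),
      limsup (fun N : ℕ => (∑ k ∈ Finset.range N, f (n k * x)) / √(2 * N * log (log N))) atTop =
        √(∫ x in (0:ℝ)..1, f x ^ 2) := by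
  rw [Measure.restrict_congr_set Ioo_ae_eq_Ioc, ← integral_uniform01]
  exact (hf.indepModel hf2 hf_per hn_pos hn_inj hA hα hω_log).ae_limsup_eq

/-- LIL part of Theorem 1 of the paper: under Condition `A_ω` with `ω_k ≥ (log k)^α`
eventually, for every `f` of bounded variation, 1-periodic and of mean zero,
`limsup_N (∑_{k<N} f(n_k x)) / √(2 N log log N) = ‖f‖` for a.e. `x ∈ (0,1)`. -/
theorem statement3
    (ω : ℕ → ℝ) (hω_pos : ∀ k, 0 < ω k) (hω_mono : Monotone ω)
    (hω_top : Tendsto ω atTop atTop)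
    (α : ℝ) (hα : 0 < α) (k₀ : ℕ)
    (hω_log : ∀ k : ℕ, k₀ ≤ k → (Real.log k) ^ α ≤ ω k)
    (n : ℕ → ℕ) (hn_pos : ∀ k, 0 < n k) (hn_inj : Function.Injective n)
    (hA : CondA ω n)
    (f : ℝ → ℝ) (hf_meas : Measurable f)
    (hf_per : ∀ x, f (x + 1) = f x)
    (hf_int : ∫ x in (0:ℝ)..1, f x = 0)
    (hf_bv : BoundedVariationOn f (Set.Icc 0 1)) :
    ∀ᵐ x ∂(volume.restrict (Set.Ioo (0:ℝ) 1)),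
      Filter.limsup (fun N : ℕ =>
          (∑ k ∈ Finset.range N, f (n k * x)) /
            Real.sqrt (2 * N * Real.log (Real.log N))) atTop
        = Real.sqrt (∫ x in (0:ℝ)..1, f x ^ 2) := by
  have hf2 := memLp_uniform01_of_boundedVariationOn hf_meas.aestronglyMeasurable hf_bv 2
  have hf := fourierDecay_of_boundedVariationOn (hf2.integrable one_le_two) hf_int hf_bv
  exact statement3_general hα hω_log hn_pos hn_inj hA hf hf2 hf_per
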